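/- arXiv:1810.12493 — 3 statements merged into one kernel-verified Lean document; each statement's English description precedes it below -/
import Mathlib

section
/- For every real number x, the limit Ψ_d(x) = lim_{N→∞} (1/V_d(N)) · #{λ a strongly concave composition of N : rk(λ) ≤ x·(6N/π²)^{1/4}} exists and equals the standard normal distribution function, i.e., Ψ_d(x) = (1/√(2π)) ∫_{−∞}^{x} e^{−t²/2} dt. -/
open scoped BigOperators

/-- `IsSCC n l k` says that the list `l = (a_1, ..., a_s)` of nonnegative integers
is a strongly concave composition of `n` with central part at (1-indexed) position `k`:
`a_1 > a_2 > ... > a_{k-1} > a_k < a_{k+1} < ... < a_s` and `a_1 + ... + a_s = n`. -/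
def IsSCC (n : ℕ) (l : List ℕ) (k : ℕ) : Prop :=
  1 ≤ k ∧ k ≤ l.length ∧ l.sum = n ∧
  (∀ i j : Fin l.length, (i : ℕ) < j → (j : ℕ) < k → l.get j < l.get i) ∧
  (∀ i j : Fin l.length, k - 1 ≤ (i : ℕ) → (i : ℕ) < j → l.get i < l.get j)

/-- The rank `s - 2k + 1` of a strongly concave composition with `s` parts and
central part at position `k`. -/
def sccRank (l : List ℕ) (k : ℕ) : ℤ := (l.length : ℤ) - 2 * k + 1

/-- `Vd m n` is the number of strongly concave compositions of `n` with rank `m`. -/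
noncomputable def Vd (m : ℤ) (n : ℕ) : ℕ :=
  Set.ncard {p : List ℕ × ℕ | IsSCC n p.1 p.2 ∧ sccRank p.1 p.2 = m}

/-- `VdTotal n` is the total number of strongly concave compositions of `n`. -/
noncomputable def VdTotal (n : ℕ) : ℕ :=
  Set.ncard {p : List ℕ × ℕ | IsSCC n p.1 p.2}

/-- The partition function, extended by `0` to negative integers. -/
def partitionCount (k : ℤ) : ℕ :=
  if 0 ≤ k then Fintype.card (Nat.Partition k.toNat) else 0

open Real Filter

noncomputable def bP (x : ℝ) : ℝ := rexp (-x) / (1 + rexp (-x))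
noncomputable def bH (x : ℝ) : ℝ := rexp (-x) / (1 + rexp (-x)) ^ 2
noncomputable def bch (x ω : ℝ) : ℂ :=
  (1 + (rexp (-x) : ℂ) * Complex.exp ((ω : ℂ) * Complex.I)) / (1 + (rexp (-x) : ℂ))

lemma bP_pos (x : ℝ) : 0 < bP x := by unfold bP; positivity
lemma bH_pos (x : ℝ) : 0 < bH x := by unfold bH; positivity
lemma bP_le (x : ℝ) : bP x ≤ rexp (-x) := by
  unfold bP; apply div_le_self (exp_pos _).le; linarith [exp_pos (-x)]
lemma bP_lt_one (x : ℝ) : bP x < 1 := by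
  unfold bP; rw [div_lt_one (by positivity)]; linarith
lemma bH_eq (x : ℝ) : bH x = bP x * (1 - bP x) := by
  unfold bH bP; field_simp; ring
lemma bH_le (x : ℝ) : bH x ≤ rexp (-x) := by
  unfold bH; apply div_le_self (exp_pos _).le
  nlinarith [exp_pos (-x)]
lemma bH_le_one (x : ℝ) : bH x ≤ 1 := by
  unfold bH; rw [div_le_one (by positivity)]
  nlinarith [exp_pos (-x)]
lemma bH_ge (x : ℝ) (hx : 0 ≤ x) : rexp (-x) / 4 ≤ bH x := by
  unfold bH
  have : rexp (-x) ≤ 1 := by rw [exp_le_one_iff]; linarith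
  gcongr
  nlinarith [exp_pos (-x)]

lemma bch_eq (x ω : ℝ) : bch x ω = (1 - bP x : ℂ) + (bP x : ℂ) * Complex.exp ((ω : ℂ) * Complex.I) := by
  unfold bch bP
  have : (1 + (rexp (-x) : ℂ)) ≠ 0 := by
    have : (0:ℝ) < 1 + rexp (-x) := by positivity
    exact_mod_cast this.ne'
  push_cast at *
  field_simp
  ring

lemma norm_bch_le (x ω : ℝ) : ‖bch x ω‖ ≤ rexp (-(bH x * (1 - cos ω))) := by
  have h1 : ‖bch x ω‖ ^ 2 = 1 - 2 * bH x * (1 - cos ω) := by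
    rw [bch_eq, ← Complex.normSq_eq_norm_sq, bH_eq, Complex.normSq_apply, Complex.exp_mul_I]
    simp only [Complex.add_re, Complex.sub_re, Complex.one_re, Complex.ofReal_re, Complex.mul_re,
      Complex.ofReal_im, Complex.add_im, Complex.sub_im, Complex.one_im, Complex.mul_im, Complex.I_re,
      Complex.I_im, ← Complex.ofReal_cos, ← Complex.ofReal_sin]
    have := sin_sq_add_cos_sq ω
    linear_combination (bP x)^2 * this
  have h2 : ‖bch x ω‖ ^ 2 ≤ (rexp (-(bH x * (1 - cos ω)))) ^ 2 := by
    rw [h1, ← Real.exp_nat_mul]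
    have := add_one_le_exp (((2:ℕ):ℝ) * -(bH x * (1 - cos ω)))
    push_cast at *
    linarith
  exact (abs_le_of_sq_le_sq' h2 (exp_pos _).le).2

lemma norm_bch_le_one (x ω : ℝ) : ‖bch x ω‖ ≤ 1 := by
  refine (norm_bch_le x ω).trans ?_
  rw [exp_le_one_iff]
  have := bH_pos x
  have := cos_le_one ω
  nlinarith

lemma expI_taylor (x : ℝ) :
    ‖Complex.exp ((x:ℂ) * Complex.I) - (1 + x * Complex.I - x ^ 2 / 2)‖ ≤ 4 * |x| ^ 3 := by
  rcases le_or_gt |x| 1 with h | h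
  · have := Complex.exp_bound (x := (x:ℂ) * Complex.I) (by simpa using h) (n := 3) (by norm_num)
    have e : ∑ m ∈ Finset.range 3, ((x:ℂ) * Complex.I) ^ m / (m.factorial : ℂ)
        = 1 + x * Complex.I - x ^ 2 / 2 := by
      simp [Finset.sum_range_succ, Nat.factorial, mul_pow]
      ring
    rw [e] at this
    refine this.trans ?_
    simp [Nat.factorial]
    have : 0 ≤ |x| ^ 3 := by positivity
    linarith
  · have h1 : ‖Complex.exp ((x:ℂ) * Complex.I)‖ = 1 := Complex.norm_exp_ofReal_mul_I x
    have h2 : ‖(1 + x * Complex.I - x ^ 2 / 2 : ℂ)‖ ≤ 1 + |x| + |x| ^ 2 / 2 := by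
      refine (norm_sub_le _ _).trans ?_
      gcongr
      · refine (norm_add_le _ _).trans ?_
        simp
      · simp
    refine (norm_sub_le _ _).trans ?_
    rw [h1]
    have h3 : |x| ≤ |x| ^ 3 := by nlinarith [sq_nonneg |x|]
    have h4 : |x| ^ 2 ≤ |x| ^ 3 := by nlinarith [sq_nonneg |x|]
    linarith

lemma exp_neg_taylor {y : ℝ} (hy : 0 ≤ y) : |rexp (-y) - (1 - y)| ≤ y ^ 2 := by
  have h0 := add_one_le_exp (-y)
  rw [abs_of_nonneg (by linarith)]
  rcases le_or_gt y 1 with h | h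
  · have := Real.norm_exp_sub_one_sub_id_le (x := -y) (by simpa [abs_of_nonneg hy] using h)
    rw [Real.norm_eq_abs] at this
    have h2 := (abs_le.1 this).2
    simp at h2
    linarith
  · have : rexp (-y) ≤ 1 := by rw [exp_le_one_iff]; linarith
    nlinarith

lemma bch_approx (x ω : ℝ) :
    ‖bch x ω * Complex.exp (((-(bP x * ω) : ℝ) : ℂ) * Complex.I) - (rexp (-(bH x * ω ^ 2 / 2)) : ℂ)‖
      ≤ 4 * (rexp (-x) * (|ω| ^ 3 + |ω| ^ 4)) := by
  set p := bP x with hp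
  have p0 : 0 < p := bP_pos x
  have p1 : p < 1 := bP_lt_one x
  have e1 : bch x ω * Complex.exp (((-(p * ω) : ℝ) : ℂ) * Complex.I)
      = (1 - p : ℂ) * Complex.exp (((-(p * ω) : ℝ) : ℂ) * Complex.I)
        + p * Complex.exp ((((1 - p) * ω : ℝ) : ℂ) * Complex.I) := by
    rw [bch_eq, add_mul, mul_assoc, ← Complex.exp_add]
    congr 3
    push_cast; ring
  have t1 := expI_taylor (-(p * ω))
  have t2 := expI_taylor ((1 - p) * ω)
  have hy : 0 ≤ bH x * ω ^ 2 / 2 := by have := bH_pos x; positivity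
  have t3 := exp_neg_taylor hy
  rw [e1]
  set E1 := Complex.exp (((-(p * ω) : ℝ) : ℂ) * Complex.I) - (1 + (-(p * ω) : ℝ) * Complex.I - ((-(p * ω) : ℝ) : ℂ) ^ 2 / 2)
  set E2 := Complex.exp ((((1 - p) * ω : ℝ) : ℂ) * Complex.I) - (1 + ((1 - p) * ω : ℝ) * Complex.I - (((1 - p) * ω : ℝ) : ℂ) ^ 2 / 2)
  have key : (1 - p : ℂ) * Complex.exp (((-(p * ω) : ℝ) : ℂ) * Complex.I)
        + p * Complex.exp ((((1 - p) * ω : ℝ) : ℂ) * Complex.I) - (rexp (-(bH x * ω ^ 2 / 2)) : ℂ)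
      = ((1 - p : ℝ) : ℂ) * E1 + (p : ℂ) * E2 - ((rexp (-(bH x * ω ^ 2 / 2)) - (1 - bH x * ω ^ 2 / 2) : ℝ) : ℂ) := by
    simp only [E1, E2]
    rw [bH_eq, ← hp]
    push_cast
    ring
  rw [key]
  have n1 : ‖((1 - p : ℝ) : ℂ) * E1‖ ≤ (1 - p) * (4 * (p ^ 3 * |ω| ^ 3)) := by
    rw [norm_mul, Complex.norm_real, Real.norm_eq_abs, abs_of_pos (by linarith)]
    refine mul_le_mul_of_nonneg_left (t1.trans ?_) (by linarith)
    rw [abs_neg, abs_mul, abs_of_pos p0, mul_pow]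
  have n2 : ‖(p : ℂ) * E2‖ ≤ p * (4 * ((1 - p) ^ 3 * |ω| ^ 3)) := by
    rw [norm_mul, Complex.norm_real, Real.norm_eq_abs, abs_of_pos p0]
    refine mul_le_mul_of_nonneg_left (t2.trans ?_) (by linarith)
    rw [abs_mul, abs_of_pos (by linarith : 0 < 1 - p), mul_pow]
  have n3 : ‖((rexp (-(bH x * ω ^ 2 / 2)) - (1 - bH x * ω ^ 2 / 2) : ℝ) : ℂ)‖ ≤ bH x * |ω| ^ 4 := by
    rw [Complex.norm_real, Real.norm_eq_abs]
    refine t3.trans ?_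
    have a1 := bH_le_one x
    have a2 := bH_pos x
    have : |ω| ^ 4 = ω ^ 4 := by rw [show (4:ℕ) = 2 * 2 from rfl, pow_mul, sq_abs, ← pow_mul]
    rw [this]
    have : 0 ≤ ω ^ 4 := by positivity
    have : bH x ^ 2 ≤ bH x := by nlinarith
    nlinarith
  refine (norm_sub_le _ _).trans (le_trans (add_le_add ((norm_add_le _ _).trans (add_le_add n1 n2)) n3) ?_)
  have b1 : p ≤ rexp (-x) := bP_le x
  have b2 : bH x ≤ rexp (-x) := bH_le x
  have w3 : 0 ≤ |ω| ^ 3 := by positivity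
  have w4 : 0 ≤ |ω| ^ 4 := by positivity
  have q : (1 - p) * p ^ 3 + p * (1 - p) ^ 3 ≤ p := by
    have : 0 < p * (1 - p) := by nlinarith
    nlinarith [mul_pos p0 p0, mul_pos this p0]
  have := exp_pos (-x)
  nlinarith [mul_le_mul_of_nonneg_right q w3, mul_le_mul_of_nonneg_right b1 w3, mul_le_mul_of_nonneg_right b2 w4, mul_nonneg this.le w4]

lemma norm_prod_sub_prod_le' {ι : Type*} (s : Finset ι) (a b : ι → ℂ)
    (ha : ∀ i, ‖a i‖ ≤ 1) (hb : ∀ i, ‖b i‖ ≤ 1) :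
    ‖∏ i ∈ s, a i - ∏ i ∈ s, b i‖ ≤ ∑ i ∈ s, ‖a i - b i‖ := by
  classical
  induction s using Finset.induction_on with
  | empty => simp
  | insert i s hi ih =>
    rw [Finset.prod_insert hi, Finset.prod_insert hi, Finset.sum_insert hi]
    have : a i * ∏ i ∈ s, a i - b i * ∏ i ∈ s, b i
        = (a i - b i) * ∏ i ∈ s, a i + b i * (∏ i ∈ s, a i - ∏ i ∈ s, b i) := by ring
    rw [this]
    refine (norm_add_le _ _).trans (add_le_add ?_ ?_)
    · rw [norm_mul]
      apply mul_le_of_le_one_right (norm_nonneg _)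
      rw [norm_prod]
      exact Finset.prod_le_one (fun i _ => norm_nonneg _) (fun i _ => ha i)
    · rw [norm_mul]
      refine le_trans (mul_le_of_le_one_left (norm_nonneg _) (hb i)) ih

lemma geom_exp_sum_le {a : ℝ} (ha : 0 < a) (s : Finset ℕ) (hs : ∀ j ∈ s, 1 ≤ j) :
    ∑ j ∈ s, rexp (-(a * j)) ≤ 1 / a := by
  have hr : rexp (-a) < 1 := by rw [exp_lt_one_iff]; linarith
  have h1 : HasSum (fun j : ℕ => rexp (-a) * rexp (-a) ^ j) (rexp (-a) * (1 - rexp (-a))⁻¹) :=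
    (hasSum_geometric_of_lt_one (exp_pos _).le hr).mul_left _
  have h2 : ∑ j ∈ s, rexp (-(a * j)) = ∑ j ∈ s.image (fun j => j - 1), rexp (-a) * rexp (-a) ^ j := by
    rw [Finset.sum_image]
    · apply Finset.sum_congr rfl
      intro j hj
      have := hs j hj
      rw [← pow_succ', Nat.sub_add_cancel this, ← Real.exp_nat_mul]
      congr 1; ring
    · intro x hx y hy h
      have := hs x hx; have := hs y hy
      simp only at h
      omega
  rw [h2]
  refine (sum_le_hasSum _ (fun j _ => by positivity) h1).trans ?_
  have h3 : a + 1 ≤ rexp a := add_one_le_exp a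
  rw [← div_eq_mul_inv, div_le_div_iff₀ (by linarith) ha]
  have h4 : rexp (-a) * rexp a = 1 := by rw [← Real.exp_add]; simp
  have := exp_pos (-a)
  nlinarith

lemma sum_pow_exp_le (k : ℕ) {t : ℝ} (ht : 0 < t) (s : Finset ℕ) (hs : ∀ j ∈ s, 1 ≤ j) :
    ∑ j ∈ s, (j:ℝ) ^ k * rexp (-(t * j)) ≤ k.factorial * (2 / t) ^ (k + 1) := by
  have h1 : ∀ j ∈ s, (j:ℝ) ^ k * rexp (-(t * j)) ≤ k.factorial * (2 / t) ^ k * rexp (-(t / 2 * j)) := by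
    intro j hj
    have := Real.pow_div_factorial_le_exp (x := t / 2 * j) (by positivity) k
    rw [div_le_iff₀ (by positivity), mul_pow] at this
    have e : rexp (-(t * j)) = rexp (-(t / 2 * j)) * rexp (-(t / 2 * j)) := by
      rw [← Real.exp_add]; congr 1; ring
    have e2 : rexp (t / 2 * j) * rexp (-(t / 2 * j)) = 1 := by rw [← Real.exp_add]; simp
    rw [e, ← mul_assoc]
    refine mul_le_mul_of_nonneg_right ?_ (exp_pos _).le
    have e3 : (2 / t) ^ k * (t / 2) ^ k = 1 := by rw [← mul_pow]; field_simp; simp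
    calc (j:ℝ) ^ k * rexp (-(t / 2 * j)) = (2 / t) ^ k * ((t / 2) ^ k * j ^ k) * rexp (-(t / 2 * j)) := by
          rw [← mul_assoc, e3, one_mul]
      _ ≤ (2 / t) ^ k * (rexp (t / 2 * j) * k.factorial) * rexp (-(t / 2 * j)) := by gcongr
      _ = k.factorial * (2 / t) ^ k * (rexp (t / 2 * j) * rexp (-(t / 2 * j))) := by ring
      _ = _ := by rw [e2, mul_one]
  refine (Finset.sum_le_sum h1).trans ?_
  rw [← Finset.mul_sum, pow_succ, ← mul_assoc]
  gcongr
  refine (geom_exp_sum_le (by positivity) s hs).trans (le_of_eq ?_)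
  field_simp

/-- rank variance -/
lemma rank_var_bounds {t : ℝ} (ht : 0 < t) (c n : ℕ) (h : c ≤ n) :
    (bP (t * (c + 1 : ℕ)) - bP (t * (n + 1 : ℕ))) ≤ (rexp t - 1) * ∑ j ∈ Finset.Ioc c n, bH (t * j) ∧
    (rexp t - 1) * ∑ j ∈ Finset.Ioc c n, bH (t * j) ≤ rexp t * (bP (t * (c + 1 : ℕ)) - bP (t * (n + 1 : ℕ))) := by
  have step : ∀ j : ℕ, bP (t * j) - bP (t * (j + 1 : ℕ)) ≤ (rexp t - 1) * bH (t * j) ∧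
      (rexp t - 1) * bH (t * j) ≤ rexp t * (bP (t * j) - bP (t * (j + 1 : ℕ))) := by
    intro j
    have et : 1 ≤ rexp t := by rw [one_le_exp_iff]; exact ht.le
    set x := rexp (-(t * j)) with hx
    set y := rexp (-t) with hy
    have hxy : rexp (-(t * (j + 1 : ℕ))) = x * y := by
      rw [hx, hy, ← Real.exp_add]; push_cast; congr 1; ring
    have ey : rexp t = 1 / y := by rw [hy, Real.exp_neg]; field_simp
    have x0 : 0 < x := exp_pos _
    have y0 : 0 < y := exp_pos _
    have y1 : y ≤ 1 := by rw [hy, exp_le_one_iff]; linarith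
    have d : bP (t * j) - bP (t * (j + 1 : ℕ)) = x * (1 - y) / ((1 + x) * (1 + x * y)) := by
      unfold bP
      rw [hxy, ← hx]
      field_simp
      ring
    have hh : bH (t * j) = x / (1 + x) ^ 2 := by unfold bH; rw [← hx]
    rw [d, hh, ey]
    have q : (1 / y - 1) * (x / (1 + x) ^ 2) = x * (1 - y) / (y * (1 + x) ^ 2) := by
      field_simp
    rw [q]
    have w : 0 ≤ x * (1 - y) := mul_nonneg x0.le (by linarith)
    constructor
    · apply div_le_div_of_nonneg_left w (by positivity)
      nlinarith [mul_pos x0 y0]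
    · rw [div_mul_div_comm, one_mul]
      apply div_le_div_of_nonneg_left w (by positivity)
      have : 1 + x * y ≤ 1 + x := by nlinarith
      have : (1 + x) * (1 + x * y) ≤ (1 + x) ^ 2 := by nlinarith
      gcongr
  have tel : ∀ n, c ≤ n → ∑ j ∈ Finset.Ioc c n, (bP (t * j) - bP (t * (j + 1 : ℕ)))
      = bP (t * (c + 1 : ℕ)) - bP (t * (n + 1 : ℕ)) := by
    intro n hn
    induction n, hn using Nat.le_induction with
    | base => simp
    | succ n hn ih =>
      rw [← Finset.insert_Ioc_right_eq_Ioc_add_one (by omega), Finset.sum_insert (by simp), ih]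
      ring
  rw [← tel n h, Finset.mul_sum, Finset.mul_sum]
  exact ⟨Finset.sum_le_sum fun j _ => (step j).1, Finset.sum_le_sum fun j _ => (step j).2⟩

noncomputable def tN (N : ℕ) : ℝ := π / √(6 * N)

lemma tN_pos {N : ℕ} (h : 1 ≤ N) : 0 < tN N := by
  unfold tN
  have : (0:ℝ) < N := by exact_mod_cast h
  positivity

lemma tN_sq {N : ℕ} (h : 1 ≤ N) : (N:ℝ) = π ^ 2 / (6 * tN N ^ 2) := by
  unfold tN
  have : (0:ℝ) < N := by exact_mod_cast h
  rw [div_pow, sq_sqrt (by positivity)]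
  field_simp

lemma tendsto_tN : Tendsto tN atTop (nhds 0) := by
  unfold tN
  apply Tendsto.div_atTop tendsto_const_nhds
  apply tendsto_sqrt_atTop.comp
  exact tendsto_natCast_atTop_atTop.const_mul_atTop (by norm_num)

lemma tendsto_tN' : Tendsto tN atTop (nhdsWithin 0 (Set.Ioi 0)) := by
  apply tendsto_nhdsWithin_of_tendsto_nhds_of_eventually_within _ tendsto_tN
  filter_upwards [eventually_ge_atTop 1] with N hN using tN_pos hN

lemma tendsto_NtN : Tendsto (fun N : ℕ => tN N * N) atTop atTop := by
  have h : Tendsto (fun N : ℕ => π ^ 2 / 6 * (tN N)⁻¹) atTop atTop :=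
    (tendsto_inv_nhdsGT_zero.comp tendsto_tN').const_mul_atTop (by positivity)
  apply h.congr'
  filter_upwards [eventually_ge_atTop 1] with N hN
  have := tN_pos hN
  conv_rhs => rw [tN_sq hN]
  field_simp

lemma continuous_bP : Continuous bP := by
  unfold bP
  apply Continuous.div (by fun_prop) (by fun_prop)
  intro x; positivity

lemma rank_var_tendsto (c : ℕ) :
    Tendsto (fun N : ℕ => tN N * ∑ j ∈ Finset.Ioc c N, bH (tN N * j)) atTop (nhds (1 / 2)) := by
  have h1 : Tendsto (fun N : ℕ => bP (tN N * (c + 1 : ℕ))) atTop (nhds (1 / 2)) := by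
    have := (continuous_bP.tendsto 0).comp (g := bP) (f := fun N : ℕ => tN N * (c + 1 : ℕ)) (x := atTop)
      (by simpa using tendsto_tN.mul_const ((c + 1 : ℕ) : ℝ))
    have e : bP 0 = 1 / 2 := by unfold bP; norm_num
    rwa [e] at this
  have h2 : Tendsto (fun N : ℕ => bP (tN N * (N + 1 : ℕ))) atTop (nhds 0) := by
    have h : Tendsto (fun N : ℕ => rexp (-(tN N * N))) atTop (nhds 0) :=
      tendsto_exp_neg_atTop_nhds_zero.comp tendsto_NtN
    apply squeeze_zero' (Eventually.of_forall fun N => (bP_pos _).le) _ h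
    filter_upwards [eventually_ge_atTop 1] with N hN
    refine (bP_le _).trans ?_
    have := tN_pos hN
    apply exp_le_exp.2
    push_cast
    nlinarith
  have h3 : Tendsto (fun N : ℕ => (rexp (tN N) - 1) / tN N) atTop (nhds 1) := by
    have := (hasDerivAt_exp 0).tendsto_slope_zero_right
    simp only [zero_add, exp_zero, smul_eq_mul] at this
    refine (this.comp tendsto_tN').congr fun N => ?_
    simp [Function.comp, div_eq_inv_mul]
  have h4 : Tendsto (fun N : ℕ => rexp (tN N)) atTop (nhds 1) := by
    have := (Real.continuous_exp.tendsto 0).comp tendsto_tN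
    rw [Real.exp_zero] at this
    exact this
  have hd : Tendsto (fun N : ℕ => (bP (tN N * (c + 1 : ℕ)) - bP (tN N * (N + 1 : ℕ))) / ((rexp (tN N) - 1) / tN N))
      atTop (nhds (1 / 2)) := by
    have := (h1.sub h2).div h3 (by norm_num)
    rw [sub_zero, div_one] at this
    exact this
  have hd2 := h4.mul hd
  rw [one_mul] at hd2
  apply tendsto_of_tendsto_of_tendsto_of_le_of_le' hd hd2
  · filter_upwards [eventually_ge_atTop 1, eventually_ge_atTop c] with N hN hc
    have ht := tN_pos hN
    have := (rank_var_bounds ht c N hc).1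
    have e : 0 < rexp (tN N) - 1 := by linarith [add_one_le_exp (tN N)]
    rw [div_le_iff₀ (by positivity)]
    calc _ ≤ _ := this
      _ = _ := by field_simp
  · filter_upwards [eventually_ge_atTop 1, eventually_ge_atTop c] with N hN hc
    have ht := tN_pos hN
    have := (rank_var_bounds ht c N hc).2
    have e : 0 < rexp (tN N) - 1 := by linarith [add_one_le_exp (tN N)]
    rw [← mul_div_assoc, le_div_iff₀ (by positivity)]
    calc _ = _ := ?_
      _ ≤ _ := this
    field_simp

noncomputable def cs (x : ℝ) : ℝ := 1 / (4 * sinh (x / 2) ^ 2)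

lemma cs_eq {x : ℝ} (hx : 0 < x) : cs x = rexp (-x) / (1 - rexp (-x)) ^ 2 := by
  unfold cs
  rw [sinh_eq]
  have e1 : rexp (-x) = rexp (-(x / 2)) ^ 2 := by rw [← Real.exp_nat_mul]; congr 1; push_cast; ring
  have e2 : rexp (x / 2) = 1 / rexp (-(x / 2)) := by rw [Real.exp_neg]; field_simp
  have l : rexp (-(x / 2)) < 1 := by rw [exp_lt_one_iff]; linarith
  rw [e1, e2]
  set y := rexp (-(x / 2))
  have y0 : 0 < y := exp_pos _
  have : 1 - y ^ 2 ≠ 0 := by nlinarith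
  field_simp
  norm_num

lemma sinh_le_mul_cosh {y : ℝ} (hy : 0 ≤ y) : sinh y ≤ y * cosh y := by
  have hm : MonotoneOn (fun y => y * cosh y - sinh y) (Set.Ici 0) := by
    apply monotoneOn_of_deriv_nonneg (convex_Ici 0)
    · fun_prop
    · fun_prop
    · intro x hx
      simp only [interior_Ici, Set.mem_Ioi] at hx
      have : HasDerivAt (fun y => y * cosh y - sinh y) (1 * cosh x + x * sinh x - cosh x) x :=
        ((hasDerivAt_id x).mul (hasDerivAt_cosh x)).sub (hasDerivAt_sinh x)
      rw [this.deriv]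
      have : 0 < sinh x := sinh_pos_iff.2 hx
      nlinarith
  have := hm (Set.mem_Ici.2 le_rfl) (Set.mem_Ici.2 hy) hy
  simp at this
  linarith

lemma cs_le {x : ℝ} (hx : 0 < x) : cs x ≤ 1 / x ^ 2 := by
  unfold cs
  apply div_le_div_of_nonneg_left (by norm_num) (by positivity)
  have : x / 2 ≤ sinh (x / 2) := self_le_sinh_iff.2 (by linarith)
  nlinarith

lemma cs_nonneg (x : ℝ) : 0 ≤ cs x := by unfold cs; positivity

lemma cs_ge {x : ℝ} (hx : 0 < x) : 1 / x ^ 2 - cs x ≤ 1 / 4 := by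
  unfold cs
  obtain ⟨y, rfl⟩ : ∃ y, x = 2 * y := ⟨x / 2, by ring⟩
  rw [mul_div_cancel_left₀ _ (by norm_num)]
  have hy : 0 < y := by linarith
  have s0 : 0 < sinh y := sinh_pos_iff.2 hy
  have h := sinh_le_mul_cosh hy.le
  have h2 : sinh y ^ 2 ≤ y ^ 2 * (1 + sinh y ^ 2) := by
    have := pow_le_pow_left₀ s0.le h 2
    rw [mul_pow, cosh_sq] at this
    linarith
  rw [sub_le_iff_le_add, div_add_div _ _ (by norm_num) (by positivity), div_le_div_iff₀ (by positivity) (by positivity)]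
  nlinarith

lemma cs_err {x : ℝ} (hx : 0 < x) : |1 / x ^ 2 - cs x| ≤ x ^ (-(5/4) : ℝ) := by
  have h1 := cs_le hx
  have h2 := cs_ge hx
  have h3 := cs_nonneg x
  rw [abs_of_nonneg (by linarith)]
  rcases le_or_gt 1 x with h | h
  · refine (by linarith : _ ≤ 1 / x ^ 2).trans ?_
    rw [one_div, ← Real.rpow_natCast, ← Real.rpow_neg hx.le]
    apply Real.rpow_le_rpow_of_exponent_le h
    norm_num
  · refine h2.trans (le_trans (by norm_num : (1/4:ℝ) ≤ 1) ?_)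
    exact Real.one_le_rpow_of_pos_of_le_one_of_nonpos hx h.le (by norm_num)

lemma summable_cs {t : ℝ} (ht : 0 < t) : Summable (fun k : ℕ => cs (t * (k + 1 : ℕ))) := by
  have h : Summable (fun k : ℕ => 1 / t ^ 2 * (1 / ((k + 1 : ℕ) : ℝ) ^ 2)) :=
    (((summable_nat_add_iff 1).2 (Real.summable_one_div_nat_pow.2 (by norm_num : 1 < 2)))).mul_left _
  apply Summable.of_nonneg_of_le (fun k => cs_nonneg _) _ h
  intro k
  refine (cs_le (by positivity)).trans (le_of_eq ?_)
  field_simp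

noncomputable def LA (t : ℝ) : ℝ := ∑' k : ℕ, cs (t * (k + 1 : ℕ))

lemma LA_approx : ∃ C : ℝ, 0 ≤ C ∧ ∀ t : ℝ, 0 < t → |LA t - π ^ 2 / 6 / t ^ 2| ≤ C * t ^ (-(5/4) : ℝ) := by
  have hs : Summable (fun k : ℕ => ((k + 1 : ℕ) : ℝ) ^ (-(5/4) : ℝ)) :=
    (summable_nat_add_iff 1).2 (Real.summable_nat_rpow.2 (by norm_num))
  refine ⟨∑' k : ℕ, ((k + 1 : ℕ) : ℝ) ^ (-(5/4) : ℝ), tsum_nonneg fun k => by positivity, fun t ht => ?_⟩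
  have hz : HasSum (fun k : ℕ => 1 / (t * (k + 1 : ℕ)) ^ 2) (π ^ 2 / 6 / t ^ 2) := by
    have := (hasSum_nat_add_iff (f := fun n : ℕ => 1 / (n : ℝ) ^ 2) 1).2 (by simpa using hasSum_zeta_two)
    have := this.mul_right (1 / t ^ 2)
    rw [mul_one_div] at this
    refine this.congr_fun fun k => ?_
    field_simp
  have hl : HasSum (fun k : ℕ => cs (t * (k + 1 : ℕ))) (LA t) := (summable_cs ht).hasSum
  have hd := hl.sub hz
  have hb : HasSum (fun k : ℕ => ((k + 1 : ℕ) : ℝ) ^ (-(5/4) : ℝ) * t ^ (-(5/4) : ℝ)) _ := hs.hasSum.mul_right _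
  rw [← Real.norm_eq_abs, ← hd.tsum_eq]
  apply tsum_of_norm_bounded hb
  intro k
  rw [Real.norm_eq_abs, abs_sub_comm, mul_comm (((k + 1 : ℕ) : ℝ) ^ (-(5/4) : ℝ)), ← Real.mul_rpow ht.le (by positivity)]
  exact cs_err (by positivity)

lemma LA_eq {t : ℝ} (ht : 0 < t) :
    HasSum (fun j : ℕ => ((j + 1 : ℕ) : ℝ) / (rexp (t * (j + 1 : ℕ)) - 1)) (LA t) := by
  let f : ℕ × ℕ → ℝ := fun p => ((p.2 + 1 : ℕ) : ℝ) * rexp (-(t * (p.1 + 1 : ℕ))) ^ (p.2 + 1)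
  have h1 : ∀ k : ℕ, HasSum (fun j : ℕ => f (k, j)) (cs (t * (k + 1 : ℕ))) := by
    intro k
    have hr : ‖rexp (-(t * (k + 1 : ℕ)))‖ < 1 := by
      rw [Real.norm_eq_abs, abs_of_pos (exp_pos _), exp_lt_one_iff]
      have : 0 < t * (k + 1 : ℕ) := by positivity
      linarith
    have := hasSum_coe_mul_geometric_of_norm_lt_one hr
    rw [cs_eq (by positivity)]
    have := (hasSum_nat_add_iff (f := fun n : ℕ => (n : ℝ) * rexp (-(t * (k + 1 : ℕ))) ^ n) 1).2 (by rw [Finset.sum_range_one, Nat.cast_zero, zero_mul, add_zero]; exact this)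
    exact this
  have hf : Summable f := by
    rw [summable_prod_of_nonneg (fun p => by positivity)]
    refine ⟨fun k => (h1 k).summable, ?_⟩
    have e : (fun k : ℕ => ∑' j : ℕ, f (k, j)) = fun k : ℕ => cs (t * (k + 1 : ℕ)) := by
      ext k; exact (h1 k).tsum_eq
    rw [e]
    exact summable_cs ht
  have h2 : ∀ j : ℕ, HasSum (fun k : ℕ => f (k, j)) (((j + 1 : ℕ) : ℝ) / (rexp (t * (j + 1 : ℕ)) - 1)) := by
    intro j
    set x := rexp (-(t * (j + 1 : ℕ))) with hx
    have x0 : 0 < x := exp_pos _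
    have x1 : x < 1 := by
      rw [hx, exp_lt_one_iff]
      have : 0 < t * (j + 1 : ℕ) := by positivity
      linarith
    have := (hasSum_geometric_of_lt_one x0.le x1).mul_left (((j + 1 : ℕ) : ℝ) * x)
    have e2 : rexp (t * (j + 1 : ℕ)) = 1 / x := by rw [hx, Real.exp_neg]; field_simp
    rw [e2]
    have e3 : ((j + 1 : ℕ) : ℝ) / (1 / x - 1) = ((j + 1 : ℕ) : ℝ) * x * (1 - x)⁻¹ := by
      have : 1 - x ≠ 0 := by linarith
      field_simp
    rw [e3]
    refine this.congr_fun fun k => ?_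
    simp only [f, hx]
    rw [mul_assoc, ← pow_succ', ← Real.exp_nat_mul, ← Real.exp_nat_mul]
    congr 2
    push_cast
    ring
  have hL : HasSum f (LA t) := by
    have := hf.hasSum.prod_fiberwise h1
    have e := this.unique (summable_cs ht).hasSum
    rw [show LA t = ∑' p, f p from e.symm]
    exact hf.hasSum
  have hsw := (Equiv.prodComm ℕ ℕ).hasSum_iff.2 hL
  exact hsw.prod_fiberwise h2

lemma bP_split {x : ℝ} (hx : 0 < x) : bP x = 1 / (rexp x - 1) - 2 / (rexp (2 * x) - 1) := by
  have e1 : rexp (-x) = 1 / rexp x := by rw [Real.exp_neg]; field_simp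
  have e2 : rexp (2 * x) = rexp x ^ 2 := by rw [← Real.exp_nat_mul]; push_cast; ring_nf
  unfold bP
  rw [e1, e2]
  have h : 1 < rexp x := by rw [one_lt_exp_iff]; exact hx
  set y := rexp x
  have a1 : y - 1 ≠ 0 := by linarith
  have a2 : y + 1 ≠ 0 := by linarith
  have a4 : 1 + y ≠ 0 := by linarith
  have a3 : y ^ 2 - 1 = (y - 1) * (y + 1) := by ring
  rw [a3]
  field_simp
  ring

lemma mean_hasSum {t : ℝ} (ht : 0 < t) :
    HasSum (fun j : ℕ => 2 * (((j + 1 : ℕ) : ℝ) * bP (t * (j + 1 : ℕ)))) (2 * (LA t - 2 * LA (2 * t))) := by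
  have h := ((LA_eq ht).sub ((LA_eq (by linarith : 0 < 2 * t)).mul_left 2)).mul_left 2
  refine h.congr_fun fun j => ?_
  rw [bP_split (by positivity)]
  rw [← mul_assoc 2 t]
  ring

lemma mean_bound : ∃ C : ℝ, 0 ≤ C ∧ ∀ N : ℕ, 1 ≤ N →
    |∑ j ∈ Finset.Ioc 0 N, 2 * ((j:ℝ) * bP (tN N * j)) - N| ≤ C * (tN N ^ (-(5/4) : ℝ) + 1) := by
  obtain ⟨C, C0, hC⟩ := LA_approx
  refine ⟨6 * C + 7000, by positivity, fun N hN => ?_⟩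
  have ht := tN_pos hN
  set t := tN N with htdef
  have hN2 := tN_sq hN
  rw [← htdef] at hN2
  have hS := mean_hasSum ht
  have hsplit := hS.summable.sum_add_tsum_nat_add N
  rw [hS.tsum_eq] at hsplit
  have e1 : ∑ j ∈ Finset.Ioc 0 N, 2 * ((j:ℝ) * bP (t * j))
      = ∑ j ∈ Finset.range N, 2 * (((j + 1 : ℕ) : ℝ) * bP (t * (j + 1 : ℕ))) := by
    rw [Finset.range_eq_Ico, Finset.sum_Ico_add' (fun j : ℕ => 2 * ((j:ℝ) * bP (t * j))) 0 N 1]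
    apply Finset.sum_congr _ (fun _ _ => rfl)
    ext j; simp; omega
  have hNpos : (0:ℝ) < N := by exact_mod_cast hN
  have tail0 : 0 ≤ ∑' j : ℕ, 2 * (((j + N + 1 : ℕ) : ℝ) * bP (t * (j + N + 1 : ℕ))) :=
    tsum_nonneg fun j => by have := bP_pos (t * (j + N + 1 : ℕ)); positivity
  have tail : ∑' j : ℕ, 2 * (((j + N + 1 : ℕ) : ℝ) * bP (t * (j + N + 1 : ℕ))) ≤ 7000 := by
    apply Real.tsum_le_of_sum_le (fun j => by have := bP_pos (t * (j + N + 1 : ℕ)); positivity)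
    intro s
    have hb : ∀ j ∈ s, 2 * (((j + N + 1 : ℕ) : ℝ) * bP (t * (j + N + 1 : ℕ)))
        ≤ 2 / (N:ℝ) ^ 2 * (((j + N + 1 : ℕ) : ℝ) ^ 3 * rexp (-(t * (j + N + 1 : ℕ)))) := by
      intro j _
      have h1 := bP_le (t * (j + N + 1 : ℕ))
      have h0 := bP_pos (t * (j + N + 1 : ℕ))
      have hj : (N:ℝ) ≤ ((j + N + 1 : ℕ) : ℝ) := by push_cast; linarith [(Nat.cast_nonneg j : (0:ℝ) ≤ j)]
      set J := ((j + N + 1 : ℕ) : ℝ)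
      rw [div_mul_eq_mul_div, le_div_iff₀ (by positivity)]
      have : (N:ℝ) ^ 2 ≤ J ^ 2 := by gcongr
      calc 2 * (J * bP (t * J)) * (N:ℝ) ^ 2 ≤ 2 * (J * rexp (-(t * J))) * J ^ 2 := by gcongr
        _ = _ := by ring
    refine (Finset.sum_le_sum hb).trans ?_
    rw [← Finset.mul_sum]
    have := sum_pow_exp_le 3 ht (s.image (fun j => j + N + 1)) (by
      intro j hj; simp at hj; obtain ⟨a, _, rfl⟩ := hj; omega)
    rw [Finset.sum_image (by intro x _ y _ h; simp only at h; omega)] at this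
    calc _ ≤ 2 / (N:ℝ) ^ 2 * (((3:ℕ).factorial : ℝ) * (2 / t) ^ (3 + 1)) := by gcongr
      _ = 6912 / π ^ 4 := by
        rw [hN2]; simp [Nat.factorial]; field_simp; norm_num
      _ ≤ 7000 := by
        rw [div_le_iff₀ (by positivity)]
        have : 1 ≤ π ^ 4 := one_le_pow₀ (by linarith [pi_gt_three])
        linarith
  rw [e1]
  have k1 := hC t ht
  have k2 := hC (2 * t) (by linarith)
  have k3 : (2 * t) ^ (-(5/4) : ℝ) ≤ t ^ (-(5/4) : ℝ) := by
    apply Real.rpow_le_rpow_of_nonpos ht (by linarith) (by norm_num)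
  have k4 : C * (2 * t) ^ (-(5/4) : ℝ) ≤ C * t ^ (-(5/4) : ℝ) := by gcongr
  have hN3 : (N:ℝ) = 2 * (π ^ 2 / 6 / t ^ 2 - 2 * (π ^ 2 / 6 / (2 * t) ^ 2)) := by
    rw [hN2]; field_simp; ring
  have tp : 0 < t ^ (-(5/4) : ℝ) := by positivity
  have tp2 : 0 ≤ C * t ^ (-(5/4) : ℝ) := by positivity
  rw [abs_le] at *
  constructor <;> nlinarith

noncomputable def BN (N : ℕ) : ℝ := ∑ j ∈ Finset.Ioc 0 N, 2 * ((j:ℝ) ^ 2 * bH (tN N * j))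

lemma sum_sq_ge (c q : ℕ) (h : 2 * c ≤ q) : (q:ℝ) ^ 3 / 8 ≤ ∑ j ∈ Finset.Ioc c q, (j:ℝ) ^ 2 := by
  have h1 : ∑ j ∈ Finset.Ioc (q / 2) q, ((q:ℝ) / 2) ^ 2 ≤ ∑ j ∈ Finset.Ioc (q / 2) q, (j:ℝ) ^ 2 := by
    apply Finset.sum_le_sum
    intro j hj
    rw [Finset.mem_Ioc] at hj
    have : q ≤ 2 * j := by omega
    have : (q:ℝ) ≤ 2 * j := by exact_mod_cast this
    gcongr
    linarith
  have h2 : ∑ j ∈ Finset.Ioc (q / 2) q, (j:ℝ) ^ 2 ≤ ∑ j ∈ Finset.Ioc c q, (j:ℝ) ^ 2 := by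
    apply Finset.sum_le_sum_of_subset_of_nonneg
    · apply Finset.Ioc_subset_Ioc_left; omega
    · intros; positivity
  refine le_trans ?_ (h1.trans h2)
  rw [Finset.sum_const, Nat.card_Ioc, nsmul_eq_mul]
  have : q ≤ 2 * (q - q / 2) := by omega
  have : (q:ℝ) ≤ 2 * ((q - q / 2 : ℕ) : ℝ) := by exact_mod_cast this
  nlinarith [sq_nonneg (q:ℝ), mul_le_mul_of_nonneg_right this (sq_nonneg (q:ℝ))]

lemma BN_le {N : ℕ} (hN : 1 ≤ N) : BN N ≤ 32 / tN N ^ 3 := by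
  have ht := tN_pos hN
  unfold BN
  rw [← Finset.mul_sum]
  have := sum_pow_exp_le 2 ht (Finset.Ioc 0 N) (by intro j hj; rw [Finset.mem_Ioc] at hj; omega)
  have h2 : ∑ j ∈ Finset.Ioc 0 N, ((j:ℝ) ^ 2 * bH (tN N * j)) ≤ ∑ j ∈ Finset.Ioc 0 N, ((j:ℝ) ^ 2 * rexp (-(tN N * j))) := by
    apply Finset.sum_le_sum
    intro j _
    gcongr
    exact bH_le _
  have e : (((2:ℕ).factorial : ℝ) * (2 / tN N) ^ (2 + 1)) = 16 / tN N ^ 3 := by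
    simp [Nat.factorial]; ring
  rw [e] at this
  calc _ ≤ 2 * (16 / tN N ^ 3) := by linarith
    _ = _ := by ring

noncomputable def mN (N : ℕ) : ℕ := ⌊1 / tN N⌋₊

lemma mN_le {N : ℕ} (hN : 1 ≤ N) : tN N * mN N ≤ 1 := by
  have ht := tN_pos hN
  have := Nat.floor_le (a := 1 / tN N) (by positivity)
  rw [le_div_iff₀ ht] at this
  unfold mN; linarith

lemma tendsto_mN : Tendsto mN atTop atTop := by
  apply tendsto_nat_floor_atTop.comp
  simp only [one_div]
  exact tendsto_inv_nhdsGT_zero.comp tendsto_tN'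

lemma mN_le_N : ∀ᶠ N in atTop, mN N ≤ N := by
  filter_upwards [tendsto_NtN.eventually_ge_atTop 1, eventually_ge_atTop 1] with N h hN
  have ht := tN_pos hN
  apply Nat.floor_le_of_le
  rw [div_le_iff₀ ht]; linarith

lemma mN_ge {N : ℕ} (h : 1 ≤ mN N) : 1 / tN N ≤ 2 * mN N := by
  have := Nat.lt_floor_add_one (1 / tN N)
  have h' : (1:ℝ) ≤ mN N := by exact_mod_cast h
  unfold mN at *
  linarith

lemma bH_ge_window {N : ℕ} (hN : 1 ≤ N) {j : ℕ} (hj : j ≤ mN N) : 1 / 12 ≤ bH (tN N * j) := by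
  have ht := tN_pos hN
  refine le_trans ?_ (bH_ge _ (by positivity))
  have h1 : tN N * j ≤ 1 := by
    have := mN_le hN
    have : (j:ℝ) ≤ mN N := by exact_mod_cast hj
    nlinarith
  have : rexp (-1) ≤ rexp (-(tN N * j)) := by apply exp_le_exp.2; linarith
  have h2 : 1 / 3 ≤ rexp (-1) := by
    rw [Real.exp_neg, ← one_div]
    apply one_div_le_one_div_of_le (exp_pos _)
    linarith [exp_one_lt_d9]
  linarith

lemma BN_ge : ∀ᶠ N in atTop, (mN N : ℝ) ^ 3 / 48 ≤ BN N := by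
  filter_upwards [mN_le_N, eventually_ge_atTop 1] with N h hN
  have h0 := sum_sq_ge 0 (mN N) (by omega)
  have h1 : ∑ j ∈ Finset.Ioc 0 (mN N), 2 * ((j:ℝ) ^ 2 * (1 / 12)) ≤ BN N := by
    calc _ ≤ ∑ j ∈ Finset.Ioc 0 (mN N), 2 * ((j:ℝ) ^ 2 * bH (tN N * j)) := by
          apply Finset.sum_le_sum
          intro j hj
          rw [Finset.mem_Ioc] at hj
          have := bH_ge_window hN hj.2
          gcongr
      _ ≤ _ := by
          apply Finset.sum_le_sum_of_subset_of_nonneg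
          · exact Finset.Ioc_subset_Ioc_right h
          · intro j _ _
            have := bH_pos (tN N * j)
            positivity
  rw [← Finset.mul_sum, ← Finset.sum_mul] at h1
  linarith

lemma cos_sum_le (c m : ℕ) (hcm : c ≤ m) {u : ℝ} (hu0 : u ≠ 0) (hu : |u| ≤ π) :
    ∑ j ∈ Finset.Ioc c m, cos (j * u) ≤ π / |u| := by
  wlog h : 0 < u generalizing u
  · have := this (u := -u) (by simpa using hu0) (by simpa using hu) (by
      rcases lt_or_gt_of_ne hu0 with h | h
      · linarith
      · exact absurd ‹0 < u› ‹_›)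
    simpa using this
  rw [abs_of_pos h] at hu ⊢
  have tel : ∀ m, c ≤ m → 2 * sin (u / 2) * ∑ j ∈ Finset.Ioc c m, cos (j * u)
      = sin ((m + 1/2) * u) - sin ((c + 1/2) * u) := by
    intro m hm
    induction m, hm using Nat.le_induction with
    | base => simp
    | succ n hn ih =>
      rw [← Finset.insert_Ioc_right_eq_Ioc_add_one (by omega), Finset.sum_insert (by simp), mul_add, ih]
      have e1 : (((n + 1 : ℕ) : ℝ) + 1 / 2) * u = ((n + 1 : ℕ) : ℝ) * u + u / 2 := by ring
      have e2 : ((n : ℝ) + 1 / 2) * u = ((n + 1 : ℕ) : ℝ) * u - u / 2 := by push_cast; ring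
      rw [e1, e2, sin_add, sin_sub]
      ring
  have h1 := tel m hcm
  have h2 := mul_le_sin (x := u / 2) (by linarith) (by linarith)
  have h3 : u / π ≤ sin (u / 2) := by
    refine le_trans (le_of_eq ?_) h2
    field_simp
  have h4 := sin_le_one ((m + 1/2) * u)
  have h5 := neg_one_le_sin ((c + 1/2) * u)
  set S := ∑ j ∈ Finset.Ioc c m, cos (j * u)
  have up : 0 < u / π := by positivity
  rcases le_or_gt S 0 with hS | hS
  · exact hS.trans (by positivity)
  · have : u / π * S ≤ 1 := by nlinarith
    rw [le_div_iff₀ h]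
    rw [div_mul_eq_mul_div, div_le_one pi_pos] at this
    linarith

lemma D_ge (c m : ℕ) (hc : 16 * c + 16 ≤ m) {u : ℝ} (hu : |u| ≤ π) :
    u ^ 2 * m ^ 3 / 20480 ≤ ∑ j ∈ Finset.Ioc c m, (1 - cos (j * u)) ∨
    (m : ℝ) / 20480 ≤ ∑ j ∈ Finset.Ioc c m, (1 - cos (j * u)) := by
  have hm : (0:ℝ) < m := by exact_mod_cast (by omega : 0 < m)
  rcases le_or_gt |u| (8 / m) with h | h
  · left
    set q := m / 4 with hq
    have q1 : (m:ℝ) ≤ 8 * q := by exact_mod_cast (by omega : m ≤ 8 * q)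
    have q2 : 4 * (q:ℝ) ≤ m := by exact_mod_cast (by omega : 4 * q ≤ m)
    have h1 := sum_sq_ge c q (by omega)
    have h2 : ∑ j ∈ Finset.Ioc c q, (j:ℝ) ^ 2 * (u ^ 2 / 5) ≤ ∑ j ∈ Finset.Ioc c m, (1 - cos (j * u)) := by
      calc _ ≤ ∑ j ∈ Finset.Ioc c q, (1 - cos (j * u)) := by
            apply Finset.sum_le_sum
            intro j hj
            rw [Finset.mem_Ioc] at hj
            have hj2 : (j:ℝ) ≤ q := by exact_mod_cast hj.2
            have b : |(j:ℝ) * u| ≤ π := by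
              rw [abs_mul, Nat.abs_cast]
              have : (j:ℝ) * |u| ≤ (m / 4) * (8 / m) := by
                gcongr
                linarith
              have e : (m:ℝ) / 4 * (8 / m) = 2 := by field_simp; norm_num
              linarith [pi_gt_three]
            have := cos_le_one_sub_mul_cos_sq b
            have p10 : 1 / 5 ≤ 2 / π ^ 2 := by
              rw [div_le_div_iff₀ (by norm_num) (by positivity)]
              nlinarith [pi_lt_d2, pi_pos]
            have := mul_le_mul_of_nonneg_right p10 (sq_nonneg ((j:ℝ) * u))
            rw [mul_pow] at *
            linarith
        _ ≤ _ := by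
            apply Finset.sum_le_sum_of_subset_of_nonneg
            · apply Finset.Ioc_subset_Ioc_right; omega
            · intro j _ _
              linarith [cos_le_one (j * u)]
    rw [← Finset.sum_mul] at h2
    refine le_trans ?_ h2
    have : (m:ℝ) ^ 3 ≤ (8 * q) ^ 3 := by gcongr
    have h3 : (m:ℝ) ^ 3 / 4096 ≤ ∑ j ∈ Finset.Ioc c q, (j:ℝ) ^ 2 := by
      refine le_trans ?_ h1
      rw [mul_pow] at this
      linarith
    have := mul_le_mul_of_nonneg_right h3 (by positivity : 0 ≤ u ^ 2 / 5)
    linarith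
  · right
    have up : 0 < |u| := lt_trans (by positivity) h
    have h1 := cos_sum_le c m (by omega) (abs_pos.1 up) hu
    rw [Finset.sum_sub_distrib]
    simp only [Finset.sum_const, Nat.card_Ioc, nsmul_eq_mul, mul_one]
    rw [Nat.cast_sub (by omega)]
    have h2 : π / |u| ≤ π * m / 8 := by
      rw [div_le_iff₀ up]
      have : 8 < |u| * m := by rwa [div_lt_iff₀ hm] at h
      nlinarith [pi_pos]
    have hcm : 16 * (c:ℝ) ≤ m := by exact_mod_cast (by omega : 16 * c ≤ m)
    nlinarith [pi_lt_d2]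

lemma dom (c : ℕ) : ∃ C : ℝ, ∀ᶠ N in atTop, ∀ φ : ℝ, 1 / 2 ≤ cos φ → ∀ v : ℝ, |v| ≤ π * √(BN N) →
    ‖∏ j ∈ Finset.Ioc c N, (bch (tN N * j) (φ + j * (v / √(BN N))) * bch (tN N * j) (-φ + j * (v / √(BN N))))‖
      ≤ C * (1 + v ^ 2)⁻¹ := by
  set κ : ℝ := 1 / (20480 * 12) with hκ
  refine ⟨256 / κ + 6 * 2561 / κ ^ 3, ?_⟩
  filter_upwards [mN_le_N, eventually_ge_atTop 1, BN_ge, tendsto_mN.eventually_ge_atTop (16 * c + 16)]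
    with N hmN hN hB hm φ hφ v hv
  have ht := tN_pos hN
  have hm1 : (1:ℝ) ≤ mN N := by exact_mod_cast (by omega : 1 ≤ mN N)
  set m := mN N with hmdef
  have Bpos : 0 < BN N := lt_of_lt_of_le (by positivity) hB
  have sB : 0 < √(BN N) := Real.sqrt_pos.2 Bpos
  set u := v / √(BN N) with hu
  have hu2 : |u| ≤ π := by
    rw [hu, abs_div, abs_of_pos sB, div_le_iff₀ sB]; exact hv
  have u2 : u ^ 2 * BN N = v ^ 2 := by
    rw [hu, div_pow, sq_sqrt Bpos.le]; field_simp
  have Bup : BN N ≤ 256 * m ^ 3 := by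
    refine (BN_le hN).trans ?_
    have := mN_ge (N := N) (by omega)
    have h3 := pow_le_pow_left₀ (by positivity) this 3
    rw [mul_pow, div_pow, one_pow] at h3
    calc 32 / tN N ^ 3 = 32 * (1 / tN N ^ 3) := by ring
      _ ≤ _ := by rw [← hmdef] at h3; linarith
  set D := ∑ j ∈ Finset.Ioc c m, (1 - cos (j * u)) with hD
  have main : ‖∏ j ∈ Finset.Ioc c N, (bch (tN N * j) (φ + j * u) * bch (tN N * j) (-φ + j * u))‖ ≤ rexp (-(D / 12)) := by
    rw [norm_prod]
    have h1 : ∀ j ∈ Finset.Ioc c N, ‖bch (tN N * j) (φ + j * u) * bch (tN N * j) (-φ + j * u)‖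
        ≤ rexp (-(bH (tN N * j) * (1 - cos (j * u)))) := by
      intro j _
      rw [norm_mul]
      refine (mul_le_mul (norm_bch_le _ _) (norm_bch_le _ _) (norm_nonneg _) (exp_pos _).le).trans ?_
      rw [← Real.exp_add]
      apply exp_le_exp.2
      have e : cos (φ + j * u) + cos (-φ + j * u) = 2 * cos φ * cos (j * u) := by
        rw [cos_add, cos_add, cos_neg, sin_neg]; ring
      have hb := bH_pos (tN N * j)
      have : 1 - cos (j * u) ≤ 2 - (cos (φ + j * u) + cos (-φ + j * u)) := by
        rw [e]
        have := cos_le_one φ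
        have := cos_le_one (j * u)
        nlinarith
      nlinarith
    refine (Finset.prod_le_prod (fun _ _ => norm_nonneg _) h1).trans ?_
    rw [← Real.exp_sum]
    apply exp_le_exp.2
    rw [Finset.sum_neg_distrib]
    apply neg_le_neg
    rw [hD, Finset.sum_div]
    calc _ ≤ ∑ j ∈ Finset.Ioc c m, bH (tN N * j) * (1 - cos (j * u)) := by
          apply Finset.sum_le_sum
          intro j hj
          rw [Finset.mem_Ioc] at hj
          have := bH_ge_window hN hj.2
          have := cos_le_one (j * u)
          nlinarith
      _ ≤ _ := by
          apply Finset.sum_le_sum_of_subset_of_nonneg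
          · exact Finset.Ioc_subset_Ioc_right hmN
          · intro j _ _
            have := bH_pos (tN N * j)
            have := cos_le_one (j * u)
            apply mul_nonneg <;> linarith
  refine main.trans ?_
  have κ0 : 0 < κ := by rw [hκ]; positivity
  have κ1 : κ ≤ 1 := by rw [hκ]; norm_num
  have hv2 : 0 ≤ v ^ 2 := sq_nonneg v
  have v1 : 0 < 1 + v ^ 2 := by linarith
  rw [add_mul]
  have n1 : 0 ≤ 256 / κ * (1 + v ^ 2)⁻¹ := by positivity
  have n2 : 0 ≤ 6 * 2561 / κ ^ 3 * (1 + v ^ 2)⁻¹ := by positivity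
  rcases D_ge c m hm hu2 with h | h
  · refine le_trans ?_ (le_add_of_nonneg_right n2)
    have h2 : κ * v ^ 2 / 256 ≤ D / 12 := by
      have : v ^ 2 ≤ 256 * (u ^ 2 * m ^ 3) := by
        rw [← u2]; nlinarith [sq_nonneg u]
      calc κ * v ^ 2 / 256 ≤ κ * (256 * (u ^ 2 * m ^ 3)) / 256 := by gcongr
        _ = (u ^ 2 * m ^ 3 / 20480) / 12 := by rw [hκ]; ring
        _ ≤ _ := by gcongr
    rw [Real.exp_neg, ← div_eq_mul_inv, ← one_div, div_le_div_iff₀ (exp_pos _) v1]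
    have := add_one_le_exp (D / 12)
    have h3 : 256 / κ * (1 + κ * v ^ 2 / 256) ≤ 256 / κ * rexp (D / 12) := by
      gcongr; linarith
    have e : 256 / κ * (1 + κ * v ^ 2 / 256) = 256 / κ + v ^ 2 := by field_simp
    have : 1 ≤ 256 / κ := by rw [one_le_div κ0]; linarith
    linarith
  · refine le_trans ?_ (le_add_of_nonneg_left n1)
    have h2 : κ * m ≤ D / 12 := by rw [hκ]; linarith
    have hv3 : v ^ 2 ≤ 2560 * m ^ 3 := by
      rw [← u2]
      have : u ^ 2 ≤ 10 := by
        rw [← sq_abs]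
        have : |u| ^ 2 ≤ π ^ 2 := by gcongr
        nlinarith [pi_lt_d2, pi_pos]
      calc _ ≤ 10 * (256 * (m:ℝ) ^ 3) := by gcongr
        _ = _ := by ring
    have m3 : (1:ℝ) ≤ (m:ℝ) ^ 3 := one_le_pow₀ hm1
    rw [Real.exp_neg, ← div_eq_mul_inv, ← one_div, div_le_div_iff₀ (exp_pos _) v1]
    have h4 := Real.pow_div_factorial_le_exp (x := κ * m) (by positivity) 3
    simp [Nat.factorial] at h4
    have h5 : rexp (κ * m) ≤ rexp (D / 12) := exp_le_exp.2 h2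
    have h6 : 6 * 2561 / κ ^ 3 * ((κ * m) ^ 3 / 6) ≤ 6 * 2561 / κ ^ 3 * rexp (D / 12) := by
      gcongr; linarith
    have e : 6 * 2561 / κ ^ 3 * ((κ * m) ^ 3 / 6) = 2561 * (m:ℝ) ^ 3 := by field_simp
    linarith

lemma inv_sqrt_BN_le : ∀ᶠ N in atTop, 0 < BN N ∧ 1 / √(BN N) ≤ 20 * √(tN N) ^ 3 := by
  filter_upwards [eventually_ge_atTop 1, BN_ge, tendsto_mN.eventually_ge_atTop 1] with N hN hB hm
  have ht := tN_pos hN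
  have h1 := mN_ge hm
  have hm1 : (1:ℝ) ≤ mN N := by exact_mod_cast hm
  have hBp : 0 < BN N := lt_of_lt_of_le (by positivity) hB
  refine ⟨hBp, ?_⟩
  have h3 := pow_le_pow_left₀ (by positivity) h1 3
  rw [mul_pow, div_pow, one_pow] at h3
  have h4 : 1 / tN N ^ 3 ≤ 400 * BN N := by nlinarith
  have h5 : 1 / BN N ≤ 400 * tN N ^ 3 := by
    rw [div_le_iff₀ (by positivity)] at h4 ⊢
    linarith
  apply (abs_le_of_sq_le_sq' _ (by positivity)).2
  rw [div_pow, sq_sqrt hBp.le, one_pow, mul_pow, ← pow_mul, mul_comm 3 2, pow_mul, sq_sqrt ht.le]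
  linarith

lemma tendsto_sqrt_tN : Tendsto (fun N => √(tN N)) atTop (nhds 0) := by
  have := (Real.continuous_sqrt.tendsto 0).comp tendsto_tN
  rw [Real.sqrt_zero] at this
  exact this

lemma tendsto_inv_sqrt_BN : Tendsto (fun N => 1 / √(BN N)) atTop (nhds 0) := by
  have h : Tendsto (fun N => 20 * √(tN N) ^ 3) atTop (nhds 0) := by
    simpa using (tendsto_sqrt_tN.pow 3).const_mul 20
  apply squeeze_zero' (Eventually.of_forall fun N => by positivity) _ h
  filter_upwards [inv_sqrt_BN_le] with N h using h.2

lemma tendsto_inv_sqrt_BN_mean :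
    Tendsto (fun N => 1 / √(BN N) * (tN N ^ (-(5/4) : ℝ) + 1)) atTop (nhds 0) := by
  have h1 : Tendsto (fun N => tN N ^ (1/4 : ℝ)) atTop (nhds 0) := by
    have := ((Real.continuous_rpow_const (q := 1/4) (by norm_num)).tendsto 0).comp tendsto_tN
    rw [Real.zero_rpow (by norm_num)] at this
    exact this
  have h : Tendsto (fun N => 20 * tN N ^ (1/4 : ℝ) + 20 * √(tN N) ^ 3) atTop (nhds 0) := by
    simpa using (h1.const_mul 20).add ((tendsto_sqrt_tN.pow 3).const_mul 20)
  refine squeeze_zero' ?_ ?_ h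
  · filter_upwards [eventually_ge_atTop 1] with N hN
    have ht := tN_pos hN
    positivity
  · filter_upwards [eventually_ge_atTop 1, inv_sqrt_BN_le] with N hN h
    have ht := tN_pos hN
    have e : √(tN N) ^ 3 * tN N ^ (-(5/4) : ℝ) = tN N ^ (1/4 : ℝ) := by
      rw [Real.sqrt_eq_rpow, ← Real.rpow_natCast, ← Real.rpow_mul ht.le, ← Real.rpow_add ht]
      norm_num
    calc _ ≤ 20 * √(tN N) ^ 3 * (tN N ^ (-(5/4) : ℝ) + 1) := by gcongr; exact h.2
      _ = 20 * (√(tN N) ^ 3 * tN N ^ (-(5/4) : ℝ)) + 20 * √(tN N) ^ 3 := by ring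
      _ = _ := by rw [e]

lemma shift_tendsto (c d : ℕ) (v : ℝ) :
    Tendsto (fun N : ℕ => v / √(BN N) * (d - N + ∑ j ∈ Finset.Ioc c N, 2 * ((j:ℝ) * bP (tN N * j))))
      atTop (nhds 0) := by
  obtain ⟨C, C0, hC⟩ := mean_bound
  set K : ℝ := d + ∑ j ∈ Finset.Ioc 0 c, 2 * (j:ℝ) with hK
  have h : Tendsto (fun N => |v| * (C * (1 / √(BN N) * (tN N ^ (-(5/4) : ℝ) + 1)) + K * (1 / √(BN N)))) atTop (nhds 0) := by
    simpa using ((tendsto_inv_sqrt_BN_mean.const_mul C).add (tendsto_inv_sqrt_BN.const_mul K)).const_mul |v|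
  apply squeeze_zero_norm' _ h
  filter_upwards [eventually_ge_atTop 1, eventually_ge_atTop c] with N hN hc
  have ht := tN_pos hN
  have e : ∑ j ∈ Finset.Ioc 0 N, 2 * ((j:ℝ) * bP (tN N * j)) =
      ∑ j ∈ Finset.Ioc 0 c, 2 * ((j:ℝ) * bP (tN N * j)) + ∑ j ∈ Finset.Ioc c N, 2 * ((j:ℝ) * bP (tN N * j)) :=
    (Finset.sum_Ioc_consecutive _ (Nat.zero_le c) hc).symm
  have k1 : ∑ j ∈ Finset.Ioc 0 c, 2 * ((j:ℝ) * bP (tN N * j)) ≤ ∑ j ∈ Finset.Ioc 0 c, 2 * (j:ℝ) := by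
    apply Finset.sum_le_sum
    intro j _
    have := bP_lt_one (tN N * j)
    have : (0:ℝ) ≤ j := Nat.cast_nonneg j
    nlinarith
  have k0 : 0 ≤ ∑ j ∈ Finset.Ioc 0 c, 2 * ((j:ℝ) * bP (tN N * j)) := by
    apply Finset.sum_nonneg
    intro j _
    have := bP_pos (tN N * j)
    positivity
  have hd : (0:ℝ) ≤ d := Nat.cast_nonneg d
  have hb := hC N hN
  rw [e] at hb
  have h2 : |d - N + ∑ j ∈ Finset.Ioc c N, 2 * ((j:ℝ) * bP (tN N * j))| ≤ C * (tN N ^ (-(5/4) : ℝ) + 1) + K := by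
    rw [abs_le] at *
    constructor <;> linarith
  rw [Real.norm_eq_abs, abs_mul, abs_div, abs_of_nonneg (Real.sqrt_nonneg (BN N))]
  calc _ ≤ |v| / √(BN N) * (C * (tN N ^ (-(5/4) : ℝ) + 1) + K) := by gcongr
    _ = _ := by ring

lemma quad_tendsto (c : ℕ) (θ v : ℝ) :
    Tendsto (fun N : ℕ => ∑ j ∈ Finset.Ioc c N,
      (bH (tN N * j) * ((θ * √(tN N)) ^ 2 + (j * (v / √(BN N))) ^ 2))) atTop (nhds (θ ^ 2 / 2 + v ^ 2 / 2)) := by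
  have h1 : Tendsto (fun N : ℕ => θ ^ 2 * (tN N * ∑ j ∈ Finset.Ioc c N, bH (tN N * j))) atTop (nhds (θ ^ 2 / 2)) := by
    have := (rank_var_tendsto c).const_mul (θ ^ 2)
    rwa [mul_one_div] at this
  have h2 : Tendsto (fun N : ℕ => v ^ 2 * (1 / √(BN N)) ^ 2 * ∑ j ∈ Finset.Ioc 0 c, ((j:ℝ) ^ 2 * bH (tN N * j))) atTop (nhds 0) := by
    have : Tendsto (fun N : ℕ => v ^ 2 * (1 / √(BN N)) ^ 2 * ∑ j ∈ Finset.Ioc 0 c, (j:ℝ) ^ 2) atTop (nhds 0) := by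
      simpa using ((tendsto_inv_sqrt_BN.pow 2).const_mul (v ^ 2)).mul_const (∑ j ∈ Finset.Ioc 0 c, (j:ℝ) ^ 2)
    apply squeeze_zero _ _ this
    · intro N
      apply mul_nonneg (by positivity)
      apply Finset.sum_nonneg
      intro j _
      have := bH_pos (tN N * j)
      positivity
    · intro N
      gcongr with j
      exact mul_le_of_le_one_right (by positivity) (bH_le_one _)
  have h3 := h1.add (((tendsto_const_nhds (x := v ^ 2 / 2) (f := atTop))).sub h2)
  rw [sub_zero] at h3
  refine h3.congr' ?_
  filter_upwards [eventually_ge_atTop 1, eventually_ge_atTop c, inv_sqrt_BN_le] with N hN hc hB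
  have ht := tN_pos hN
  have e : ∑ j ∈ Finset.Ioc 0 c, ((j:ℝ) ^ 2 * bH (tN N * j)) + ∑ j ∈ Finset.Ioc c N, ((j:ℝ) ^ 2 * bH (tN N * j)) = BN N / 2 := by
    rw [Finset.sum_Ioc_consecutive _ (Nat.zero_le c) hc]
    unfold BN
    rw [← Finset.mul_sum]; ring
  have e2 : ∑ j ∈ Finset.Ioc c N, (bH (tN N * j) * ((θ * √(tN N)) ^ 2 + (j * (v / √(BN N))) ^ 2))
      = θ ^ 2 * (tN N * ∑ j ∈ Finset.Ioc c N, bH (tN N * j)) + v ^ 2 / BN N * ∑ j ∈ Finset.Ioc c N, ((j:ℝ) ^ 2 * bH (tN N * j)) := by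
    rw [Finset.mul_sum, Finset.mul_sum, Finset.mul_sum, ← Finset.sum_add_distrib]
    apply Finset.sum_congr rfl
    intro j _
    rw [mul_pow, mul_pow, div_pow, sq_sqrt ht.le, sq_sqrt hB.1.le]
    ring
  rw [e2, eq_sub_of_add_eq' e, div_pow, sq_sqrt hB.1.le]
  have := hB.1
  field_simp

noncomputable def Gf (c N : ℕ) (φ u : ℝ) : ℂ :=
  ∏ j ∈ Finset.Ioc c N, (bch (tN N * j) (φ + j * u) * bch (tN N * j) (-φ + j * u))

lemma add_pow3 {a b : ℝ} (ha : 0 ≤ a) (hb : 0 ≤ b) : (a + b) ^ 3 ≤ 8 * (a ^ 3 + b ^ 3) := by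
  have := add_pow_le ha hb 3
  norm_num at this
  have : 0 ≤ a ^ 3 := by positivity
  have : 0 ≤ b ^ 3 := by positivity
  linarith
lemma add_pow4 {a b : ℝ} (ha : 0 ≤ a) (hb : 0 ≤ b) : (a + b) ^ 4 ≤ 8 * (a ^ 4 + b ^ 4) := by
  have := add_pow_le ha hb 4
  norm_num at this
  linarith

lemma approx_bound (c : ℕ) {N : ℕ} (hN : 1 ≤ N) (φ u : ℝ) :
    ‖∏ j ∈ Finset.Ioc c N, (bch (tN N * j) (φ + j * u) * bch (tN N * j) (-φ + j * u) *
        Complex.exp (((-(u * (2 * (j * bP (tN N * j)))) : ℝ) : ℂ) * Complex.I))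
      - ∏ j ∈ Finset.Ioc c N, ((rexp (-(bH (tN N * j) * (φ ^ 2 + (j * u) ^ 2))) : ℝ) : ℂ)‖
    ≤ 64 * (|φ| ^ 3 * (2 / tN N) + |u| ^ 3 * (6 * (2 / tN N) ^ 4) + |φ| ^ 4 * (2 / tN N) + |u| ^ 4 * (24 * (2 / tN N) ^ 5)) := by
  have ht := tN_pos hN
  set t := tN N
  refine (norm_prod_sub_prod_le' _ _ _ ?_ ?_).trans ?_
  · intro j
    rw [norm_mul, Complex.norm_exp_ofReal_mul_I, mul_one, norm_mul]
    exact mul_le_one₀ (norm_bch_le_one _ _) (norm_nonneg _) (norm_bch_le_one _ _)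
  · intro j
    rw [Complex.norm_real, Real.norm_eq_abs, abs_of_pos (exp_pos _), exp_le_one_iff]
    have := bH_pos (t * j)
    have : 0 ≤ bH (t * j) * (φ ^ 2 + (j * u) ^ 2) := by positivity
    linarith
  have hj : ∀ j ∈ Finset.Ioc c N, ‖(bch (t * j) (φ + j * u) * bch (t * j) (-φ + j * u) *
        Complex.exp (((-(u * (2 * (j * bP (t * j)))) : ℝ) : ℂ) * Complex.I))
      - ((rexp (-(bH (t * j) * (φ ^ 2 + (j * u) ^ 2))) : ℝ) : ℂ)‖ ≤
      64 * (|φ| ^ 3 * ((j:ℝ) ^ 0 * rexp (-(t * j))) + |u| ^ 3 * ((j:ℝ) ^ 3 * rexp (-(t * j)))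
        + |φ| ^ 4 * ((j:ℝ) ^ 0 * rexp (-(t * j))) + |u| ^ 4 * ((j:ℝ) ^ 4 * rexp (-(t * j)))) := by
    intro j _
    have a1 := bch_approx (t * j) (φ + j * u)
    have a2 := bch_approx (t * j) (-φ + j * u)
    set X1 := bch (t * j) (φ + j * u) * Complex.exp (((-(bP (t * j) * (φ + j * u)) : ℝ) : ℂ) * Complex.I) with hX1
    set X2 := bch (t * j) (-φ + j * u) * Complex.exp (((-(bP (t * j) * (-φ + j * u)) : ℝ) : ℂ) * Complex.I) with hX2
    set Y1 : ℂ := ((rexp (-(bH (t * j) * (φ + j * u) ^ 2 / 2)) : ℝ) : ℂ) with hY1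
    set Y2 : ℂ := ((rexp (-(bH (t * j) * (-φ + j * u) ^ 2 / 2)) : ℝ) : ℂ) with hY2
    have eX : bch (t * j) (φ + j * u) * bch (t * j) (-φ + j * u) *
        Complex.exp (((-(u * (2 * (j * bP (t * j)))) : ℝ) : ℂ) * Complex.I) = X1 * X2 := by
      have : Complex.exp (((-(u * (2 * (j * bP (t * j)))) : ℝ) : ℂ) * Complex.I) =
        Complex.exp (((-(bP (t * j) * (φ + j * u)) : ℝ) : ℂ) * Complex.I) *
        Complex.exp (((-(bP (t * j) * (-φ + j * u)) : ℝ) : ℂ) * Complex.I) := by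
        rw [← Complex.exp_add]; congr 1; push_cast; ring
      rw [this, hX1, hX2]; ring
    have eY : ((rexp (-(bH (t * j) * (φ ^ 2 + (j * u) ^ 2))) : ℝ) : ℂ) = Y1 * Y2 := by
      rw [hY1, hY2, ← Complex.ofReal_mul, ← Real.exp_add]
      congr 2; ring
    rw [eX, eY]
    have nX2 : ‖X2‖ ≤ 1 := by
      rw [hX2, norm_mul, Complex.norm_exp_ofReal_mul_I, mul_one]
      exact norm_bch_le_one _ _
    have nY1 : ‖Y1‖ ≤ 1 := by
      rw [hY1, Complex.norm_real, Real.norm_eq_abs, abs_of_pos (exp_pos _), exp_le_one_iff]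
      have := bH_pos (t * j)
      have : 0 ≤ bH (t * j) * (φ + j * u) ^ 2 / 2 := by positivity
      linarith
    have e : X1 * X2 - Y1 * Y2 = (X1 - Y1) * X2 + Y1 * (X2 - Y2) := by ring
    rw [e]
    refine (norm_add_le _ _).trans ?_
    rw [norm_mul (X1 - Y1) X2, norm_mul Y1]
    have b1 : ‖X1 - Y1‖ * ‖X2‖ ≤ ‖X1 - Y1‖ := mul_le_of_le_one_right (norm_nonneg _) nX2
    have b2 : ‖Y1‖ * ‖X2 - Y2‖ ≤ ‖X2 - Y2‖ := mul_le_of_le_one_left (norm_nonneg _) nY1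
    have w1 : |φ + j * u| ≤ |φ| + j * |u| := by
      refine (abs_add_le _ _).trans ?_
      rw [abs_mul, Nat.abs_cast]
    have w2 : |-φ + j * u| ≤ |φ| + j * |u| := by
      refine (abs_add_le _ _).trans ?_
      rw [abs_mul, Nat.abs_cast, abs_neg]
    set ω := |φ| + j * |u| with hω
    have r0 := exp_pos (-(t * j))
    have c1 : ‖X1 - Y1‖ ≤ 4 * (rexp (-(t * j)) * (ω ^ 3 + ω ^ 4)) := a1.trans (by gcongr)
    have c2 : ‖X2 - Y2‖ ≤ 4 * (rexp (-(t * j)) * (ω ^ 3 + ω ^ 4)) := a2.trans (by gcongr)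
    have d3 : ω ^ 3 ≤ 8 * (|φ| ^ 3 + (j * |u|) ^ 3) := add_pow3 (abs_nonneg _) (by positivity)
    have d4 : ω ^ 4 ≤ 8 * (|φ| ^ 4 + (j * |u|) ^ 4) := add_pow4 (abs_nonneg _) (by positivity)
    calc _ ≤ 8 * (rexp (-(t * j)) * (ω ^ 3 + ω ^ 4)) := by linarith
      _ ≤ 8 * (rexp (-(t * j)) * (8 * (|φ| ^ 3 + (j * |u|) ^ 3) + 8 * (|φ| ^ 4 + (j * |u|) ^ 4))) := by gcongr
      _ = _ := by ring
  refine (Finset.sum_le_sum hj).trans ?_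
  rw [← Finset.mul_sum, Finset.sum_add_distrib, Finset.sum_add_distrib, Finset.sum_add_distrib,
    ← Finset.mul_sum, ← Finset.mul_sum, ← Finset.mul_sum, ← Finset.mul_sum]
  have hs : ∀ j ∈ Finset.Ioc c N, 1 ≤ j := by intro j hj; rw [Finset.mem_Ioc] at hj; omega
  have s0 := sum_pow_exp_le 0 ht _ hs
  have s3 := sum_pow_exp_le 3 ht _ hs
  have s4 := sum_pow_exp_le 4 ht _ hs
  have f3 : ((3:ℕ).factorial : ℝ) = 6 := by norm_num [Nat.factorial]
  have f4 : ((4:ℕ).factorial : ℝ) = 24 := by norm_num [Nat.factorial]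
  rw [f3] at s3
  rw [f4] at s4
  rw [Nat.factorial_zero, Nat.cast_one, one_mul, zero_add, pow_one] at s0
  gcongr

lemma ptwise (c d : ℕ) (θ v : ℝ) :
    Tendsto (fun N : ℕ => Complex.exp (((v / √(BN N) * (d - N) : ℝ) : ℂ) * Complex.I) *
        Gf c N (θ * √(tN N)) (v / √(BN N))) atTop (nhds ((rexp (-(θ ^ 2 / 2 + v ^ 2 / 2)) : ℝ) : ℂ)) := by
  have hE : Tendsto (fun N : ℕ => ∏ j ∈ Finset.Ioc c N,
      ((rexp (-(bH (tN N * j) * ((θ * √(tN N)) ^ 2 + (j * (v / √(BN N))) ^ 2))) : ℝ) : ℂ)) atTop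
      (nhds ((rexp (-(θ ^ 2 / 2 + v ^ 2 / 2)) : ℝ) : ℂ)) := by
    have h1 := (Real.continuous_exp.tendsto _).comp (quad_tendsto c θ v).neg
    refine ((Complex.continuous_ofReal.tendsto _).comp h1).congr fun N => ?_
    simp only [Function.comp]
    rw [← Complex.ofReal_prod, ← Real.exp_sum, Finset.sum_neg_distrib]
  have hdiff : Tendsto (fun N : ℕ => ∏ j ∈ Finset.Ioc c N, (bch (tN N * j) (θ * √(tN N) + j * (v / √(BN N))) *
        bch (tN N * j) (-(θ * √(tN N)) + j * (v / √(BN N))) *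
        Complex.exp (((-(v / √(BN N) * (2 * (j * bP (tN N * j)))) : ℝ) : ℂ) * Complex.I))
      - ∏ j ∈ Finset.Ioc c N, ((rexp (-(bH (tN N * j) * ((θ * √(tN N)) ^ 2 + (j * (v / √(BN N))) ^ 2))) : ℝ) : ℂ))
      atTop (nhds 0) := by
    have hb : Tendsto (fun N : ℕ => 64 * (|θ| ^ 3 * 2 * √(tN N) + (20 * |v|) ^ 3 * 96 * √(tN N) + |θ| ^ 4 * 2 * √(tN N) ^ 2
        + (20 * |v|) ^ 4 * 768 * √(tN N) ^ 2)) atTop (nhds 0) := by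
      have a := tendsto_sqrt_tN
      have b := tendsto_sqrt_tN.pow 2
      simpa using ((((a.const_mul (|θ| ^ 3 * 2)).add (a.const_mul ((20 * |v|) ^ 3 * 96))).add
        (b.const_mul (|θ| ^ 4 * 2))).add (b.const_mul ((20 * |v|) ^ 4 * 768))).const_mul 64
    apply squeeze_zero_norm' _ hb
    filter_upwards [eventually_ge_atTop 1, inv_sqrt_BN_le] with N hN hB
    refine (approx_bound c hN _ _).trans ?_
    have ht := tN_pos hN
    have hs : 0 < √(tN N) := Real.sqrt_pos.2 ht
    have ts : tN N = √(tN N) ^ 2 := (sq_sqrt ht.le).symm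
    have hu : |v / √(BN N)| ≤ 20 * |v| * √(tN N) ^ 3 := by
      rw [abs_div, abs_of_nonneg (Real.sqrt_nonneg (BN N))]
      calc |v| / √(BN N) = |v| * (1 / √(BN N)) := by ring
        _ ≤ |v| * (20 * √(tN N) ^ 3) := by gcongr; exact hB.2
        _ = _ := by ring
    have hφ : |θ * √(tN N)| = |θ| * √(tN N) := by rw [abs_mul, abs_of_pos hs]
    rw [hφ]
    generalize √(tN N) = s at *
    rw [ts]
    calc _ ≤ 64 * ((|θ| * s) ^ 3 * (2 / s ^ 2) + (20 * |v| * s ^ 3) ^ 3 * (6 * (2 / s ^ 2) ^ 4) +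
          (|θ| * s) ^ 4 * (2 / s ^ 2) + (20 * |v| * s ^ 3) ^ 4 * (24 * (2 / s ^ 2) ^ 5)) := by
          gcongr
      _ = _ := by field_simp; ring
  have hA := hdiff.add hE
  simp only [sub_add_cancel, zero_add] at hA
  have hS : Tendsto (fun N : ℕ => Complex.exp (((v / √(BN N) * (d - N + ∑ j ∈ Finset.Ioc c N, 2 * ((j:ℝ) * bP (tN N * j))) : ℝ) : ℂ) * Complex.I)) atTop (nhds 1) := by
    have hc : Continuous (fun x : ℝ => Complex.exp ((x : ℂ) * Complex.I)) := by fun_prop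
    have := (hc.tendsto 0).comp (shift_tendsto c d v)
    simp only [Complex.ofReal_zero, zero_mul, Complex.exp_zero] at this
    exact this
  have hF := hS.mul hA
  rw [one_mul] at hF
  refine hF.congr fun N => ?_
  rw [Finset.prod_mul_distrib, ← Complex.exp_sum]
  unfold Gf
  rw [mul_comm (∏ j ∈ Finset.Ioc c N, _) (Complex.exp _), ← mul_assoc, ← Complex.exp_add]
  congr 2
  rw [← Finset.sum_mul, ← add_mul]
  congr 1
  rw [← Complex.ofReal_sum, ← Complex.ofReal_add, Finset.sum_neg_distrib, mul_add, Finset.mul_sum]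
  congr 1
  ring

lemma integral_expI (k : ℤ) :
    ∫ u in (-π)..π, Complex.exp (((u * k : ℝ) : ℂ) * Complex.I) = if k = 0 then 2 * π else 0 := by
  split_ifs with h
  · subst h; simp; ring
  · have hc : ((k:ℂ) * Complex.I) ≠ 0 := by simp [h]
    have e : ∀ u : ℝ, Complex.exp (((u * k : ℝ) : ℂ) * Complex.I) = Complex.exp (((k:ℂ) * Complex.I) * u) := by
      intro u; congr 1; push_cast; ring
    simp_rw [e]
    rw [integral_exp_mul_complex hc]
    have e1 : Complex.exp ((k:ℂ) * Complex.I * ((π:ℝ):ℂ)) = Complex.exp ((k:ℂ) * Complex.I * ((-π:ℝ):ℂ)) := by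
      rw [Complex.exp_eq_exp_iff_exists_int]
      exact ⟨k, by push_cast; ring⟩
    rw [e1]; simp

noncomputable def pairs (c d N : ℕ) : Finset (Finset ℕ × Finset ℕ) :=
  ((Finset.Ioc c N).powerset ×ˢ (Finset.Ioc c N).powerset).filter
    (fun p => ∑ j ∈ p.1, j + ∑ j ∈ p.2, j + d = N)

noncomputable def Xc (c d N : ℕ) (φ : ℝ) : ℂ :=
  ∑ p ∈ pairs c d N, Complex.exp (((φ * ((p.2.card : ℝ) - p.1.card) : ℝ) : ℂ) * Complex.I)

lemma prod_bch (s : Finset ℕ) (t φ u : ℝ) :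
    ∏ j ∈ s, (((1 + rexp (-(t * j)) : ℝ) : ℂ) * bch (t * j) (φ + j * u)) =
      ∑ A ∈ s.powerset, ((rexp (-(t * (∑ j ∈ A, j : ℕ))) : ℝ) : ℂ) *
        Complex.exp (((φ * A.card + u * (∑ j ∈ A, j : ℕ) : ℝ) : ℂ) * Complex.I) := by
  have e : ∀ j ∈ s, (((1 + rexp (-(t * j)) : ℝ) : ℂ) * bch (t * j) (φ + j * u))
      = 1 + ((rexp (-(t * j)) : ℝ) : ℂ) * Complex.exp (((φ + j * u : ℝ) : ℂ) * Complex.I) := by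
    intro j _
    have : (1 + (rexp (-(t * j)) : ℂ)) ≠ 0 := by
      have : (0:ℝ) < 1 + rexp (-(t * j)) := by positivity
      exact_mod_cast this.ne'
    unfold bch
    rw [Complex.ofReal_add, Complex.ofReal_one, mul_div_cancel₀ _ this]
  rw [Finset.prod_congr rfl e, Finset.prod_one_add]
  apply Finset.sum_congr rfl
  intro A _
  rw [Finset.prod_mul_distrib, ← Complex.ofReal_prod, ← Real.exp_sum, ← Complex.exp_sum, ← Finset.sum_mul,
    ← Complex.ofReal_sum, Finset.sum_add_distrib, Finset.sum_const, ← Finset.sum_mul, Finset.sum_neg_distrib,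
    ← Finset.mul_sum]
  push_cast
  simp only [nsmul_eq_mul]
  congr 2
  ring_nf

lemma Xc_eq (c d N : ℕ) (φ : ℝ) :
    Xc c d N φ = ((rexp (-(tN N * (d - N))) * (∏ j ∈ Finset.Ioc c N, (1 + rexp (-(tN N * j)))) ^ 2 / (2 * π) : ℝ) : ℂ) *
      ∫ u in (-π)..π, Complex.exp (((u * (d - N) : ℝ) : ℂ) * Complex.I) * Gf c N φ u := by
  set t := tN N with ht
  set s := Finset.Ioc c N with hs
  set W : ℝ := ∏ j ∈ s, (1 + rexp (-(t * j))) with hW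
  have hG : ∀ u : ℝ, ((W ^ 2 : ℝ) : ℂ) * Gf c N φ u = ∑ p ∈ s.powerset ×ˢ s.powerset,
      ((rexp (-(t * ((∑ j ∈ p.1, j + ∑ j ∈ p.2, j : ℕ)))) : ℝ) : ℂ) *
        (Complex.exp (((φ * ((p.2.card : ℝ) - p.1.card) : ℝ) : ℂ) * Complex.I) *
        Complex.exp (((u * ((∑ j ∈ p.1, j + ∑ j ∈ p.2, j : ℕ) : ℝ) : ℝ) : ℂ) * Complex.I)) := by
    intro u
    unfold Gf
    rw [Finset.prod_mul_distrib, pow_two, Complex.ofReal_mul, hW, Complex.ofReal_prod]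
    rw [show ∀ a b x y : ℂ, a * b * (x * y) = (b * y) * (a * x) from fun a b x y => by ring]
    rw [← Finset.prod_mul_distrib, ← Finset.prod_mul_distrib, prod_bch, prod_bch, Finset.sum_mul_sum,
      Finset.sum_product]
    apply Finset.sum_congr rfl
    intro A _
    apply Finset.sum_congr rfl
    intro B _
    rw [show ∀ a b x y : ℂ, a * b * (x * y) = (a * x) * (b * y) from fun a b x y => by ring]
    rw [← Complex.exp_add, ← Complex.exp_add, ← Complex.ofReal_mul, ← Real.exp_add]
    congr 2
    · push_cast; ring_nf
    · push_cast; ring_nf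
  have e1 : ((rexp (-(t * (d - N))) * W ^ 2 / (2 * π) : ℝ) : ℂ) *
      ∫ u in (-π)..π, Complex.exp (((u * (d - N) : ℝ) : ℂ) * Complex.I) * Gf c N φ u
      = ((1 / (2 * π) : ℝ) : ℂ) * ∫ u in (-π)..π, ∑ p ∈ s.powerset ×ˢ s.powerset,
        (((rexp (-(t * ((∑ j ∈ p.1, j + ∑ j ∈ p.2, j + d - N : ℤ) : ℝ))) : ℝ) : ℂ) *
        Complex.exp (((φ * ((p.2.card : ℝ) - p.1.card) : ℝ) : ℂ) * Complex.I)) *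
        Complex.exp (((u * ((∑ j ∈ p.1, j + ∑ j ∈ p.2, j + d - N : ℤ) : ℝ) : ℝ) : ℂ) * Complex.I) := by
    rw [show ((rexp (-(t * (d - N))) * W ^ 2 / (2 * π) : ℝ) : ℂ) = ((1 / (2 * π) : ℝ) : ℂ) * (((rexp (-(t * (d - N))) : ℝ) : ℂ) * ((W ^ 2 : ℝ) : ℂ)) by
      push_cast; ring]
    rw [mul_assoc, ← intervalIntegral.integral_const_mul]
    congr 1
    apply intervalIntegral.integral_congr
    intro u _
    simp only
    rw [show ∀ a b x y : ℂ, a * b * (x * y) = (a * x) * (b * y) from fun a b x y => by ring, hG, Finset.mul_sum]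
    apply Finset.sum_congr rfl
    intro p _
    rw [show ∀ a b x y z : ℂ, a * b * (x * (y * z)) = ((a * x) * y) * (b * z) from fun a b x y z => by ring]
    rw [← Complex.exp_add, ← Complex.ofReal_mul, ← Real.exp_add]
    congr 3
    · congr 2; push_cast; ring
    · push_cast; ring
  rw [e1, intervalIntegral.integral_finsetSum]
  · simp_rw [intervalIntegral.integral_const_mul, integral_expI]
    unfold Xc pairs
    rw [Finset.sum_filter, Finset.mul_sum]
    apply Finset.sum_congr rfl
    intro p _
    have hiff : ((((∑ j ∈ p.1, j : ℕ) : ℤ)) + ((∑ j ∈ p.2, j : ℕ) : ℤ) + d - N = 0) ↔ ∑ j ∈ p.1, j + ∑ j ∈ p.2, j + d = N := by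
      constructor <;> intro h <;> omega
    by_cases h : ∑ j ∈ p.1, j + ∑ j ∈ p.2, j + d = N
    · rw [if_pos h, if_pos (hiff.2 h), hiff.2 h]
      have : (π:ℂ) ≠ 0 := by exact_mod_cast pi_ne_zero
      push_cast
      simp
      field_simp
    · rw [if_neg h, if_neg (fun h' => h (hiff.1 h'))]
      simp
  · intro p _
    apply Continuous.intervalIntegrable
    fun_prop

lemma Xc_eq2 (c d N : ℕ) (φ : ℝ) (hB : 0 < BN N) :
    Xc c d N φ = ((rexp (-(tN N * (d - N))) * (∏ j ∈ Finset.Ioc c N, (1 + rexp (-(tN N * j)))) ^ 2 / (2 * π * √(BN N)) : ℝ) : ℂ) *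
      ∫ v : ℝ, (Set.Ioc (-(π * √(BN N))) (π * √(BN N))).indicator (fun v : ℝ =>
        Complex.exp (((v / √(BN N) * (d - N) : ℝ) : ℂ) * Complex.I) * Gf c N φ (v / √(BN N))) v := by
  have sB : 0 < √(BN N) := Real.sqrt_pos.2 hB
  rw [MeasureTheory.integral_indicator measurableSet_Ioc, ← intervalIntegral.integral_of_le (by
    have : 0 < π * √(BN N) := by positivity
    linarith)]
  rw [intervalIntegral.integral_comp_div (fun u : ℝ => Complex.exp (((u * (d - N) : ℝ) : ℂ) * Complex.I) * Gf c N φ u) sB.ne']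
  rw [neg_div, mul_div_cancel_right₀ _ sB.ne', Xc_eq, Complex.real_smul, ← mul_assoc, ← Complex.ofReal_mul]
  congr 2
  field_simp

lemma continuous_Gf (c N : ℕ) (φ : ℝ) : Continuous (Gf c N φ) := by
  unfold Gf
  simp_rw [bch_eq]
  fun_prop

lemma integral_tendsto (c d : ℕ) (θ : ℝ) :
    Tendsto (fun N : ℕ => ∫ v : ℝ, (Set.Ioc (-(π * √(BN N))) (π * √(BN N))).indicator (fun v : ℝ =>
        Complex.exp (((v / √(BN N) * (d - N) : ℝ) : ℂ) * Complex.I) * Gf c N (θ * √(tN N)) (v / √(BN N))) v)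
      atTop (nhds ((rexp (-θ ^ 2 / 2) * √(2 * π) : ℝ) : ℂ)) := by
  obtain ⟨C, hC⟩ := dom c
  have hlim : ∫ v : ℝ, ((rexp (-(θ ^ 2 / 2 + v ^ 2 / 2)) : ℝ) : ℂ) = ((rexp (-θ ^ 2 / 2) * √(2 * π) : ℝ) : ℂ) := by
    rw [integral_complex_ofReal]
    congr 1
    have e : ∀ v : ℝ, rexp (-(θ ^ 2 / 2 + v ^ 2 / 2)) = rexp (-θ ^ 2 / 2) * rexp (-(1/2) * v ^ 2) := by
      intro v; rw [← Real.exp_add]; congr 1; ring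
    simp_rw [e]
    rw [MeasureTheory.integral_const_mul, integral_gaussian]
    congr 2; field_simp
  rw [← hlim]
  have hcos : ∀ᶠ N in atTop, 1 / 2 ≤ cos (θ * √(tN N)) := by
    have h : Tendsto (fun N => cos (θ * √(tN N))) atTop (nhds 1) := by
      have := (Real.continuous_cos.tendsto 0).comp (g := cos) (f := fun N => θ * √(tN N)) (x := atTop) (by
        simpa using tendsto_sqrt_tN.const_mul θ)
      rw [cos_zero] at this
      exact this
    exact h.eventually_const_le (by norm_num)
  apply MeasureTheory.tendsto_integral_filter_of_dominated_convergence (fun v => |C| * (1 + v ^ 2)⁻¹)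
  · refine Eventually.of_forall fun N => ?_
    apply Measurable.aestronglyMeasurable
    apply Measurable.indicator _ measurableSet_Ioc
    apply Continuous.measurable
    apply Continuous.mul (by fun_prop)
    exact (continuous_Gf _ _ _).comp (by fun_prop)
  · filter_upwards [hC, hcos] with N h1 h2
    refine Eventually.of_forall fun v => ?_
    by_cases hv : v ∈ Set.Ioc (-(π * √(BN N))) (π * √(BN N))
    · rw [Set.indicator_of_mem hv, norm_mul, Complex.norm_exp_ofReal_mul_I, one_mul]
      refine (h1 _ h2 v (abs_le.2 ⟨hv.1.le, hv.2⟩)).trans ?_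
      gcongr
      exact le_abs_self C
    · rw [Set.indicator_of_notMem hv, norm_zero]
      positivity
  · exact integrable_inv_one_add_sq.const_mul _
  · refine Eventually.of_forall fun v => ?_
    refine (ptwise c d θ v).congr' ?_
    have hS : Tendsto (fun N => |v| * (1 / √(BN N))) atTop (nhds 0) := by
      simpa using tendsto_inv_sqrt_BN.const_mul |v|
    filter_upwards [inv_sqrt_BN_le, hS.eventually_lt_const (show (0:ℝ) < 1 by norm_num)] with N h1 h2
    have sB : 0 < √(BN N) := Real.sqrt_pos.2 h1.1
    rw [mul_one_div, div_lt_one sB] at h2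
    rw [Set.indicator_of_mem]
    have := abs_lt.1 h2
    have := pi_gt_three
    constructor <;> nlinarith

noncomputable def ZN (N : ℕ) : ℝ :=
  rexp (tN N * N) * (∏ j ∈ Finset.Ioc 0 N, (1 + rexp (-(tN N * j)))) ^ 2 * √(2 * π) / (2 * π * √(BN N))

lemma Xc_tendsto (c d : ℕ) (θ : ℝ) :
    Tendsto (fun N : ℕ => Xc c d N (θ * √(tN N)) / (ZN N : ℂ)) atTop
      (nhds (((1 / 4) ^ c * rexp (-θ ^ 2 / 2) : ℝ) : ℂ)) := by
  have h1 : Tendsto (fun N : ℕ => rexp (-(tN N * d)) / (∏ j ∈ Finset.Ioc 0 c, (1 + rexp (-(tN N * j)))) ^ 2 / √(2 * π)) atTop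
      (nhds ((1 / 4) ^ c / √(2 * π))) := by
    have hcont : Continuous (fun t : ℝ => rexp (-(t * d)) / (∏ j ∈ Finset.Ioc 0 c, (1 + rexp (-(t * j)))) ^ 2 / √(2 * π)) := by
      apply Continuous.div_const
      apply Continuous.div (by fun_prop) (by fun_prop)
      intro t
      have : 0 < ∏ j ∈ Finset.Ioc 0 c, (1 + rexp (-(t * j))) := Finset.prod_pos fun j _ => by positivity
      positivity
    have := (hcont.tendsto 0).comp tendsto_tN
    have e : rexp (-((0:ℝ) * d)) / (∏ j ∈ Finset.Ioc 0 c, (1 + rexp (-((0:ℝ) * j)))) ^ 2 / √(2 * π) = (1 / 4) ^ c / √(2 * π) := by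
      simp
      rw [← pow_mul, mul_comm c 2, pow_mul]
      norm_num
    rw [e] at this
    exact this
  have h2 := ((Complex.continuous_ofReal.tendsto _).comp h1).mul (integral_tendsto c d θ)
  have e : (((1 / 4) ^ c / √(2 * π) : ℝ) : ℂ) * ((rexp (-θ ^ 2 / 2) * √(2 * π) : ℝ) : ℂ) = (((1 / 4) ^ c * rexp (-θ ^ 2 / 2) : ℝ) : ℂ) := by
    rw [← Complex.ofReal_mul]
    congr 1
    have : √(2 * π) ≠ 0 := by positivity
    field_simp
  rw [e] at h2
  refine h2.congr' ?_
  filter_upwards [inv_sqrt_BN_le, eventually_ge_atTop c] with N hB hc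
  rw [Xc_eq2 c d N _ hB.1, mul_div_right_comm, ← Complex.ofReal_div]
  congr 1
  simp only [Function.comp]
  congr 1
  unfold ZN
  have sB : 0 < √(BN N) := Real.sqrt_pos.2 hB.1
  rw [← Finset.prod_Ioc_consecutive _ (Nat.zero_le c) hc]
  have p1 : 0 < ∏ j ∈ Finset.Ioc 0 c, (1 + rexp (-(tN N * j))) := Finset.prod_pos fun j _ => by positivity
  have p2 : 0 < ∏ j ∈ Finset.Ioc c N, (1 + rexp (-(tN N * j))) := Finset.prod_pos fun j _ => by positivity
  have ee : rexp (-(tN N * (d - N))) = rexp (-(tN N * d)) * rexp (tN N * N) := by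
    rw [← Real.exp_add]; congr 1; ring
  rw [ee]
  have : √(2 * π) ≠ 0 := by positivity
  have := exp_pos (tN N * N)
  field_simp

lemma isSCC_iff (N : ℕ) (l : List ℕ) (k : ℕ) :
    IsSCC N l k ↔ 1 ≤ k ∧ k ≤ l.length ∧ l.sum = N ∧ (l.take k).Pairwise (fun a b => b < a) ∧
      (l.drop (k - 1)).Pairwise (fun a b => a < b) := by
  unfold IsSCC
  refine and_congr_right fun h1 => and_congr_right fun h2 => and_congr_right fun _ => and_congr ?_ ?_
  · rw [List.pairwise_iff_getElem]
    constructor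
    · intro h i j hi hj hij
      simp only [List.length_take] at hi hj
      simp only [List.getElem_take]
      exact h ⟨i, by omega⟩ ⟨j, by omega⟩ hij (by simp; omega)
    · intro h i j hij hj
      have := h i j (by simp; omega) (by simp; omega) hij
      simpa using this
  · rw [List.pairwise_iff_getElem]
    constructor
    · intro h i j hi hj hij
      simp only [List.length_drop] at hi hj
      simp only [List.getElem_drop]
      exact h ⟨k - 1 + i, by omega⟩ ⟨k - 1 + j, by omega⟩ (by simp) (by simp; omega)
    · intro h i j hki hij
      have := h (i - (k - 1)) (j - (k - 1)) (by simp; omega) (by simp; omega) (by omega)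
      simp only [List.getElem_drop] at this
      have e1 : k - 1 + (i - (k - 1)) = (i:ℕ) := by omega
      have e2 : k - 1 + (j - (k - 1)) = (j:ℕ) := by omega
      simpa [e1, e2] using this

noncomputable def mkS (q : (_ : ℕ) × (Finset ℕ × Finset ℕ)) : List ℕ × ℕ :=
  (q.2.1.sort (fun a b => b ≤ a) ++ q.1 :: q.2.2.sort (fun a b => a ≤ b), q.2.1.card + 1)

noncomputable def TS (N : ℕ) : Finset ((_ : ℕ) × (Finset ℕ × Finset ℕ)) :=
  (Finset.range (N + 1)).sigma (fun c => pairs c c N)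

lemma mem_TS (N : ℕ) (q : (_ : ℕ) × (Finset ℕ × Finset ℕ)) :
    q ∈ TS N ↔ (∀ j ∈ q.2.1, q.1 < j) ∧ (∀ j ∈ q.2.2, q.1 < j) ∧
      ∑ j ∈ q.2.1, j + ∑ j ∈ q.2.2, j + q.1 = N := by
  unfold TS pairs
  simp only [Finset.mem_sigma, Finset.mem_range, Finset.mem_filter, Finset.mem_product, Finset.mem_powerset]
  constructor
  · rintro ⟨h1, ⟨h2, h3⟩, h4⟩
    exact ⟨fun j hj => (Finset.mem_Ioc.1 (h2 hj)).1, fun j hj => (Finset.mem_Ioc.1 (h3 hj)).1, h4⟩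
  · rintro ⟨h1, h2, h3⟩
    refine ⟨by omega, ⟨fun j hj => Finset.mem_Ioc.2 ⟨h1 j hj, ?_⟩, fun j hj => Finset.mem_Ioc.2 ⟨h2 j hj, ?_⟩⟩, h3⟩
    · have := Finset.single_le_sum (f := fun j : ℕ => j) (fun _ _ => Nat.zero_le _) hj
      omega
    · have := Finset.single_le_sum (f := fun j : ℕ => j) (fun _ _ => Nat.zero_le _) hj
      omega

lemma sort_sum (A : Finset ℕ) (r : ℕ → ℕ → Prop) [DecidableRel r] [IsTrans ℕ r] [Std.Antisymm r] [Std.Total r] :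
    (A.sort r).sum = ∑ j ∈ A, j := by
  have := Finset.sort_eq A r
  rw [← Multiset.sum_coe, this]
  rw [Finset.sum, Multiset.map_id']

lemma mkS_isSCC (N : ℕ) (q) (hq : q ∈ TS N) : IsSCC N (mkS q).1 (mkS q).2 := by
  obtain ⟨h1, h2, h3⟩ := (mem_TS N q).1 hq
  rw [isSCC_iff]
  unfold mkS
  refine ⟨by simp, by simp, ?_, ?_, ?_⟩
  · simp only [List.sum_append, List.sum_cons, sort_sum]; omega
  · have e : (q.2.1.sort (fun a b => b ≤ a) ++ q.1 :: q.2.2.sort (fun a b => a ≤ b)).take (q.2.1.card + 1)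
        = q.2.1.sort (fun a b => b ≤ a) ++ [q.1] := by
      rw [List.take_append]; simp
    simp only [e]
    rw [List.pairwise_append]
    refine ⟨?_, by simp, by simpa using h1⟩
    have ha := Finset.pairwise_sort q.2.1 (fun a b => b ≤ a)
    have hb := Finset.sort_nodup q.2.1 (fun a b => b ≤ a)
    exact (ha.and hb).imp fun h => lt_of_le_of_ne h.1 h.2.symm
  · have e : (q.2.1.sort (fun a b => b ≤ a) ++ q.1 :: q.2.2.sort (fun a b => a ≤ b)).drop (q.2.1.card + 1 - 1)
        = q.1 :: q.2.2.sort (fun a b => a ≤ b) := by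
      rw [List.drop_append]; simp
    simp only [e]
    rw [List.pairwise_cons]
    refine ⟨by simpa using h2, ?_⟩
    have ha := Finset.pairwise_sort q.2.2 (fun a b => a ≤ b)
    have hb := Finset.sort_nodup q.2.2 (fun a b => a ≤ b)
    exact (ha.and hb).imp fun h => lt_of_le_of_ne h.1 h.2

lemma mkS_inj : Function.Injective mkS := by
  rintro ⟨c, A, B⟩ ⟨c', A', B'⟩ h
  unfold mkS at h
  simp only [Prod.mk.injEq] at h
  obtain ⟨h1, h2⟩ := h
  obtain ⟨h3, h4⟩ := List.append_inj h1 (by simpa using h2)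
  rw [List.cons.injEq] at h4
  have hA : A = A' := by
    rw [← Finset.sort_toFinset (s := A) (fun a b => b ≤ a), h3, Finset.sort_toFinset]
  have hB : B = B' := by
    rw [← Finset.sort_toFinset (s := B) (fun a b => a ≤ b), h4.2, Finset.sort_toFinset]
  rw [hA, hB, h4.1]

lemma mkS_surj (N : ℕ) (p : List ℕ × ℕ) (hp : IsSCC N p.1 p.2) : ∃ q ∈ TS N, mkS q = p := by
  obtain ⟨l, k⟩ := p
  simp only at hp
  obtain ⟨h1, h2, h3, h4, h5⟩ := (isSCC_iff _ _ _).1 hp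
  obtain ⟨m, rfl⟩ : ∃ m, k = m + 1 := ⟨k - 1, by omega⟩
  have hm : m < l.length := by omega
  obtain ⟨l1, c, l2, rfl, rfl⟩ : ∃ l1 c l2, l = l1 ++ c :: l2 ∧ m = l1.length :=
    ⟨l.take m, l[m], l.drop (m + 1), by simp, by simp; omega⟩
  have e1 : (l1 ++ c :: l2).take (l1.length + 1) = l1 ++ [c] := by rw [List.take_append]; simp
  have e2 : (l1 ++ c :: l2).drop (l1.length + 1 - 1) = c :: l2 := by simp
  rw [e1, List.pairwise_append] at h4
  rw [e2, List.pairwise_cons] at h5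
  have n1 : l1.Nodup := h4.1.imp fun h => h.ne'
  have n2 : l2.Nodup := h5.2.imp fun h => h.ne
  have s1 : l1.toFinset.sort (fun a b => b ≤ a) = l1 :=
    (List.toFinset_sort _ n1).2 (h4.1.imp fun h => h.le)
  have s2 : l2.toFinset.sort (fun a b => a ≤ b) = l2 :=
    (List.toFinset_sort _ n2).2 (h5.2.imp fun h => h.le)
  refine ⟨⟨c, l1.toFinset, l2.toFinset⟩, ?_, ?_⟩
  · rw [mem_TS]
    refine ⟨by simpa using h4.2.2, by simpa using h5.1, ?_⟩
    rw [← sort_sum _ (fun a b => b ≤ a), ← sort_sum l2.toFinset (fun a b => a ≤ b)]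
    simp only [s1, s2]
    simp at h3
    omega
  · unfold mkS
    simp only [s1, s2, List.toFinset_card_of_nodup n1]

lemma mkS_rank (q) : sccRank (mkS q).1 (mkS q).2 = (q.2.2.card : ℤ) - q.2.1.card := by
  unfold sccRank mkS
  simp
  ring

lemma ncard_eq (N : ℕ) (P : ℤ → Prop) [DecidablePred P] :
    Set.ncard {p : List ℕ × ℕ | IsSCC N p.1 p.2 ∧ P (sccRank p.1 p.2)} =
      ((TS N).filter (fun q => P ((q.2.2.card : ℤ) - q.2.1.card))).card := by
  have : {p : List ℕ × ℕ | IsSCC N p.1 p.2 ∧ P (sccRank p.1 p.2)} =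
      mkS '' (((TS N).filter (fun q => P ((q.2.2.card : ℤ) - q.2.1.card)) : Finset _) : Set _) := by
    ext p
    simp only [Set.mem_ofPred_eq, Set.mem_image, Finset.coe_filter]
    constructor
    · rintro ⟨h1, h2⟩
      obtain ⟨q, hq, rfl⟩ := mkS_surj N p h1
      exact ⟨q, ⟨hq, by rwa [mkS_rank] at h2⟩, rfl⟩
    · rintro ⟨q, ⟨hq, h2⟩, rfl⟩
      exact ⟨mkS_isSCC N q hq, by rwa [mkS_rank]⟩
  rw [this, Set.ncard_image_of_injective _ mkS_inj, Set.ncard_coe_finset]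

lemma VdTotal_eq (N : ℕ) : VdTotal N = (TS N).card := by
  have := ncard_eq N (fun _ => True)
  simpa [VdTotal] using this

lemma TS_pos (N : ℕ) : 0 < (TS N).card := by
  rw [Finset.card_pos]
  exact ⟨⟨N, ∅, ∅⟩, by rw [mem_TS]; simp⟩

lemma tail_card (K N : ℕ) :
    ∑ c ∈ Finset.Ioc K N, (pairs c c N).card ≤ (pairs K 0 N).card := by
  rw [← Finset.card_sigma]
  apply Finset.card_le_card_of_injOn (fun q => (insert q.1 q.2.1, q.2.2))
  · rintro ⟨c, A, B⟩ hq
    simp only [Finset.coe_sigma, Set.mem_sigma_iff, Finset.mem_coe, Finset.mem_Ioc, pairs, Finset.mem_filter,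
      Finset.mem_product, Finset.mem_powerset] at hq ⊢
    obtain ⟨⟨hK, hN⟩, ⟨hA, hB⟩, hs⟩ := hq
    have hc : c ∉ A := fun h => by have := Finset.mem_Ioc.1 (hA h); omega
    refine ⟨⟨?_, ?_⟩, ?_⟩
    · intro j hj
      rcases Finset.mem_insert.1 hj with rfl | hj
      · exact Finset.mem_Ioc.2 ⟨hK, hN⟩
      · have := Finset.mem_Ioc.1 (hA hj)
        exact Finset.mem_Ioc.2 ⟨by omega, this.2⟩
    · intro j hj
      have := Finset.mem_Ioc.1 (hB hj)
      exact Finset.mem_Ioc.2 ⟨by omega, this.2⟩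
    · rw [Finset.sum_insert hc]; omega
  · rintro ⟨c, A, B⟩ hq ⟨c', A', B'⟩ hq' h
    simp only [Finset.coe_sigma, Set.mem_sigma_iff, Finset.mem_coe, Finset.mem_Ioc, pairs, Finset.mem_filter,
      Finset.mem_product, Finset.mem_powerset] at hq hq'
    simp only [Prod.mk.injEq] at h
    obtain ⟨hi, rfl⟩ := h
    have hA : ∀ j ∈ A, c < j := fun j hj => (Finset.mem_Ioc.1 (hq.2.1.1 hj)).1
    have hA' : ∀ j ∈ A', c' < j := fun j hj => (Finset.mem_Ioc.1 (hq'.2.1.1 hj)).1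
    have hcc : c = c' := by
      have m1 : c ∈ insert c' A' := hi ▸ Finset.mem_insert_self c A
      have m2 : c' ∈ insert c A := hi ▸ Finset.mem_insert_self c' A'
      rcases Finset.mem_insert.1 m1 with h | h
      · exact h
      · rcases Finset.mem_insert.1 m2 with h' | h'
        · exact h'.symm
        · have := hA _ h'; have := hA' _ h; omega
    subst hcc
    have : A = A' := by
      rw [← Finset.erase_insert (fun h => lt_irrefl _ (hA c h)), hi,
        Finset.erase_insert (fun h => lt_irrefl _ (hA' c h))]
    rw [this]

lemma lim_abs (f : ℕ → ℂ) (F : ℕ → ℕ → ℂ) (G : ℕ → ℕ → ℝ) (L : ℕ → ℂ) (l : ℂ) (G' : ℕ → ℝ)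
    (h1 : ∀ K, ∀ᶠ N in atTop, ‖f N - F K N‖ ≤ G K N)
    (h2 : ∀ K, Tendsto (F K) atTop (nhds (L K))) (h3 : Tendsto L atTop (nhds l))
    (h4 : ∀ K, Tendsto (G K) atTop (nhds (G' K))) (h5 : Tendsto G' atTop (nhds 0)) :
    Tendsto f atTop (nhds l) := by
  rw [Metric.tendsto_nhds]
  intro ε hε
  obtain ⟨K, hK1, hK2⟩ := ((Metric.tendsto_nhds.1 h3 (ε / 3) (by positivity)).and
    (h5.eventually_lt_const (show (0:ℝ) < ε / 3 by positivity))).exists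
  filter_upwards [h1 K, Metric.tendsto_nhds.1 (h2 K) (ε / 3) (by positivity), (h4 K).eventually_lt_const hK2]
    with N a1 a2 a3
  rw [← dist_eq_norm] at a1
  have := dist_triangle (f N) (F K N) l
  have := dist_triangle (F K N) (L K) l
  linarith

noncomputable def SN (N : ℕ) (φ : ℝ) : ℂ :=
  ∑ q ∈ TS N, Complex.exp (((φ * ((q.2.2.card : ℝ) - q.2.1.card) : ℝ) : ℂ) * Complex.I)

lemma SN_eq (N : ℕ) (φ : ℝ) : SN N φ = ∑ c ∈ Finset.range (N + 1), Xc c c N φ := by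
  unfold SN TS Xc
  rw [Finset.sum_sigma]

lemma Xc_zero (c d N : ℕ) : Xc c d N 0 = ((pairs c d N).card : ℂ) := by
  simp [Xc]

lemma norm_Xc_le (c d N : ℕ) (φ : ℝ) : ‖Xc c d N φ‖ ≤ (pairs c d N).card := by
  unfold Xc
  refine (norm_sum_le _ _).trans ?_
  simp_rw [Complex.norm_exp_ofReal_mul_I]
  simp

lemma ZN_pos : ∀ᶠ N in atTop, 0 < ZN N := by
  filter_upwards [inv_sqrt_BN_le] with N h
  have sB : 0 < √(BN N) := Real.sqrt_pos.2 h.1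
  have p1 : 0 < ∏ j ∈ Finset.Ioc 0 N, (1 + rexp (-(tN N * j))) := Finset.prod_pos fun j _ => by positivity
  unfold ZN
  positivity

lemma card_tendsto (K : ℕ) :
    Tendsto (fun N => ((pairs K 0 N).card : ℝ) / ZN N) atTop (nhds ((1 / 4) ^ K)) := by
  have h := (Complex.continuous_re.tendsto _).comp (Xc_tendsto K 0 0)
  simp only [Complex.ofReal_re] at h
  have e : (1 / 4 : ℝ) ^ K * rexp (-0 ^ 2 / 2) = (1 / 4) ^ K := by simp
  rw [e] at h
  refine h.congr fun N => ?_
  simp only [Function.comp, zero_mul, Xc_zero]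
  rw [← Complex.ofReal_natCast, ← Complex.ofReal_div, Complex.ofReal_re]

lemma SN_tendsto (θ : ℝ) :
    Tendsto (fun N : ℕ => SN N (θ * √(tN N)) / (ZN N : ℂ)) atTop
      (nhds (((4 / 3) * rexp (-θ ^ 2 / 2) : ℝ) : ℂ)) := by
  apply lim_abs _ (fun K N => ∑ c ∈ Finset.range (K + 1), Xc c c N (θ * √(tN N)) / (ZN N : ℂ))
    (fun K N => ((pairs K 0 N).card : ℝ) / ZN N)
    (fun K => ∑ c ∈ Finset.range (K + 1), (((1 / 4) ^ c * rexp (-θ ^ 2 / 2) : ℝ) : ℂ)) _ (fun K => (1 / 4) ^ K)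
  · intro K
    filter_upwards [ZN_pos, eventually_ge_atTop K] with N hZ hN
    have e : ∑ c ∈ Finset.range (N + 1), Xc c c N (θ * √(tN N)) =
        ∑ c ∈ Finset.range (K + 1), Xc c c N (θ * √(tN N)) + ∑ c ∈ Finset.Ioc K N, Xc c c N (θ * √(tN N)) := by
      rw [← Finset.sum_range_add_sum_Ico _ (show K + 1 ≤ N + 1 by omega)]
      congr 1
      apply Finset.sum_congr _ fun _ _ => rfl
      ext j; simp only [Finset.mem_Ico, Finset.mem_Ioc]; omega
    rw [SN_eq, e, ← Finset.sum_div, ← sub_div, add_sub_cancel_left, norm_div, Complex.norm_real, Real.norm_of_nonneg hZ.le]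
    gcongr
    refine (norm_sum_le _ _).trans ((Finset.sum_le_sum fun c _ => norm_Xc_le c c N _).trans ?_)
    exact_mod_cast tail_card K N
  · intro K
    exact tendsto_finsetSum _ fun c _ => Xc_tendsto c c θ
  · have h : Tendsto (fun K : ℕ => ∑ c ∈ Finset.range (K + 1), ((1 / 4 : ℝ) ^ c * rexp (-θ ^ 2 / 2))) atTop
        (nhds ((4 / 3) * rexp (-θ ^ 2 / 2))) := by
      have h0 := ((hasSum_geometric_of_lt_one (r := (1/4:ℝ)) (by norm_num) (by norm_num)).mul_right
        (rexp (-θ ^ 2 / 2))).tendsto_sum_nat.comp (tendsto_add_atTop_nat 1)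
      have e : (1 - 1 / 4 : ℝ)⁻¹ = 4 / 3 := by norm_num
      rw [e] at h0
      exact h0
    have := (Complex.continuous_ofReal.tendsto _).comp h
    refine this.congr fun K => ?_
    simp only [Function.comp, Complex.ofReal_sum]
  · exact card_tendsto
  · exact tendsto_pow_atTop_nhds_zero_of_lt_one (by norm_num) (by norm_num)

lemma SN_zero (N : ℕ) : SN N 0 = ((TS N).card : ℂ) := by
  simp [SN]

lemma ratio_tendsto (θ : ℝ) :
    Tendsto (fun N : ℕ => SN N (θ * √(tN N)) / ((TS N).card : ℂ)) atTop
      (nhds ((rexp (-θ ^ 2 / 2) : ℝ) : ℂ)) := by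
  have h := (SN_tendsto θ).div (SN_tendsto 0) (by simp)
  have e : (((4 / 3) * rexp (-θ ^ 2 / 2) : ℝ) : ℂ) / (((4 / 3) * rexp (-0 ^ 2 / 2) : ℝ) : ℂ) = ((rexp (-θ ^ 2 / 2) : ℝ) : ℂ) := by
    rw [← Complex.ofReal_div]; congr 1; simp
  rw [e] at h
  refine h.congr' ?_
  filter_upwards [ZN_pos] with N hZ
  have : (ZN N : ℂ) ≠ 0 := by exact_mod_cast hZ.ne'
  simp only [zero_mul, SN_zero, Pi.div_apply]
  rw [div_div_div_cancel_right₀ this]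

open MeasureTheory ProbabilityTheory in
noncomputable def muN (N : ℕ) : Measure ℝ :=
  ((TS N).card : ENNReal)⁻¹ • ∑ q ∈ TS N, Measure.dirac (((q.2.2.card : ℝ) - q.2.1.card) * √(tN N))

open MeasureTheory ProbabilityTheory in
lemma muN_apply (N : ℕ) (s : Set ℝ) (hs : MeasurableSet s) [DecidablePred (· ∈ s)] :
    muN N s = ((TS N).card : ENNReal)⁻¹ *
      (((TS N).filter (fun q => ((q.2.2.card : ℝ) - q.2.1.card) * √(tN N) ∈ s)).card : ENNReal) := by
  unfold muN
  rw [Measure.smul_apply, Measure.finsetSum_apply, smul_eq_mul, Finset.card_filter]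
  congr 1
  push_cast
  apply Finset.sum_congr rfl
  intro q _
  rw [Measure.dirac_apply' _ hs]
  simp [Set.indicator]

open MeasureTheory ProbabilityTheory in
instance muN_prob (N : ℕ) : IsProbabilityMeasure (muN N) := by
  constructor
  classical
  rw [muN_apply N _ MeasurableSet.univ]
  simp
  apply ENNReal.inv_mul_cancel
  · have := TS_pos N
    exact_mod_cast this.ne'
  · simp

open MeasureTheory ProbabilityTheory in
lemma charFun_muN (N : ℕ) (θ : ℝ) : charFun (muN N) θ = SN N (θ * √(tN N)) / ((TS N).card : ℂ) := by
  rw [charFun_apply_real]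
  unfold muN SN
  rw [integral_smul_measure, integral_finsetSum_measure]
  · simp_rw [integral_dirac]
    rw [div_eq_inv_mul, ENNReal.toReal_inv, ENNReal.toReal_natCast, Complex.real_smul]
    push_cast
    congr 1
    apply Finset.sum_congr rfl
    intro q _
    congr 1
    ring
  · intro q _
    apply integrable_dirac
    simp

open MeasureTheory ProbabilityTheory in
lemma muN_tendsto (x : ℝ) :
    Tendsto (fun N => (muN N (Set.Iic x)).toReal) atTop (nhds ((gaussianReal 0 1 (Set.Iic x)).toReal)) := by
  have h : Tendsto (β := ProbabilityMeasure ℝ) (fun N => ⟨muN N, muN_prob N⟩) atTop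
      (@nhds (ProbabilityMeasure ℝ) _ ⟨gaussianReal 0 1, inferInstance⟩) := by
    refine ProbabilityMeasure.tendsto_iff_tendsto_charFun.2 fun θ => ?_
    change Tendsto (fun N => charFun (muN N) θ) atTop (nhds (charFun (gaussianReal 0 1) θ))
    simp only [charFun_muN, charFun_gaussianReal]
    have := ratio_tendsto θ
    convert! this using 2
    push_cast
    congr 1
    ring
  have h2 := ProbabilityMeasure.tendsto_measure_of_null_frontier_of_tendsto' h (E := Set.Iic x) (by
    have : NullSingletonClass (gaussianReal 0 1) := nullSingletonClass_gaussianReal (by simp)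
    change gaussianReal 0 1 (frontier (Set.Iic x)) = 0
    simp)
  exact (ENNReal.tendsto_toReal (measure_ne_top _ _)).comp h2

open MeasureTheory ProbabilityTheory in
lemma gauss_Iic (x : ℝ) : (gaussianReal 0 1 (Set.Iic x)).toReal =
    (√(2 * π))⁻¹ * ∫ t in Set.Iic x, rexp (-t ^ 2 / 2) := by
  rw [gaussianReal_apply_eq_integral 0 (by simp), ENNReal.toReal_ofReal]
  · rw [← integral_const_mul]
    simp [gaussianPDFReal]
  · exact integral_nonneg fun t => gaussianPDFReal_nonneg _ _ _

lemma sqrt_tN_eq (N : ℕ) (hN : 1 ≤ N) : √(tN N) * (6 * (N : ℝ) / π ^ 2) ^ ((1 : ℝ) / 4) = 1 := by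
  have hp := tN_pos hN
  have hN' : (0:ℝ) < N := by exact_mod_cast hN
  have e : (6 * (N : ℝ) / π ^ 2) = (tN N ^ 2)⁻¹ := by
    rw [tN_sq hN]
    field_simp
  rw [e, ← Real.rpow_natCast, ← Real.rpow_neg hp.le, ← Real.rpow_mul hp.le, Real.sqrt_eq_rpow, ← Real.rpow_add hp]
  norm_num

theorem stmt_6 (x : ℝ) :
    Tendsto (fun N : ℕ =>
        (Set.ncard {p : List ℕ × ℕ | IsSCC N p.1 p.2 ∧
            (sccRank p.1 p.2 : ℝ) ≤ x * (6 * (N : ℝ) / π ^ 2) ^ ((1 : ℝ) / 4)} : ℝ) /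
          (VdTotal N : ℝ))
      atTop
      (nhds ((Real.sqrt (2 * π))⁻¹ * ∫ t in Set.Iic x, Real.exp (-t ^ 2 / 2))) := by
  classical
  rw [← gauss_Iic]
  refine (muN_tendsto x).congr' ?_
  filter_upwards [eventually_ge_atTop 1] with N hN
  rw [muN_apply N _ measurableSet_Iic, VdTotal_eq,
    ncard_eq N (fun m : ℤ => (m : ℝ) ≤ x * (6 * (N : ℝ) / π ^ 2) ^ ((1 : ℝ) / 4)), ENNReal.toReal_mul,
    ENNReal.toReal_inv, ENNReal.toReal_natCast, ENNReal.toReal_natCast, div_eq_inv_mul]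
  congr 3
  apply Finset.filter_congr
  intro q _
  have hs := sqrt_tN_eq N hN
  have hp : 0 < √(tN N) := Real.sqrt_pos.2 (tN_pos hN)
  set R := (6 * (N : ℝ) / π ^ 2) ^ ((1 : ℝ) / 4) with hR
  push_cast
  rw [Set.mem_Iic]
  have : x * R = x / √(tN N) := by
    field_simp
    linear_combination x * hs
  rw [this, le_div_iff₀ hp]
end

section
/- Let B = 2π/√6. There exist constants C > 0 and X₀ such that for all integers X ≥ X₀ and all integers r with |r| ≤ X^{3/4}, the partition function satisfies |p(X + r)/p(X) − e^{B·r/(2√X)}| ≤ C·e^{B·r/(2√X)}·(1/X + |r|/X + r²/X^{3/2}); that is, p(X+r)/p(X) = e^{Br/(2√X)}·(1 + O(1/X + |r|/X + |r|²/X^{3/2})) uniformly for |r| ≤ X^{3/4}. -/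
open scoped BigOperators

section

open Finset Filter Topology

noncomputable def pp (n : ℕ) : ℕ := Fintype.card (Nat.Partition n)
noncomputable def pK (K n : ℕ) : ℕ := (Nat.Partition.restricted n (· ≤ K)).card

lemma pK_le (K n : ℕ) : pK K n ≤ pp n := by
  unfold pK pp
  exact Finset.card_le_univ _

lemma pK_eq {K n : ℕ} (h : n ≤ K) : pK K n = pp n := by
  unfold pK pp Nat.Partition.restricted
  rw [Finset.filter_true_of_mem]
  · rfl
  · intro p _ i hi
    exact (Nat.Partition.le_of_mem_parts hi).trans h

lemma pK_gen (K : ℕ) : (PowerSeries.mk fun n => (pK K n : ℤ)) * 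
    ∏ i ∈ range K, (1 - (PowerSeries.X : PowerSeries ℤ) ^ (i + 1)) = 1 := by
  let _ : TopologicalSpace ℤ := ⊥
  have _ : DiscreteTopology ℤ := ⟨rfl⟩
  open PowerSeries.WithPiTopology in
  have h := Nat.Partition.hasProd_powerSeriesMk_card_restricted ℤ (· ≤ K)
  have h2 := hasProd_prod_of_ne_finset_one (L := SummationFilter.unconditional ℕ)
    (f := fun i ↦ if i + 1 ≤ K then ∑' j : ℕ, (PowerSeries.X : PowerSeries ℤ) ^ ((i + 1) * j) else 1) 
    (s := range K) (by intro b hb; simp at hb; simp; omega)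
  have h3 := h.unique h2
  unfold pK
  rw [h3, ← Finset.prod_mul_distrib]
  apply Finset.prod_eq_one
  intro i hi
  simp only [Finset.mem_range] at hi
  rw [if_pos (by omega)]
  simp_rw [pow_mul]
  apply PowerSeries.WithPiTopology.tsum_pow_mul_one_sub_of_constantCoeff_eq_zero
  simp

end

section

open Finset Filter Topology

lemma pK_succ (K : ℕ) : (PowerSeries.mk fun n => (pK (K+1) n : ℤ)) =
    (PowerSeries.mk fun n => (pK K n : ℤ)) * PowerSeries.mk fun n => if (K+1) ∣ n then (1:ℤ) else 0 := by
  have h1 := pK_gen K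
  have h2 := pK_gen (K+1)
  rw [Finset.prod_range_succ] at h2
  have hg : (PowerSeries.mk fun n => if (K+1) ∣ n then (1:ℤ) else 0) * (1 - PowerSeries.X^(K+1)) = 1 := by
    ext n
    rw [mul_sub, mul_one, map_sub, PowerSeries.coeff_mul_X_pow']
    simp only [PowerSeries.coeff_mk, PowerSeries.coeff_one]
    rcases Nat.eq_zero_or_pos n with rfl | hn
    · simp
    · rw [if_neg hn.ne']
      by_cases h : K + 1 ≤ n
      · rw [if_pos h]
        have : (K+1 ∣ n - (K+1)) ↔ (K+1 ∣ n) := by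
          obtain ⟨t, rfl⟩ := Nat.exists_eq_add_of_le h
          simp
        simp [this]
      · rw [if_neg h, if_neg]
        · simp
        · exact fun h' => h (Nat.le_of_dvd hn h')
  set a := (PowerSeries.mk fun n => (pK (K+1) n : ℤ))
  set b := (PowerSeries.mk fun n => (pK K n : ℤ))
  set c := (PowerSeries.mk fun n => if (K+1) ∣ n then (1:ℤ) else 0)
  set P := ∏ x ∈ range K, (1 - (PowerSeries.X : PowerSeries ℤ) ^ (x + 1))
  calc a = a * (b * P) * (c * (1 - PowerSeries.X^(K+1))) := by rw [h1, hg]; ring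
    _ = (a * (P * (1 - PowerSeries.X^(K+1)))) * (b * c) := by ring
    _ = b * c := by rw [h2, one_mul]

lemma pK_succ' (K n : ℕ) : (pK (K+1) n : ℂ) = ∑ x ∈ antidiagonal n, (pK K x.1 : ℂ) * (if (K+1) ∣ x.2 then (1:ℂ) else 0) := by
  have := congrArg (PowerSeries.coeff n) (pK_succ K)
  rw [PowerSeries.coeff_mul] at this
  simp only [PowerSeries.coeff_mk] at this
  have h2 := congrArg (fun z : ℤ => (z : ℂ)) this
  push_cast at h2
  exact h2

lemma hasSum_geom_dvd (K : ℕ) (q : ℂ) (hq : ‖q‖ < 1) :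
    HasSum (fun n => (if (K+1) ∣ n then (1:ℂ) else 0) * q^n) ((1 - q^(K+1))⁻¹) := by
  have h := hasSum_geometric_of_norm_lt_one (ξ := q^(K+1)) (by
    rw [norm_pow]; exact pow_lt_one₀ (norm_nonneg _) hq (by omega))
  have hi : Function.Injective (fun j : ℕ => (K+1) * j) := fun a b h => by
    simpa using h
  rw [← Function.Injective.hasSum_iff hi]
  · convert! h using 2 with j
    simp [pow_mul]
  · intro x hx
    rw [if_neg, zero_mul]
    rintro ⟨j, rfl⟩
    exact hx ⟨j, rfl⟩

lemma pK_hasSum (K : ℕ) (q : ℂ) (hq : ‖q‖ < 1) :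
    Summable (fun n => ‖(pK K n : ℂ) * q^n‖) ∧ 
    ∑' n, (pK K n : ℂ) * q^n = ∏ i ∈ range K, (1 - q^(i+1))⁻¹ := by
  induction K with
  | zero =>
    have h0 : ∀ n, pK 0 n = if n = 0 then 1 else 0 := by
      intro n
      have := pK_gen 0
      simp only [range_zero, prod_empty, mul_one] at this
      have := congrArg (PowerSeries.coeff n) this
      simp only [PowerSeries.coeff_mk, PowerSeries.coeff_one] at this
      exact_mod_cast this
    have : (fun n => (pK 0 n : ℂ) * q^n) = fun n => if n = 0 then 1 else 0 := by
      ext n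
      rw [h0]
      by_cases h : n = 0 <;> simp [h]
    constructor
    · have h3 : (fun n => ‖(pK 0 n : ℂ) * q^n‖) = fun n => ‖(if n = 0 then 1 else 0 : ℂ)‖ :=
        funext fun n => congrArg norm (congrFun this n)
      rw [h3]
      apply summable_of_ne_finset_zero (s := {0})
      intro b hb
      simp at hb
      simp [hb]
    · rw [this]
      simp
  | succ K ih =>
    have hg := hasSum_geom_dvd K q hq
    have hgn : Summable (fun n => ‖(if (K+1) ∣ n then (1:ℂ) else 0) * q^n‖) := by
      refine Summable.of_nonneg_of_le (fun _ => norm_nonneg _) (fun n => ?_) 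
        (summable_geometric_of_lt_one (norm_nonneg _) hq)
      rw [norm_mul, norm_pow]
      split_ifs <;> simp
    have key : (fun n => (pK (K+1) n : ℂ) * q^n) = fun n => ∑ x ∈ antidiagonal n, 
        ((pK K x.1 : ℂ) * q^x.1) * ((if (K+1) ∣ x.2 then (1:ℂ) else 0) * q^x.2) := by
      ext n
      rw [pK_succ', Finset.sum_mul]
      apply Finset.sum_congr rfl
      intro x hx
      rw [← (mem_antidiagonal.1 hx), pow_add]
      ring
    constructor
    · have := summable_norm_sum_mul_antidiagonal_of_summable_norm ih.1 hgn
      convert! this using 2 with n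
      exact congrArg norm (congrFun key n)
    · rw [key, ← tsum_mul_tsum_eq_tsum_sum_antidiagonal_of_summable_norm ih.1 hgn, ih.2, hg.tsum_eq,
        Finset.prod_range_succ]

/-- double series term -/
noncomputable def uu (q : ℂ) (x : ℕ × ℕ) : ℂ := q^((x.1+1)*(x.2+1)) / ((x.2 : ℂ)+1)

lemma uu_summable (q : ℂ) (hq : ‖q‖ < 1) : Summable (uu q) := by
  have h0 := summable_geometric_of_lt_one (norm_nonneg _) hq
  have := Summable.mul_of_nonneg h0 h0 (fun _ => by positivity) (fun _ => by positivity)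
  refine Summable.of_norm_bounded this ?_
  intro x
  unfold uu
  rw [norm_div, norm_pow]
  have h1 : (1:ℝ) ≤ ‖(x.2:ℂ)+1‖ := by
    have : ((x.2:ℂ)+1) = ((x.2+1 : ℕ) : ℂ) := by push_cast; rfl
    rw [this, Complex.norm_natCast]; push_cast; linarith [(Nat.cast_nonneg x.2 : (0:ℝ) ≤ x.2)]
  calc _ ≤ ‖q‖^((x.1+1)*(x.2+1)) := div_le_self (by positivity) h1
    _ ≤ ‖q‖^(x.1+x.2) := pow_le_pow_of_le_one (norm_nonneg _) hq.le (by nlinarith)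
    _ = _ := pow_add _ _ _

lemma prod_tendsto (q : ℂ) (hq : ‖q‖ < 1) :
    Tendsto (fun K => ∏ i ∈ range K, (1 - q^(i+1))⁻¹) atTop (𝓝 (Complex.exp (∑' x, uu q x))) := by
  have hs := (uu_summable q hq).hasSum
  have hqk : ∀ k : ℕ, ‖q^(k+1)‖ < 1 := fun k => by
    rw [norm_pow]; exact pow_lt_one₀ (norm_nonneg _) hq (by omega)
  have hl : ∀ k : ℕ, HasSum (fun m => uu q (k, m)) (-Complex.log (1 - q^(k+1))) := by
    intro k
    have := Complex.hasSum_taylorSeries_neg_log (hqk k)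
    rw [← hasSum_nat_add_iff' 1] at this
    simp only [range_one, sum_singleton, pow_zero, Nat.cast_zero, div_zero, sub_zero] at this
    convert! this using 2 with m
    simp [uu, pow_mul]
  have h1 := (hs.prod_fiberwise hl).tendsto_sum_nat
  have h2 := (Complex.continuous_exp.tendsto _).comp h1
  refine h2.congr fun K => ?_
  simp only [Function.comp]
  rw [Complex.exp_sum]
  apply Finset.prod_congr rfl
  intro i _
  rw [Complex.exp_neg, Complex.exp_log]
  intro h
  have : q^(i+1) = 1 := by linear_combination -h
  have h3 := hqk i
  rw [this] at h3
  simp at h3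

lemma pp_summable (q : ℂ) (hq : ‖q‖ < 1) : Summable (fun n => ‖(pp n : ℂ) * q^n‖) := by
  have hx : ‖((‖q‖ : ℝ) : ℂ)‖ < 1 := by simpa using hq
  have hb := (prod_tendsto _ hx).norm.bddAbove_range
  obtain ⟨M, hM⟩ := hb
  apply summable_of_sum_range_le (c := M) (fun _ => norm_nonneg _)
  intro N
  have h1 := pK_hasSum N _ hx
  have h2 : ‖∏ i ∈ range N, (1 - ((‖q‖ : ℝ) : ℂ)^(i+1))⁻¹‖ ≤ M := hM ⟨N, rfl⟩
  rw [← h1.2] at h2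
  have h4 : ∀ n, (pK N n : ℂ) * ((‖q‖ : ℝ) : ℂ)^n = (((pK N n : ℝ) * ‖q‖^n : ℝ) : ℂ) := by
    intro n; push_cast; rfl
  have h3 : ∑' n, (pK N n : ℝ) * ‖q‖^n ≤ M := by
    simp_rw [h4] at h2
    rw [← Complex.ofReal_tsum, Complex.norm_real] at h2
    exact (le_abs_self _).trans h2
  have h5 : Summable (fun n => (pK N n : ℝ) * ‖q‖^n) := by
    refine h1.1.congr fun n => ?_
    rw [h4, Complex.norm_real, Real.norm_of_nonneg (by positivity)]
  refine le_trans ?_ h3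
  refine le_trans (le_of_eq ?_) (h5.sum_le_tsum (range N) (fun _ _ => by positivity))
  apply Finset.sum_congr rfl
  intro n hn
  rw [pK_eq (mem_range.1 hn).le, norm_mul, norm_pow, Complex.norm_natCast]

lemma pp_gen (q : ℂ) (hq : ‖q‖ < 1) : ∑' n, (pp n : ℂ) * q^n = Complex.exp (∑' x, uu q x) := by
  have h1 : Tendsto (fun K => ∑' n, (pK K n : ℂ) * q^n) atTop (𝓝 (∑' n, (pp n : ℂ) * q^n)) := by
    refine tendsto_tsum_of_dominated_convergence (pp_summable q hq) ?_ ?_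
    · intro n
      apply tendsto_const_nhds.congr'
      filter_upwards [eventually_ge_atTop n] with K hK
      rw [pK_eq hK]
    · refine Eventually.of_forall fun K n => ?_
      rw [norm_mul, norm_mul]
      gcongr
      simp only [Complex.norm_natCast]
      exact_mod_cast pK_le K n
  refine tendsto_nhds_unique h1 ?_
  simp_rw [(pK_hasSum _ q hq).2]
  exact prod_tendsto q hq

end

section

open Finset Filter Topology

noncomputable def NN (x : ℕ × ℕ) : ℝ := ((x.1:ℝ)+1)*((x.2:ℝ)+1)
noncomputable def ww (s : ℝ) (x : ℕ × ℕ) : ℝ := Real.exp (-(s * NN x)) / ((x.2:ℝ)+1)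

lemma NN_pos (x) : 0 < NN x := by unfold NN; positivity
lemma ww_pos (s x) : 0 < ww s x := by unfold ww; positivity

lemma fib (f : ℕ × ℕ → ℝ) (hf : ∀ x, 0 ≤ f x) (g : ℕ → ℝ)
    (h : ∀ m, HasSum (fun k => f (k, m)) (g m)) (hg : Summable g) : HasSum f (∑' m, g m) := by
  have hs : Summable (fun x : ℕ × ℕ => f x.swap) := by
    rw [summable_prod_of_nonneg (fun x => hf _)]
    refine ⟨fun m => (h m).summable, ?_⟩
    refine hg.congr fun m => ?_
    exact (h m).tsum_eq.symm
  have h1 : HasSum (fun x : ℕ × ℕ => f x.swap) (∑' m, g m) := by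
    have h2 := hs.hasSum.prod_fiberwise (g := g) (fun m => h m)
    rw [h2.tsum_eq]
    exact hs.hasSum
  exact (Equiv.prodComm ℕ ℕ).hasSum_iff.1 h1

lemma inv_sq_sum : HasSum (fun m : ℕ => 1 / ((m:ℝ)+1)^2) (Real.pi^2/6) := by
  have := hasSum_zeta_two
  rw [← hasSum_nat_add_iff' 1] at this
  simpa using this

lemma pi_sq_le : Real.pi^2/6 ≤ 2 := by
  nlinarith [Real.pi_gt_three, Real.pi_lt_d2]

lemma geo_exp (t : ℝ) (ht : 0 < t) : HasSum (fun k : ℕ => Real.exp (-(((k:ℝ)+1)*t))) 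
    (Real.exp (-t) / (1 - Real.exp (-t))) := by
  have h := (hasSum_geometric_of_lt_one (Real.exp_pos (-t)).le (by simpa using ht)).mul_left (Real.exp (-t))
  rw [← div_eq_mul_inv] at h
  convert! h using 2 with k
  rw [← Real.exp_nat_mul, ← Real.exp_add]
  ring_nf

lemma geo_exp_le (t : ℝ) (ht : 0 < t) : Real.exp (-t) / (1 - Real.exp (-t)) ≤ 1 / t := by
  have h1 : Real.exp (-t) < 1 := by simpa using ht
  rw [div_le_div_iff₀ (by linarith) ht]
  have := Real.add_one_le_exp t
  have h2 : Real.exp (-t) * Real.exp t = 1 := by rw [← Real.exp_add]; simp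
  nlinarith [Real.exp_pos (-t)]

lemma fib_bound (f : ℕ × ℕ → ℝ) (hf : ∀ x, 0 ≤ f x) (s c : ℝ) (hs : 0 < s)  (hc : 0 ≤ c)
    (h : ∀ x : ℕ × ℕ, f x ≤ c / ((x.2:ℝ)+1) * Real.exp (-(((x.1:ℝ)+1) * (((x.2:ℝ)+1)*s/2)))) : 
    Summable f ∧ ∑' x, f x ≤ 4 * c / s := by
  have hF : HasSum (fun x : ℕ × ℕ => c / ((x.2:ℝ)+1) * Real.exp (-(((x.1:ℝ)+1) * (((x.2:ℝ)+1)*s/2)))) _ :=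
    fib _ (fun x => by positivity) _ (fun m => (geo_exp (((m:ℝ)+1)*s/2) (by positivity)).mul_left (c / ((m:ℝ)+1)))
    (by 
      refine Summable.of_nonneg_of_le (fun m => ?_) (fun m => ?_) (inv_sq_sum.mul_left (2*c/s)).summable
      · have : Real.exp (-(((m:ℝ)+1)*s/2)) < 1 := by simp; positivity
        have : 0 < 1 - Real.exp (-(((m:ℝ)+1)*s/2)) := by linarith
        positivity
      · calc _ ≤ (c / ((m:ℝ)+1)) * (1 / (((m:ℝ)+1)*s/2)) := by
              exact mul_le_mul_of_nonneg_left (geo_exp_le _ (by positivity)) (by positivity)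
          _ = _ := by field_simp)
  have hb : ∑' m : ℕ, (c / ((m:ℝ)+1)) * (Real.exp (-(((m:ℝ)+1)*s/2)) / (1 - Real.exp (-(((m:ℝ)+1)*s/2)))) ≤ 4 * c / s := by
    have h1 := inv_sq_sum.mul_left (2*c/s)
    have hle : ∀ m : ℕ, (c / ((m:ℝ)+1)) * (Real.exp (-(((m:ℝ)+1)*s/2)) / (1 - Real.exp (-(((m:ℝ)+1)*s/2)))) ≤ (2*c/s) * (1/((m:ℝ)+1)^2) := by
      intro m
      calc _ ≤ (c / ((m:ℝ)+1)) * (1 / (((m:ℝ)+1)*s/2)) := by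
              exact mul_le_mul_of_nonneg_left (geo_exp_le _ (by positivity)) (by positivity)
          _ = _ := by field_simp
    have hn : ∀ m : ℕ, 0 ≤ (c / ((m:ℝ)+1)) * (Real.exp (-(((m:ℝ)+1)*s/2)) / (1 - Real.exp (-(((m:ℝ)+1)*s/2)))) := by
      intro m
      have : Real.exp (-(((m:ℝ)+1)*s/2)) < 1 := by simp; positivity
      have : 0 < 1 - Real.exp (-(((m:ℝ)+1)*s/2)) := by linarith
      positivity
    calc _ ≤ _ := Summable.tsum_le_tsum hle (Summable.of_nonneg_of_le hn hle h1.summable) h1.summable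
      _ = (2*c/s) * (Real.pi^2/6) := h1.tsum_eq
      _ ≤ (2*c/s) * 2 := by gcongr; exact pi_sq_le
      _ = _ := by ring
  have hsf := Summable.of_nonneg_of_le hf h hF.summable
  refine ⟨hsf, ?_⟩
  calc _ ≤ _ := Summable.tsum_le_tsum h hsf hF.summable
    _ ≤ _ := by rw [hF.tsum_eq]; exact hb

lemma ww_pow_le (s : ℝ) (hs : 0 < s) (j : ℕ) (x : ℕ × ℕ) : ww s x * NN x ^ j ≤ 
    ((Nat.factorial j) * (2/s)^j) / ((x.2:ℝ)+1) * Real.exp (-(((x.1:ℝ)+1) * (((x.2:ℝ)+1)*s/2))) := by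
  have hN := NN_pos x
  have h := Real.pow_div_factorial_le_exp (s * NN x / 2) (by positivity) j
  have e1 : Real.exp (-(((x.1:ℝ)+1) * (((x.2:ℝ)+1)*s/2))) = Real.exp (-(s * NN x / 2)) := by
    unfold NN; ring_nf
  have e2 : Real.exp (-(s * NN x)) = Real.exp (-(s * NN x / 2)) * Real.exp (-(s * NN x / 2)) := by
    rw [← Real.exp_add]; ring_nf
  have e3 : Real.exp (s * NN x / 2) * Real.exp (-(s * NN x / 2)) = 1 := by
    rw [← Real.exp_add]; ring_nf; simp
  rw [e1]
  unfold ww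
  rw [e2]
  set E := Real.exp (-(s * NN x / 2))
  have hE : 0 < E := Real.exp_pos _
  rw [div_le_iff₀ (by positivity)] at h
  have h2 : NN x ^ j ≤ Real.exp (s * NN x / 2) * (Nat.factorial j) * (2/s)^j := by
    calc NN x ^ j = (s * NN x / 2)^j * (2/s)^j := by rw [← mul_pow]; congr 1; field_simp
      _ ≤ _ := by gcongr
  calc E * E / ((x.2:ℝ)+1) * NN x ^ j ≤ E * E / ((x.2:ℝ)+1) * (Real.exp (s * NN x / 2) * (Nat.factorial j) * (2/s)^j) := by gcongr
    _ = (Real.exp (s * NN x / 2) * E) * ((Nat.factorial j) * (2/s)^j / ((x.2:ℝ)+1) * E) := by ring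
    _ = _ := by rw [e3, one_mul]

lemma ww_sum (s : ℝ) (hs : 0 < s) (j : ℕ) : Summable (fun x => ww s x * NN x ^ j) ∧ 
    ∑' x, ww s x * NN x ^ j ≤ 4 * ((Nat.factorial j) * (2/s)^j) / s := 
  fib_bound _ (fun x => by have := ww_pos s x; have := NN_pos x; positivity) s _ hs (by positivity) (ww_pow_le s hs j)

lemma G_bound (y : ℝ) (hy : 0 < y) : 
    |Real.exp (-y) / (1 - Real.exp (-y))^2 - 1/y^2| ≤ 4 / (1+y)^2 := by
  have hG : Real.exp (-y) / (1 - Real.exp (-y))^2 = 1 / (2 * (Real.cosh y - 1)) := by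
    have h1 : Real.exp (-y) < 1 := by simpa using hy
    have hc : 1 < Real.cosh y := Real.one_lt_cosh.2 hy.ne'
    rw [div_eq_div_iff (by nlinarith) (by linarith)]
    rw [Real.cosh_eq]
    have h2 : Real.exp (-y) * Real.exp y = 1 := by rw [← Real.exp_add]; simp
    linear_combination h2
  rw [hG]
  have hlow : y^2 ≤ 2 * (Real.cosh y - 1) := by
    have h1 := Real.cosh_sq (y/2)
    have h2 := Real.cosh_two_mul (y/2)
    have h3 : y/2 ≤ Real.sinh (y/2) := Real.self_le_sinh_iff.2 (by positivity)
    rw [show 2 * (y/2) = y by ring] at h2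
    nlinarith
  have hpos : 0 < 2 * (Real.cosh y - 1) := by nlinarith [pow_pos hy 2]
  have hup : 1 / (2 * (Real.cosh y - 1)) ≤ 1/y^2 := one_div_le_one_div_of_le (by positivity) hlow
  rw [abs_le]
  constructor
  · rcases le_or_gt y 1 with h | h
    · have h4 : (1:ℝ) ≤ 4 / (1+y)^2 := by
        rw [le_div_iff₀ (by positivity)]; nlinarith
      have h5 : 1/y^2 - 1 ≤ 1 / (2 * (Real.cosh y - 1)) := by
        have h6 := Real.cosh_le_exp_half_sq y
        have h7 : Real.exp (y^2/2) * (1 - y^2/2) ≤ 1 := by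
          have := Real.add_one_le_exp (-(y^2/2))
          have e : Real.exp (y^2/2) * Real.exp (-(y^2/2)) = 1 := by rw [← Real.exp_add]; simp
          nlinarith [Real.exp_pos (y^2/2)]
        have hy2 : y^2 ≤ 1 := by nlinarith
        have h8 : Real.cosh y * (1 - y^2/2) ≤ 1 := le_trans (by gcongr; linarith) h7
        rw [div_sub_one (by positivity), div_le_div_iff₀ (by positivity) hpos]
        nlinarith [pow_pos hy 2, Real.one_lt_cosh.2 hy.ne']
      linarith
    · have h4 : 1/y^2 ≤ 4/(1+y)^2 := by
        rw [div_le_div_iff₀ (by positivity) (by positivity)]; nlinarith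
      have : 0 < 1 / (2 * (Real.cosh y - 1)) := by positivity
      linarith
  · have : 0 < 4 / (1+y)^2 := by positivity
    linarith

lemma tele (s : ℝ) (hs : 0 < s) : Summable (fun m : ℕ => 4 / (1+((m:ℝ)+1)*s)^2) ∧
    ∑' m : ℕ, 4 / (1+((m:ℝ)+1)*s)^2 ≤ 4 / s := by
  have hb : ∀ N : ℕ, ∑ m ∈ range N, 4 / (1+((m:ℝ)+1)*s)^2 ≤ 4 / s := by
    intro N
    have : ∑ m ∈ range N, 4 / (1+((m:ℝ)+1)*s)^2 ≤ 4/s - 4/s * (1 / (1+(N:ℝ)*s)) := by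
      induction N with
      | zero => simp
      | succ N ih =>
        rw [Finset.sum_range_succ]
        have : 4 / (1+((N:ℝ)+1)*s)^2 ≤ 4/s * (1 / (1+(N:ℝ)*s)) - 4/s * (1 / (1+((N+1:ℕ):ℝ)*s)) := by
          push_cast
          rw [← mul_sub, div_sub_div _ _ (by positivity) (by positivity), div_mul_div_comm,
            div_le_div_iff₀ (by positivity) (by positivity)]
          have e : (4 * (1 * (1 + ((N:ℝ) + 1) * s) - (1 + (N:ℝ) * s) * 1)) = 4 * s := by ring
          rw [e]
          have : 0 ≤ (N:ℝ) * s := by positivity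
          have : (1 + (N:ℝ) * s) * (1 + ((N:ℝ) + 1) * s) ≤ (1 + ((N:ℝ) + 1) * s)^2 := by nlinarith
          nlinarith
        linarith
    have : 0 ≤ 4/s * (1 / (1+(N:ℝ)*s)) := by positivity
    linarith
  exact ⟨summable_of_sum_range_le (fun _ => by positivity) hb, 
    Real.tsum_le_of_sum_range_le (fun _ => by positivity) hb⟩

lemma S1 (s : ℝ) (hs : 0 < s) : |∑' x, ww s x * NN x - Real.pi^2/6/s^2| ≤ 4 / s := by
  have hfib : ∀ m : ℕ, HasSum (fun k : ℕ => ww s (k,m) * NN (k,m)) 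
      (Real.exp (-(((m:ℝ)+1)*s)) / (1 - Real.exp (-(((m:ℝ)+1)*s)))^2) := by
    intro m
    have h1 : ‖Real.exp (-(((m:ℝ)+1)*s))‖ < 1 := by
      rw [Real.norm_of_nonneg (Real.exp_pos _).le]; simp; positivity
    have := hasSum_coe_mul_geometric_of_norm_lt_one h1
    rw [← hasSum_nat_add_iff' 1] at this
    simp only [range_one, sum_singleton, Nat.cast_zero, zero_mul, sub_zero] at this
    convert! this using 2 with k
    rw [← Real.exp_nat_mul]
    unfold ww NN
    push_cast
    field_simp
  have hB := inv_sq_sum.mul_left (1/s^2)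
  have hd : ∀ m : ℕ, |Real.exp (-(((m:ℝ)+1)*s)) / (1 - Real.exp (-(((m:ℝ)+1)*s)))^2 - 1/s^2 * (1/((m:ℝ)+1)^2)| 
      ≤ 4 / (1+((m:ℝ)+1)*s)^2 := by
    intro m
    have := G_bound (((m:ℝ)+1)*s) (by positivity)
    rwa [show 1/s^2 * (1/((m:ℝ)+1)^2) = 1 / (((m:ℝ)+1)*s)^2 by field_simp]
  have ht := tele s hs
  have hds : Summable (fun m : ℕ => Real.exp (-(((m:ℝ)+1)*s)) / (1 - Real.exp (-(((m:ℝ)+1)*s)))^2 - 1/s^2 * (1/((m:ℝ)+1)^2)) :=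
    Summable.of_norm_bounded ht.1 hd
  have hGs : Summable (fun m : ℕ => Real.exp (-(((m:ℝ)+1)*s)) / (1 - Real.exp (-(((m:ℝ)+1)*s)))^2) := by
    refine (hds.add hB.summable).congr fun m => ?_
    ring
  have h := fib (fun x => ww s x * NN x) (fun x => by have := ww_pos s x; have := NN_pos x; positivity) _ hfib hGs
  rw [h.tsum_eq]
  have e : Real.pi^2/6/s^2 = ∑' m : ℕ, 1/s^2 * (1/((m:ℝ)+1)^2) := by rw [hB.tsum_eq]; ring
  rw [e, ← hGs.tsum_sub hB.summable]
  rw [← Real.norm_eq_abs]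
  refine le_trans (tsum_of_norm_bounded ht.1.hasSum (fun m => ?_)) ht.2
  exact hd m

end

section

open Finset Filter Topology MeasureTheory

noncomputable def DD (s θ : ℝ) : ℝ := ∑' x, ww s x * (1 - Real.cos (NN x * θ))
noncomputable def AA (s θ : ℝ) : ℝ := ∑' x, ww s x * Real.sin (NN x * θ)

lemma ww_summable (s : ℝ) (hs : 0 < s) : Summable (ww s) := by
  simpa using (ww_sum s hs 0).1

lemma one_sub_cos_nonneg (x : ℝ) : 0 ≤ 1 - Real.cos x := by linarith [Real.cos_le_one x]

lemma DD_term_bound (s θ : ℝ) (x) : ‖ww s x * (1 - Real.cos (NN x * θ))‖ ≤ 2 * ww s x := by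
  have h := ww_pos s x
  rw [norm_mul, Real.norm_of_nonneg h.le, Real.norm_of_nonneg (one_sub_cos_nonneg _)]
  nlinarith [Real.neg_one_le_cos (NN x * θ)]

lemma AA_term_bound (s θ : ℝ) (x) : ‖ww s x * Real.sin (NN x * θ)‖ ≤ ww s x := by
  have h := ww_pos s x
  rw [norm_mul, Real.norm_of_nonneg h.le, Real.norm_eq_abs]
  nlinarith [Real.abs_sin_le_one (NN x * θ)]

lemma DD_summable (s θ : ℝ) (hs : 0 < s) : Summable (fun x => ww s x * (1 - Real.cos (NN x * θ))) :=
  Summable.of_norm_bounded ((ww_summable s hs).mul_left 2) (DD_term_bound s θ)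

lemma AA_summable (s θ : ℝ) (hs : 0 < s) : Summable (fun x => ww s x * Real.sin (NN x * θ)) :=
  Summable.of_norm_bounded (ww_summable s hs) (AA_term_bound s θ)

lemma DD_cont (s : ℝ) (hs : 0 < s) : Continuous (DD s) :=
  continuous_tsum (fun x => by fun_prop) ((ww_summable s hs).mul_left 2) (fun x θ => DD_term_bound s θ x)

lemma AA_cont (s : ℝ) (hs : 0 < s) : Continuous (AA s) :=
  continuous_tsum (fun x => by fun_prop) (ww_summable s hs) (fun x θ => AA_term_bound s θ x)

noncomputable def qq (s θ : ℝ) : ℂ := Complex.exp (-s + θ * Complex.I)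

lemma qq_norm (s θ : ℝ) : ‖qq s θ‖ = Real.exp (-s) := by
  unfold qq
  rw [Complex.norm_exp]; simp

lemma qq_norm_lt (s θ : ℝ) (hs : 0 < s) : ‖qq s θ‖ < 1 := by
  rw [qq_norm]; simpa using hs

lemma qq_pow (s θ : ℝ) (n : ℕ) : qq s θ ^ n = (Real.exp (-(n * s)) : ℂ) * Complex.exp (n * θ * Complex.I) := by
  unfold qq
  rw [← Complex.exp_nat_mul, Complex.ofReal_exp, ← Complex.exp_add]
  push_cast
  ring_nf

lemma uu_qq (s θ : ℝ) (x : ℕ × ℕ) : uu (qq s θ) x = 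
    (ww s x : ℂ) - ((ww s x * (1 - Real.cos (NN x * θ)) : ℝ) : ℂ) + ((ww s x * Real.sin (NN x * θ) : ℝ) : ℂ) * Complex.I := by
  unfold uu
  rw [qq_pow]
  have e : Complex.exp ((((x.1+1)*(x.2+1) : ℕ) : ℂ) * θ * Complex.I) = Real.cos (NN x * θ) + Real.sin (NN x * θ) * Complex.I := by
    rw [Complex.ofReal_cos, Complex.ofReal_sin, ← Complex.exp_mul_I]
    unfold NN
    push_cast
    rfl
  rw [e]
  have e2 : (ww s x : ℂ) = (Real.exp (-(((x.1+1)*(x.2+1) : ℕ) * s)) : ℂ) / ((x.2:ℂ)+1) := by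
    unfold ww NN
    push_cast
    ring_nf
  push_cast
  rw [e2]
  push_cast
  ring

lemma gen_D (s θ : ℝ) (hs : 0 < s) : ∑' n, (pp n : ℂ) * qq s θ^n = 
    Complex.exp ((∑' x, ww s x : ℝ)) * Complex.exp (-(DD s θ : ℂ) + AA s θ * Complex.I) := by
  rw [pp_gen _ (qq_norm_lt s θ hs), ← Complex.exp_add]
  congr 1
  simp_rw [uu_qq]
  have h1 := Complex.hasSum_ofReal.2 (ww_summable s hs).hasSum
  have h2 := Complex.hasSum_ofReal.2 (DD_summable s θ hs).hasSum
  have h3 := (Complex.hasSum_ofReal.2 (AA_summable s θ hs).hasSum).mul_right Complex.I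
  rw [((h1.sub h2).add h3).tsum_eq]
  unfold DD AA
  ring

lemma orth (k n : ℕ) : ∫ θ in (-Real.pi)..Real.pi, Complex.exp (k * θ * Complex.I) * Complex.exp (-(n * θ * Complex.I)) = 
    if k = n then 2 * (Real.pi : ℂ) else (0:ℂ) := by
  simp_rw [← Complex.exp_add]
  split_ifs with h
  · subst h
    simp
    ring
  · have hc : ((k:ℂ) - n) * Complex.I ≠ 0 := by
      apply mul_ne_zero _ Complex.I_ne_zero
      rw [sub_ne_zero]
      exact_mod_cast h
    have e : ∀ θ : ℝ, (k:ℂ) * θ * Complex.I + -(n * θ * Complex.I) = (((k:ℂ) - n) * Complex.I) * θ := fun θ => by ring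
    simp_rw [e]
    rw [integral_exp_mul_complex hc]
    have : Complex.exp (((k:ℂ) - n) * Complex.I * (Real.pi : ℝ)) = Complex.exp (((k:ℂ) - n) * Complex.I * ((-Real.pi : ℝ):ℂ)) := by
      rw [Complex.exp_eq_exp_iff_exists_int]
      refine ⟨(k:ℤ) - n, ?_⟩
      push_cast
      ring
    rw [this]
    simp

lemma fourier_c (s : ℝ) (hs : 0 < s) (n : ℕ) : 
    ∫ θ in (-Real.pi)..Real.pi, (∑' k, (pp k : ℂ) * qq s θ^k) * Complex.exp (-(n * θ * Complex.I)) = 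
    2 * Real.pi * (pp n * Real.exp (-(n*s)) : ℝ) := by
  have hsum := pp_summable (qq s 0) (qq_norm_lt s 0 hs)
  have hint : ∀ k : ℕ, ∫ θ in (-Real.pi)..Real.pi, (pp k : ℂ) * qq s θ^k * Complex.exp (-(n * θ * Complex.I)) =
      if k = n then 2 * (Real.pi : ℂ) * ((pp n * Real.exp (-(n*s)) : ℝ) : ℂ) else (0:ℂ) := by
    intro k
    have e : ∀ θ : ℝ, (pp k : ℂ) * qq s θ^k * Complex.exp (-(n * θ * Complex.I)) = 
      (pp k * Real.exp (-(k*s)) : ℝ) * (Complex.exp (k * θ * Complex.I) * Complex.exp (-(n * θ * Complex.I))) := by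
      intro θ
      rw [qq_pow]
      push_cast
      ring
    simp_rw [e]
    rw [intervalIntegral.integral_const_mul, orth]
    split_ifs with h
    · subst h; ring
    · simp
  have hnorm : ∀ θ : ℝ, ‖Complex.exp (-(n * θ * Complex.I))‖ = 1 := by
    intro θ
    rw [Complex.norm_exp]; simp
  have h := intervalIntegral.hasSum_integral_of_dominated_convergence (ι := ℕ) (μ := volume) (a := -Real.pi) (b := Real.pi)
    (F := fun k θ => (pp k : ℂ) * qq s θ^k * Complex.exp (-(n * θ * Complex.I)))
    (f := fun θ => (∑' k, (pp k : ℂ) * qq s θ^k) * Complex.exp (-(n * θ * Complex.I)))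
    (fun k _ => ‖(pp k : ℂ) * qq s 0^k‖)
    (fun k => by
      apply Continuous.aestronglyMeasurable
      unfold qq
      fun_prop)
    (fun k => by
      refine Eventually.of_forall fun θ _ => ?_
      rw [norm_mul, hnorm, mul_one, norm_mul, norm_mul, norm_pow, norm_pow, qq_norm, qq_norm])
    (Eventually.of_forall fun θ _ => hsum)
    (by simp)
    (Eventually.of_forall fun θ _ => by
      apply HasSum.mul_right
      exact (pp_summable (qq s θ) (qq_norm_lt s θ hs)).of_norm.hasSum)
  rw [← h.tsum_eq]
  simp_rw [hint]
  rw [tsum_ite_eq]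

lemma fourier_r (s : ℝ) (hs : 0 < s) (n : ℕ) : 
    ∫ θ in (-Real.pi)..Real.pi, Real.exp (-DD s θ) * Real.cos (AA s θ - n * θ) = 
    2 * Real.pi * (pp n * Real.exp (-(n*s))) * Real.exp (-∑' x, ww s x) := by
  have h := fourier_c s hs n
  simp_rw [gen_D s _ hs] at h
  have e : ∀ θ : ℝ, Complex.exp ((∑' x, ww s x : ℝ)) * Complex.exp (-(DD s θ : ℂ) + AA s θ * Complex.I) * Complex.exp (-(n * θ * Complex.I))
     = (Real.exp (∑' x, ww s x) : ℂ) * Complex.exp ((-DD s θ : ℝ) + (AA s θ - n * θ : ℝ) * Complex.I) := by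
    intro θ
    rw [Complex.ofReal_exp, mul_assoc, ← Complex.exp_add]
    push_cast
    ring_nf
  simp_rw [e] at h
  rw [intervalIntegral.integral_const_mul] at h
  have hD := DD_cont s hs
  have hA := AA_cont s hs
  have hi : IntervalIntegrable (fun θ : ℝ => Complex.exp ((-DD s θ : ℝ) + (AA s θ - n * θ : ℝ) * Complex.I)) volume (-Real.pi) Real.pi := by
    apply Continuous.intervalIntegrable
    fun_prop
  have h2 := congrArg Complex.re h
  rw [Complex.re_ofReal_mul] at h2
  have h3 := Complex.reCLM.intervalIntegral_comp_comm hi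
  simp only [Complex.reCLM_apply, Complex.exp_re] at h3
  rw [← h3] at h2
  have e2 : (2 * (Real.pi:ℂ) * ((pp n * Real.exp (-(n*s)) : ℝ) : ℂ)).re = 2 * Real.pi * (pp n * Real.exp (-(n*s))) := by
    rw [← Complex.ofReal_re (2 * Real.pi * (pp n * Real.exp (-(n*s))))]
    congr 1
    push_cast
    rfl
  rw [e2] at h2
  simp at h2
  rw [← h2, Real.exp_neg]
  field_simp

end

section

open Finset Filter Topology MeasureTheory

lemma DD_upper (s θ : ℝ) (hs : 0 < s) : DD s θ ≤ 16 * θ^2 / s^3 := by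
  have h2 := ww_sum s hs 2
  have hle : ∀ x, ww s x * (1 - Real.cos (NN x * θ)) ≤ θ^2/2 * (ww s x * NN x^2) := by
    intro x
    have := Real.one_sub_sq_div_two_le_cos (x := NN x * θ)
    have hw := ww_pos s x
    calc _ ≤ ww s x * ((NN x * θ)^2/2) := by gcongr; linarith
      _ = _ := by ring
  calc DD s θ ≤ ∑' x, θ^2/2 * (ww s x * NN x^2) := 
        Summable.tsum_le_tsum hle (DD_summable s θ hs) (h2.1.mul_left _)
    _ = θ^2/2 * ∑' x, (ww s x * NN x^2) := tsum_mul_left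
    _ ≤ θ^2/2 * (4 * ((Nat.factorial 2) * (2/s)^2) / s) := by gcongr; exact h2.2
    _ = _ := by norm_num [Nat.factorial]; field_simp; ring

lemma sin_sub_bound (x : ℝ) : |Real.sin x - x| ≤ 2 * |x|^3 := by
  rcases le_or_gt |x| 1 with h | h
  · have := Real.sin_bound h
    have h3 : |x|^5 ≤ |x|^3 := pow_le_pow_of_le_one (abs_nonneg _) h (by norm_num)
    have h4 : |x|^4 ≤ |x|^3 := pow_le_pow_of_le_one (abs_nonneg _) h (by norm_num)
    have e : Real.sin x - x = (Real.sin x - (x - x^3/6)) + (-(x^3/6)) := by ring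
    have e2 : |-(x^3/6)| = |x|^3/6 := by rw [abs_neg, abs_div, abs_pow]; norm_num
    have e3 : 0 ≤ |x|^3 := by positivity
    have e4 := abs_add_le (Real.sin x - (x - x^3/6)) (-(x^3/6))
    rw [← e, e2] at e4
    linarith
  · have h1 := Real.abs_sin_le_one x
    have h2 := abs_sub (Real.sin x) x
    have h3 : |x| ≤ |x|^3 := le_self_pow₀ h.le (by norm_num)
    linarith

lemma phi_bound (s θ : ℝ) (hs : 0 < s) (n : ℕ) (hn : (n:ℝ) = Real.pi^2/6/s^2) : 
    |AA s θ - n * θ| ≤ 4 * |θ| / s + 384 * |θ|^3 / s^4 := by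
  have h3 := ww_sum s hs 3
  have h1 := (ww_sum s hs 1).1
  simp only [pow_one] at h1
  have hS := S1 s hs
  rw [← hn] at hS
  have hd : |AA s θ - (∑' x, ww s x * NN x) * θ| ≤ 384 * |θ|^3 / s^4 := by
    unfold AA
    rw [← tsum_mul_right, ← (AA_summable s θ hs).tsum_sub (h1.mul_right θ), ← Real.norm_eq_abs]
    refine le_trans (tsum_of_norm_bounded (h3.1.mul_left (2*|θ|^3)).hasSum (fun x => ?_)) ?_
    · have hw := ww_pos s x
      have hN := NN_pos x
      rw [mul_assoc, ← mul_sub, norm_mul, Real.norm_of_nonneg hw.le, Real.norm_eq_abs]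
      calc _ ≤ ww s x * (2 * |NN x * θ|^3) := by gcongr; exact sin_sub_bound _
        _ = _ := by rw [abs_mul, abs_of_pos hN]; ring
    · rw [tsum_mul_left]
      calc _ ≤ 2*|θ|^3 * (4 * ((Nat.factorial 3) * (2/s)^3) / s) := by gcongr; exact h3.2
        _ = _ := by norm_num [Nat.factorial]; field_simp; ring
  have e : AA s θ - n * θ = (AA s θ - (∑' x, ww s x * NN x) * θ) + ((∑' x, ww s x * NN x) - n) * θ := by ring
  have e4 := abs_add_le (AA s θ - (∑' x, ww s x * NN x) * θ) (((∑' x, ww s x * NN x) - n) * θ)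
  rw [← e, abs_mul] at e4
  have e5 := mul_le_mul_of_nonneg_right hS (abs_nonneg θ)
  have e6 : 4/s * |θ| = 4 * |θ| / s := by ring
  linarith

lemma cos_series (s θ : ℝ) (hs : 0 < s) : HasSum (fun k : ℕ => Real.exp (-(((k:ℝ)+1)*s)) * (1 - Real.cos (((k:ℝ)+1)*θ)))
    (Real.exp (-s) * (1 + Real.exp (-s)) * (1 - Real.cos θ) / 
      ((1 - Real.exp (-s)) * ((1 - Real.exp (-s))^2 + 2 * Real.exp (-s) * (1 - Real.cos θ)))) := by
  have h1 := geo_exp s hs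
  have h2 := (hasSum_geometric_of_norm_lt_one (qq_norm_lt s θ hs)).mul_left (qq s θ)
  have h3 := Complex.hasSum_re h2
  have ha : Real.exp (-s) < 1 := by simpa using hs
  have ha0 := Real.exp_pos (-s)
  set a := Real.exp (-s) with hadef
  have hq : qq s θ = (a * Real.cos θ : ℝ) + (a * Real.sin θ : ℝ) * Complex.I := by
    have := qq_pow s θ 1
    rw [pow_one] at this
    rw [this]
    push_cast
    rw [one_mul, one_mul, Complex.exp_mul_I, hadef]
    push_cast
    ring
  have hden : 0 < (1 - a)^2 + 2 * a * (1 - Real.cos θ) := by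
    have : 0 < (1-a)^2 := by nlinarith
    have := one_sub_cos_nonneg θ
    positivity
  have e3 : (qq s θ * (1 - qq s θ)⁻¹).re = (a * Real.cos θ - a^2) / ((1 - a)^2 + 2 * a * (1 - Real.cos θ)) := by
    have hns : Complex.normSq (1 - qq s θ) = (1 - a)^2 + 2 * a * (1 - Real.cos θ) := by
      rw [hq, Complex.normSq_apply]
      simp [-Complex.ofReal_cos, -Complex.ofReal_sin, -Complex.ofReal_mul]
      nlinarith [Real.sin_sq_add_cos_sq θ]
    rw [Complex.mul_re, Complex.inv_re, Complex.inv_im, hns]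
    rw [hq]
    simp [-Complex.ofReal_cos, -Complex.ofReal_sin, -Complex.ofReal_mul]
    rw [mul_div_assoc', mul_div_assoc', ← sub_div]
    congr 1
    linear_combination (-a^2) * Real.sin_sq_add_cos_sq θ
  rw [e3] at h3
  have h4 := h1.sub h3
  convert! h4 using 1
  · ext k
    rw [← pow_succ', qq_pow, Complex.re_ofReal_mul]
    have : (Complex.exp (((k+1:ℕ):ℂ) * θ * Complex.I)).re = Real.cos (((k:ℝ)+1)*θ) := by
      rw [← Complex.exp_ofReal_mul_I_re]
      push_cast
      rfl
    rw [this]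
    push_cast
    ring
  · have : 1 - a ≠ 0 := by linarith
    rw [div_sub_div _ _ this hden.ne']
    congr 1
    ring

lemma DD_lower (s θ : ℝ) (hs : 0 < s) (hs2 : s ≤ 1/2) (hθ : |θ| ≤ Real.pi) : 
    θ^2 / (10 * s * (s^2 + θ^2)) ≤ DD s θ := by
  have h1 := cos_series s θ hs
  have hD := DD_summable s θ hs
  have h2 : ∑' k : ℕ, Real.exp (-(((k:ℝ)+1)*s)) * (1 - Real.cos (((k:ℝ)+1)*θ)) ≤ DD s θ := by
    have hinj : Function.Injective (fun k : ℕ => ((k, 0) : ℕ × ℕ)) := fun a b h => by simpa using h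
    refine h1.summable.tsum_le_tsum_of_inj (fun k : ℕ => ((k, 0) : ℕ × ℕ)) hinj 
      (fun x _ => mul_nonneg (ww_pos s x).le (one_sub_cos_nonneg _)) (fun k => le_of_eq ?_) hD
    simp [ww, NN, mul_comm]
  rw [h1.tsum_eq] at h2
  refine le_trans ?_ h2
  have ha1 : 1 - s ≤ Real.exp (-s) := by linarith [Real.add_one_le_exp (-s)]
  have ha : Real.exp (-s) < 1 := by simpa using hs
  set a := Real.exp (-s)
  have hx : θ^2/5 ≤ 1 - Real.cos θ := by
    have := Real.cos_le_one_sub_mul_cos_sq hθ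
    have h3 : 1/5 ≤ 2 / Real.pi^2 := by
      rw [div_le_div_iff₀ (by norm_num) (by positivity)]
      nlinarith [Real.pi_gt_three, Real.pi_lt_d2]
    nlinarith [sq_nonneg θ]
  set x := 1 - Real.cos θ
  rcases eq_or_ne θ 0 with h0 | h0
  · have : 0 ≤ x := le_trans (by positivity) hx
    have : 0 < 1 - a := by linarith
    have : 0 < a := by linarith
    rw [h0]
    simp
    positivity
  have hθ2 : 0 < θ^2 := by positivity
  have hx0 : 0 < x := by linarith
  have h1a : 0 < 1 - a := by linarith
  have ha2 : 1/2 ≤ a := by linarith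
  have hden : 0 < (1-a)^2 + 2 * a * x := by positivity
  calc θ^2 / (10 * s * (s^2 + θ^2)) ≤ (3/4 * x) / (s * (s^2 + 2 * x)) := by
        rw [div_le_div_iff₀ (by positivity) (by positivity)]
        have : θ^2 * (s^2 + 2*x) ≤ 3/4 * x * (10 * (s^2+θ^2)) := by
          nlinarith [mul_pos hθ2 hx0, sq_nonneg s, mul_nonneg (sq_nonneg s) (sub_nonneg.2 hx)]
        nlinarith
    _ ≤ (a * (1 + a) * x) / ((1 - a) * ((1-a)^2 + 2 * a * x)) := by
        gcongr
        · nlinarith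
        · linarith
        · linarith
        · nlinarith

lemma exp_D_le (s θ : ℝ) (hs : 0 < s) (hs2 : s ≤ 1/2) (hθ : |θ| ≤ Real.pi) : 
    Real.exp (-DD s θ) ≤ Real.exp (-(θ^2/(20*s^3))) + Real.exp (-(1/(20*s))) := by
  have h := DD_lower s θ hs hs2 hθ
  rcases le_or_gt (θ^2) (s^2) with h1 | h1
  · have : θ^2/(20*s^3) ≤ θ^2 / (10 * s * (s^2 + θ^2)) := by
      apply div_le_div_of_nonneg_left (sq_nonneg _) (by positivity)
      nlinarith
    have := Real.exp_le_exp.2 (neg_le_neg (this.trans h))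
    linarith [Real.exp_pos (-(1/(20*s)))]
  · have : 1/(20*s) ≤ θ^2 / (10 * s * (s^2 + θ^2)) := by
      rw [div_le_div_iff₀ (by positivity) (by positivity)]
      nlinarith
    have := Real.exp_le_exp.2 (neg_le_neg (this.trans h))
    linarith [Real.exp_pos (-(θ^2/(20*s^3)))]

lemma exp_small (k : ℕ) (c s : ℝ) (hc : 0 < c) (hs : 0 < s) : Real.exp (-(1/(c*s))) ≤ (Nat.factorial k) * (c*s)^k := by
  have h := Real.pow_div_factorial_le_exp (1/(c*s)) (by positivity) k
  rw [Real.exp_neg, inv_le_comm₀ (Real.exp_pos _) (by positivity)]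
  refine le_trans (le_of_eq ?_) h
  rw [one_div, inv_pow]
  field_simp

lemma moment (i : ℕ) : ∃ K > 0, ∀ s : ℝ, 0 < s → s ≤ 1/2 → 
    ∫ θ in (-Real.pi)..Real.pi, θ^(2*i) * Real.exp (-DD s θ) ≤ K * (s^(3*i) * (s * √s)) := by
  have hpi := Real.pi_pos
  refine ⟨(Nat.factorial i) * 40^i * √(40 * Real.pi) + 2 * Real.pi * Real.pi^(2*i) * ((Nat.factorial (3*i+2)) * 20^(3*i+2)), by positivity, ?_⟩
  intro s hs hs2
  have hpt : ∀ θ ∈ Set.Icc (-Real.pi) Real.pi, θ^(2*i) * Real.exp (-DD s θ) ≤ 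
      (Nat.factorial i) * (40*s^3)^i * Real.exp (-(1/(40*s^3)) * θ^2) + Real.pi^(2*i) * ((Nat.factorial (3*i+2)) * (20*s)^(3*i+2)) := by
    intro θ hθ
    have hab : |θ| ≤ Real.pi := abs_le.2 hθ
    have h1 := exp_D_le s θ hs hs2 hab
    have h0 : 0 ≤ θ^(2*i) := by rw [pow_mul]; positivity
    have h2 : θ^(2*i) ≤ Real.pi^(2*i) := by
      rw [pow_mul, pow_mul]
      exact pow_le_pow_left₀ (sq_nonneg _) (sq_le_sq' hθ.1 hθ.2) _
    have h3 := exp_small (3*i+2) 20 s (by norm_num) hs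
    have h4 : θ^(2*i) * Real.exp (-(θ^2/(20*s^3))) ≤ (Nat.factorial i) * (40*s^3)^i * Real.exp (-(1/(40*s^3)) * θ^2) := by
      have h5 := Real.pow_div_factorial_le_exp (θ^2/(40*s^3)) (by positivity) i
      have e : Real.exp (-(θ^2/(20*s^3))) = Real.exp (-(1/(40*s^3)) * θ^2) * Real.exp (-(θ^2/(40*s^3))) := by
        rw [← Real.exp_add]; congr 1; field_simp; ring
      have e2 : Real.exp (θ^2/(40*s^3)) * Real.exp (-(θ^2/(40*s^3))) = 1 := by rw [← Real.exp_add]; simp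
      rw [div_le_iff₀ (by positivity), div_pow, div_le_iff₀ (by positivity), ← pow_mul] at h5
      rw [e]
      have hE := Real.exp_pos (-(1/(40*s^3)) * θ^2)
      have hE2 := Real.exp_pos (-(θ^2/(40*s^3)))
      calc _ ≤ (Real.exp (θ^2/(40*s^3)) * (Nat.factorial i) * (40*s^3)^i) * (Real.exp (-(1/(40*s^3)) * θ^2) * Real.exp (-(θ^2/(40*s^3)))) := by gcongr
        _ = (Real.exp (θ^2/(40*s^3)) * Real.exp (-(θ^2/(40*s^3)))) * ((Nat.factorial i) * (40*s^3)^i * Real.exp (-(1/(40*s^3)) * θ^2)) := by ring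
        _ = _ := by rw [e2, one_mul]
    calc _ ≤ θ^(2*i) * (Real.exp (-(θ^2/(20*s^3))) + Real.exp (-(1/(20*s)))) := by gcongr
      _ = θ^(2*i) * Real.exp (-(θ^2/(20*s^3))) + θ^(2*i) * Real.exp (-(1/(20*s))) := by ring
      _ ≤ _ := by gcongr
  have hD := DD_cont s hs
  have hgi : Integrable (fun θ : ℝ => Real.exp (-(1/(40*s^3)) * θ^2)) := integrable_exp_neg_mul_sq (by positivity)
  have hG : ∫ θ in (-Real.pi)..Real.pi, Real.exp (-(1/(40*s^3)) * θ^2) ≤ √(40 * Real.pi) * (s * √s) := by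
    rw [intervalIntegral.integral_of_le (by linarith)]
    refine le_trans (setIntegral_le_integral hgi (Eventually.of_forall fun θ => (Real.exp_pos _).le)) ?_
    rw [integral_gaussian]
    apply le_of_eq
    rw [show Real.pi / (1/(40*s^3)) = (40 * Real.pi) * (s^2 * s) by field_simp, Real.sqrt_mul (by positivity) (s^2*s),
      Real.sqrt_mul (by positivity) s, Real.sqrt_sq hs.le]
  have hss : s ≤ √s := by
    apply Real.le_sqrt_of_sq_le
    nlinarith
  calc _ ≤ ∫ θ in (-Real.pi)..Real.pi, ((Nat.factorial i) * (40*s^3)^i * Real.exp (-(1/(40*s^3)) * θ^2) + Real.pi^(2*i) * ((Nat.factorial (3*i+2)) * (20*s)^(3*i+2))) := by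
        apply intervalIntegral.integral_mono_on (by linarith) _ _ hpt
        · apply Continuous.intervalIntegrable; fun_prop
        · apply Continuous.intervalIntegrable; fun_prop
    _ = (Nat.factorial i) * (40*s^3)^i * (∫ θ in (-Real.pi)..Real.pi, Real.exp (-(1/(40*s^3)) * θ^2)) + 2 * Real.pi * (Real.pi^(2*i) * ((Nat.factorial (3*i+2)) * (20*s)^(3*i+2))) := by
        rw [intervalIntegral.integral_add, intervalIntegral.integral_const_mul, intervalIntegral.integral_const]
        · rw [smul_eq_mul]; ring
        · apply Continuous.intervalIntegrable; fun_prop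
        · apply Continuous.intervalIntegrable; fun_prop
    _ ≤ (Nat.factorial i) * (40*s^3)^i * (√(40 * Real.pi) * (s * √s)) + 2 * Real.pi * (Real.pi^(2*i) * ((Nat.factorial (3*i+2)) * (20^(3*i+2) * (s^(3*i) * (s * √s))))) := by
        gcongr
        rw [mul_pow, pow_add s, sq]
        gcongr
    _ = _ := by rw [mul_pow, ← pow_mul]; ring

end

section

open Finset Filter Topology MeasureTheory

lemma M0_lower (s : ℝ) (hs : 0 < s) (hs2 : s ≤ 1/2) : 
    2 * Real.exp (-16) * (s * √s) ≤ ∫ θ in (-Real.pi)..Real.pi, Real.exp (-DD s θ) := by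
  have hD := DD_cont s hs
  have hsq : √s ≤ 1 := (Real.sqrt_le_sqrt (by linarith : s ≤ 1)).trans (by simp)
  have h0 : 0 < √s := Real.sqrt_pos.2 hs
  have hsp : s * √s ≤ Real.pi := by nlinarith [Real.pi_gt_three]
  have hσ : 0 < s * √s := by positivity
  have hi : ∀ a b, IntervalIntegrable (fun θ => Real.exp (-DD s θ)) volume a b := fun a b => by
    apply Continuous.intervalIntegrable; fun_prop
  have h1 : ∫ θ in (-(s*√s))..(s*√s), Real.exp (-DD s θ) ≤ ∫ θ in (-Real.pi)..Real.pi, Real.exp (-DD s θ) := by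
    apply intervalIntegral.integral_mono_interval (by linarith) (by linarith) hsp
    · exact Eventually.of_forall fun θ => (Real.exp_pos _).le
    · exact hi _ _
  refine le_trans ?_ h1
  have h2 : ∫ θ in (-(s*√s))..(s*√s), Real.exp (-16) ≤ ∫ θ in (-(s*√s))..(s*√s), Real.exp (-DD s θ) := by
    apply intervalIntegral.integral_mono_on (by linarith) (by simp) (hi _ _)
    intro θ hθ
    apply Real.exp_le_exp.2
    have := DD_upper s θ hs
    have h3 : θ^2 ≤ s^3 := by
      have h4 : θ^2 ≤ (s*√s)^2 := sq_le_sq' hθ.1 hθ.2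
      rw [mul_pow, Real.sq_sqrt hs.le] at h4
      linarith
    have h5 : 16 * θ^2 / s^3 ≤ 16 := by
      rw [div_le_iff₀ (by positivity)]; linarith
    linarith
  refine le_trans (le_of_eq ?_) h2
  simp
  ring

lemma step : ∃ C > 0, ∃ s0 > 0, ∀ (n : ℕ) (s : ℝ), 0 < s → s ≤ s0 → (n:ℝ) = Real.pi^2/6/s^2 → 
    |(pp (n+1) : ℝ) * Real.exp (-s) - pp n| ≤ C * s^2 * pp n := by
  obtain ⟨K1, hK1, H1⟩ := moment 1
  obtain ⟨K2, hK2, H2⟩ := moment 2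
  obtain ⟨K3, hK3, H3⟩ := moment 3
  set Q := 16 * K1 + 384^2 * K3 with hQ
  have hQp : 0 < Q := by positivity
  refine ⟨(5*K1 + 384*K2) * Real.exp 16, by positivity, min (1/2) (Real.exp (-16) / Q), by positivity, ?_⟩
  intro n s hs hsle hn
  have hs2 : s ≤ 1/2 := hsle.trans (min_le_left _ _)
  have hsQ : Q * s ≤ Real.exp (-16) := by
    have := hsle.trans (min_le_right _ _)
    rwa [le_div_iff₀ hQp, mul_comm] at this
  have hD := DD_cont s hs
  have hA := AA_cont s hs
  have hpi := Real.pi_pos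
  set σ := s * √s with hσ
  have hσp : 0 < σ := by have := Real.sqrt_pos.2 hs; positivity
  have M1 := H1 s hs hs2
  have M2 := H2 s hs hs2
  have M3 := H3 s hs hs2
  have F0 := fourier_r s hs n
  have F1 := fourier_r s hs (n+1)
  have hphi := fun θ => phi_bound s θ hs n hn
  set I0 := ∫ θ in (-Real.pi)..Real.pi, Real.exp (-DD s θ) * Real.cos (AA s θ - n * θ) with hI0
  set I1 := ∫ θ in (-Real.pi)..Real.pi, Real.exp (-DD s θ) * Real.cos (AA s θ - (n+1:ℕ) * θ) with hI1
  -- lower bound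
  have hlow : Real.exp (-16) * σ ≤ I0 := by
    have hpt : ∀ θ : ℝ, Real.exp (-DD s θ) - (16/s^2) * (θ^(2*1) * Real.exp (-DD s θ)) - (384^2/s^8) * (θ^(2*3) * Real.exp (-DD s θ)) 
        ≤ Real.exp (-DD s θ) * Real.cos (AA s θ - n * θ) := by
      intro θ
      have hE := Real.exp_pos (-DD s θ)
      have h1 := Real.one_sub_sq_div_two_le_cos (x := AA s θ - n * θ)
      have h2 : (AA s θ - n * θ)^2 ≤ 2 * (16/s^2 * θ^2 + 384^2/s^8 * θ^6) := by
        have h3 : (AA s θ - n * θ)^2 ≤ (4 * |θ| / s + 384 * |θ|^3 / s^4)^2 := by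
          rw [← sq_abs]
          exact pow_le_pow_left₀ (abs_nonneg _) (hphi θ) 2
        have h4 : (4 * |θ| / s)^2 = 16/s^2 * θ^2 := by
          rw [div_pow, mul_pow, sq_abs]; ring
        have h5 : (384 * |θ|^3 / s^4)^2 = 384^2/s^8 * θ^6 := by
          rw [div_pow, mul_pow, ← pow_mul, mul_comm 3 2, pow_mul, sq_abs]; ring
        nlinarith [sq_nonneg (4 * |θ| / s - 384 * |θ|^3 / s^4)]
      have h6 : 1 - (16/s^2 * θ^2 + 384^2/s^8 * θ^6) ≤ Real.cos (AA s θ - n * θ) := by linarith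
      calc _ = Real.exp (-DD s θ) * (1 - (16/s^2 * θ^2 + 384^2/s^8 * θ^6)) := by ring
        _ ≤ _ := by gcongr
    have hint : ∫ θ in (-Real.pi)..Real.pi, (Real.exp (-DD s θ) - (16/s^2) * (θ^(2*1) * Real.exp (-DD s θ)) - (384^2/s^8) * (θ^(2*3) * Real.exp (-DD s θ))) ≤ I0 := by
      apply intervalIntegral.integral_mono_on (by linarith) _ _ (fun θ _ => hpt θ)
      · apply Continuous.intervalIntegrable; fun_prop
      · apply Continuous.intervalIntegrable; fun_prop
    rw [intervalIntegral.integral_sub, intervalIntegral.integral_sub, intervalIntegral.integral_const_mul, intervalIntegral.integral_const_mul] at hint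
    rotate_left
    · apply Continuous.intervalIntegrable; fun_prop
    · apply Continuous.intervalIntegrable; fun_prop
    · apply Continuous.intervalIntegrable; fun_prop
    · apply Continuous.intervalIntegrable; fun_prop
    have hM0 := M0_lower s hs hs2
    have h1 : (16/s^2) * ∫ θ in (-Real.pi)..Real.pi, θ^(2*1) * Real.exp (-DD s θ) ≤ 16 * K1 * s * σ := by
      calc _ ≤ (16/s^2) * (K1 * (s^(3*1) * σ)) := by gcongr
        _ = _ := by field_simp
    have h3 : (384^2/s^8) * ∫ θ in (-Real.pi)..Real.pi, θ^(2*3) * Real.exp (-DD s θ) ≤ 384^2 * K3 * s * σ := by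
      calc _ ≤ (384^2/s^8) * (K3 * (s^(3*3) * σ)) := by gcongr
        _ = _ := by field_simp
    have h4 : Q * s * σ ≤ Real.exp (-16) * σ := by gcongr
    rw [hQ] at h4
    linarith
  have hdiff : |I1 - I0| ≤ (5*K1 + 384*K2) * s^2 * σ := by
    rw [hI1, hI0, ← intervalIntegral.integral_sub]
    rotate_left
    · apply Continuous.intervalIntegrable; fun_prop
    · apply Continuous.intervalIntegrable; fun_prop
    have hpt : ∀ θ : ℝ, ‖Real.exp (-DD s θ) * Real.cos (AA s θ - (n+1:ℕ) * θ) - Real.exp (-DD s θ) * Real.cos (AA s θ - n * θ)‖ ≤ 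
       (5/s) * (θ^(2*1) * Real.exp (-DD s θ)) + (384/s^4) * (θ^(2*2) * Real.exp (-DD s θ)) := by
      intro θ
      have hE := Real.exp_pos (-DD s θ)
      rw [← mul_sub, norm_mul, Real.norm_of_nonneg hE.le, Real.norm_eq_abs]
      have e : Real.cos (AA s θ - (n+1:ℕ) * θ) - Real.cos (AA s θ - n * θ) = 
        Real.cos (AA s θ - n * θ) * (-(1 - Real.cos θ)) + Real.sin (AA s θ - n * θ) * Real.sin θ := by
        rw [show AA s θ - (n+1:ℕ) * θ = (AA s θ - n * θ) - θ by push_cast; ring, Real.cos_sub]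
        ring
      have h1 : |Real.cos (AA s θ - n * θ) * (-(1 - Real.cos θ))| ≤ θ^2/2 := by
        rw [abs_mul, abs_neg, abs_of_nonneg (one_sub_cos_nonneg θ)]
        have := Real.abs_cos_le_one (AA s θ - n * θ)
        have h2 := Real.one_sub_sq_div_two_le_cos (x := θ)
        nlinarith [one_sub_cos_nonneg θ]
      have h2 : |Real.sin (AA s θ - n * θ) * Real.sin θ| ≤ 4 / s * θ^2 + 384/s^4 * θ^4 := by
        rw [abs_mul]
        calc _ ≤ (4 * |θ| / s + 384 * |θ|^3 / s^4) * |θ| := by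
              exact mul_le_mul (Real.abs_sin_le_abs.trans (hphi θ)) Real.abs_sin_le_abs (abs_nonneg _) (by positivity)
          _ = 4 / s * |θ|^2 + 384/s^4 * (|θ|^2)^2 := by ring
          _ = _ := by rw [sq_abs]; ring
      have h3 : θ^2/2 ≤ 1/s * θ^2 := by
        have : 1/2 ≤ 1/s := one_div_le_one_div_of_le hs (by linarith)
        nlinarith [sq_nonneg θ]
      have h4 : |Real.cos (AA s θ - (n+1:ℕ) * θ) - Real.cos (AA s θ - n * θ)| ≤ 5/s * θ^2 + 384/s^4 * θ^4 := by
        rw [e]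
        refine (abs_add_le _ _).trans ?_
        have : 5/s * θ^2 = 1/s*θ^2 + 4/s*θ^2 := by ring
        linarith
      calc _ ≤ Real.exp (-DD s θ) * (5/s * θ^2 + 384/s^4 * θ^4) := by gcongr
        _ = _ := by ring
    rw [← Real.norm_eq_abs]
    have hc : IntervalIntegrable (fun θ => (5/s) * (θ^(2*1) * Real.exp (-DD s θ)) + (384/s^4) * (θ^(2*2) * Real.exp (-DD s θ))) volume (-Real.pi) Real.pi := by
      apply Continuous.intervalIntegrable; fun_prop
    refine (intervalIntegral.norm_integral_le_of_norm_le (by linarith) (Eventually.of_forall fun θ _ => hpt θ) hc).trans ?_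
    rw [intervalIntegral.integral_add, intervalIntegral.integral_const_mul, intervalIntegral.integral_const_mul]
    rotate_left
    · apply Continuous.intervalIntegrable; fun_prop
    · apply Continuous.intervalIntegrable; fun_prop
    calc _ ≤ (5/s) * (K1 * (s^(3*1) * σ)) + (384/s^4) * (K2 * (s^(3*2) * σ)) := by gcongr
      _ = _ := by field_simp; ring
  have hfin : |I1 - I0| ≤ (5*K1 + 384*K2) * Real.exp 16 * s^2 * I0 := by
    have : σ ≤ Real.exp 16 * I0 := by
      rw [Real.exp_neg, inv_mul_le_iff₀ (Real.exp_pos _)] at hlow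
      exact hlow
    calc _ ≤ _ := hdiff
      _ ≤ (5*K1 + 384*K2) * s^2 * (Real.exp 16 * I0) := by gcongr
      _ = _ := by ring
  set P := 2 * Real.pi * Real.exp (-(n*s)) * Real.exp (-∑' x, ww s x) with hP
  have hPp : 0 < P := by positivity
  have e0 : I0 = P * pp n := by rw [F0]; ring
  have e1 : I1 = P * (pp (n+1) * Real.exp (-s)) := by
    rw [F1, show -(((n+1:ℕ):ℝ) * s) = -(n*s) + -s by push_cast; ring, Real.exp_add]; ring
  rw [e0, e1, ← mul_sub, abs_mul, abs_of_pos hPp] at hfin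
  refine le_of_mul_le_mul_left (hfin.trans (le_of_eq ?_)) hPp
  ring

end

section

open Finset Filter Topology MeasureTheory

noncomputable def ss (n : ℕ) : ℝ := Real.pi / √6 / √n

lemma ss_sq (n : ℕ) : ss n ^ 2 = Real.pi^2/6/n := by
  unfold ss
  rw [div_pow, div_pow, Real.sq_sqrt (by norm_num), Real.sq_sqrt (by positivity)]

lemma pp_pos (n : ℕ) : (0:ℝ) < pp n := by
  unfold pp
  exact_mod_cast Fintype.card_pos

lemma abs_log_le (x δ : ℝ) (h : |x - 1| ≤ δ) (hδ : δ ≤ 1/2) : |Real.log x| ≤ 2 * δ := by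
  obtain ⟨h1, h2⟩ := abs_le.1 h
  have hx : 1/2 ≤ x := by linarith
  have hx0 : 0 < x := by linarith
  have a := Real.log_le_sub_one_of_pos hx0
  have b := Real.one_sub_inv_le_log_of_pos hx0
  have c : -(2*δ) ≤ 1 - x⁻¹ := by
    have : 1 - x⁻¹ = (x-1)/x := by field_simp
    rw [this, le_div_iff₀ hx0]
    nlinarith
  rw [abs_le]; constructor <;> linarith

lemma logstep : ∃ C > (0:ℝ), ∃ N : ℕ, 1 ≤ N ∧ ∀ n : ℕ, N ≤ n → 
    |Real.log (pp (n+1)) - Real.log (pp n) - ss n| ≤ C / n := by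
  obtain ⟨C, hC, s0, hs0, H⟩ := step
  obtain ⟨N1, hN1⟩ := exists_nat_ge (Real.pi^2/6/s0^2)
  obtain ⟨N2, hN2⟩ := exists_nat_ge (2 * C * (Real.pi^2/6))
  have hpi := Real.pi_pos
  refine ⟨2 * C * (Real.pi^2/6), by positivity, N1 + N2 + 1, by omega, ?_⟩
  intro n hn
  have hn' : (N1:ℝ) + N2 + 1 ≤ n := by exact_mod_cast hn
  have hn0 : (0:ℝ) < n := by have : (0:ℝ) ≤ N1 := by positivity
                             have : (0:ℝ) ≤ N2 := by positivity
                             linarith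
  have hN1n : (N1:ℝ) ≤ n := by exact_mod_cast (by omega : N1 ≤ n)
  have hN2n : (N2:ℝ) ≤ n := by exact_mod_cast (by omega : N2 ≤ n)
  have hs : 0 < ss n := by unfold ss; positivity
  have hsq := ss_sq n
  have hss : ss n ≤ s0 := by
    apply le_of_sq_le_sq _ hs0.le
    rw [hsq, div_le_iff₀ hn0]
    have := hN1.trans hN1n
    rw [div_le_iff₀ (by positivity)] at this
    linarith
  have h := H n (ss n) hs hss (by rw [hsq]; field_simp)
  have hp := pp_pos n
  have hp1 := pp_pos (n+1)
  have hx : |pp (n+1) * Real.exp (-ss n) / pp n - 1| ≤ C * (Real.pi^2/6) / n := by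
    rw [show (pp (n+1) * Real.exp (-ss n) / pp n - 1 : ℝ) = (pp (n+1) * Real.exp (-ss n) - pp n) / pp n by field_simp]
    rw [abs_div, abs_of_pos hp, div_le_iff₀ hp]
    refine h.trans (le_of_eq ?_)
    rw [hsq]; ring
  have := abs_log_le _ _ hx (by rw [div_le_iff₀ hn0]; linarith)
  rw [Real.log_div (by positivity) hp.ne', Real.log_mul hp1.ne' (by positivity), Real.log_exp] at this
  calc _ = |Real.log (pp (n+1)) + -ss n - Real.log (pp n)| := by congr 1; ring
    _ ≤ _ := this
    _ = _ := by ring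

lemma ss_diff (X m : ℕ) (hX : 0 < X) (hm : X ≤ 2 * m) : |ss m - ss X| ≤ 4 * (|(m:ℝ) - X| / (X * √X)) := by
  have hX' : (0:ℝ) < X := by exact_mod_cast hX
  have hm' : (X:ℝ) ≤ 2 * m := by exact_mod_cast hm
  have hm0 : (0:ℝ) < m := by linarith
  unfold ss
  have ha := Real.sqrt_pos.2 hX'
  have hb := Real.sqrt_pos.2 hm0
  have ea := Real.sq_sqrt hX'.le
  have eb := Real.sq_sqrt hm0.le
  set a := √(X:ℝ)
  set b := √(m:ℝ)
  have hab : a ≤ 2 * b := by nlinarith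
  have hc : Real.pi / √6 ≤ 2 := by
    rw [div_le_iff₀ (by positivity)]
    have : 2 ≤ √(6:ℝ) := by apply Real.le_sqrt_of_sq_le; norm_num
    linarith [Real.pi_le_four]
  have hpi := Real.pi_pos
  have e : Real.pi / √6 / b - Real.pi / √6 / a = Real.pi / √6 * (-((m:ℝ) - X) / ((a+b)*(a*b))) := by
    rw [← ea, ← eb]; field_simp; ring
  rw [e, abs_mul, abs_of_pos (by positivity : 0 < Real.pi / √6), abs_div, abs_neg, abs_of_pos (by positivity : 0 < (a+b)*(a*b))]
  have h2 : |(m:ℝ) - X| / ((a+b)*(a*b)) ≤ 2 * (|(m:ℝ) - X| / (X * a)) := by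
    rw [← ea]
    calc _ ≤ |b^2 - a^2| / (a^2*a/2) := by
          rw [eb, ea]
          gcongr
          rw [← ea]
          nlinarith [mul_pos ha hb, mul_pos ha ha, mul_pos (mul_pos ha ha) hb]
      _ = _ := by rw [eb]; field_simp
  calc _ ≤ 2 * (2 * (|(m:ℝ) - X| / (X * a))) := by gcongr
    _ = _ := by ring

lemma chain : ∃ C > (0:ℝ), ∃ N : ℕ, 1 ≤ N ∧ ∀ X : ℕ, N ≤ X → ∀ r : ℤ, 2 * |r| ≤ X → ∃ m : ℕ, (m:ℤ) = X + r ∧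
    |Real.log (pp m) - Real.log (pp X) - r * ss X| ≤ C * (|(r:ℝ)| / X + (r:ℝ)^2 / (X * √X)) := by
  obtain ⟨C, hC, N, hN, H⟩ := logstep
  refine ⟨2*C+4, by positivity, 2*N, by omega, ?_⟩
  intro X hX r hr
  have hX0 : 0 < X := by omega
  have hX' : (0:ℝ) < X := by exact_mod_cast hX0
  have hsX := Real.sqrt_pos.2 hX'
  have key : ∀ R : ℝ, ∀ m : ℕ, X ≤ 2 * m → |(m:ℝ) - X| ≤ R → 
      |Real.log (pp (m+1)) - Real.log (pp m) - ss X| ≤ 2*C/X + 4 * (R / (X*√X)) := by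
    intro R m hm hR
    have h1 := H m (by omega)
    have h2 := ss_diff X m hX0 hm
    have hm' : (X:ℝ) ≤ 2 * m := by exact_mod_cast hm
    have h3 : C / m ≤ 2*C/X := by
      rw [div_le_div_iff₀ (by linarith) hX']; nlinarith
    have h4 : 4 * (|(m:ℝ) - X| / (X * √X)) ≤ 4 * (R / (X*√X)) := by gcongr
    calc _ = |(Real.log (pp (m+1)) - Real.log (pp m) - ss m) + (ss m - ss X)| := by congr 1; ring
      _ ≤ _ := abs_add_le _ _
      _ ≤ _ := by linarith
  have fin : ∀ k : ℕ, (k:ℝ) * (2*C/X + 4 * (k / (X*√X))) ≤ (2*C+4) * (k / X + k^2 / (X * √X)) := by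
    intro k
    have a : 0 ≤ (k:ℝ)/X := by positivity
    have b : 0 ≤ (k:ℝ)^2/(X*√X) := by positivity
    calc _ = 2*C*(k/X) + 4 * (k^2/(X*√X)) := by ring
      _ ≤ _ := by nlinarith
  obtain ⟨k, rfl | rfl⟩ := Int.eq_nat_or_neg r
  · refine ⟨X + k, by push_cast; rfl, ?_⟩
    have ind : ∀ j : ℕ, j ≤ k → |Real.log (pp (X+j)) - Real.log (pp X) - j * ss X| ≤ j * (2*C/X + 4 * (k / (X*√X))) := by
      intro j
      induction j with
      | zero => simp
      | succ j ih =>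
        intro hj
        have h1 := ih (by omega)
        have h2 := key k (X+j) (by omega) (by
          push_cast
          rw [add_sub_cancel_left, abs_of_nonneg (by positivity)]
          exact_mod_cast (by omega : j ≤ k))
        calc _ = |(Real.log (pp (X+j+1)) - Real.log (pp (X+j)) - ss X) + (Real.log (pp (X+j)) - Real.log (pp X) - j * ss X)| := by
              congr 1; push_cast; rw [← add_assoc]; ring
          _ ≤ _ := abs_add_le _ _
          _ ≤ _ := by push_cast; linarith
    have := (ind k le_rfl).trans (fin k)
    simpa using this
  · have hk : 2 * k ≤ X := by
      rw [abs_neg] at hr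
      have : |(k:ℤ)| = k := abs_of_nonneg (by positivity)
      omega
    refine ⟨X - k, by omega, ?_⟩
    have ind : ∀ j : ℕ, j ≤ k → |Real.log (pp (X-j)) - Real.log (pp X) + j * ss X| ≤ j * (2*C/X + 4 * (k / (X*√X))) := by
      intro j
      induction j with
      | zero => simp
      | succ j ih =>
        intro hj
        have h1 := ih (by omega)
        have h2 := key k (X-(j+1)) (by omega) (by
          rw [Nat.cast_sub (by omega), sub_sub_cancel_left, abs_neg, abs_of_nonneg (by positivity)]
          exact_mod_cast hj)
        rw [show X - (j+1) + 1 = X - j by omega] at h2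
        calc _ = |(Real.log (pp (X-j)) - Real.log (pp X) + j * ss X) - (Real.log (pp (X-j)) - Real.log (pp (X-(j+1))) - ss X)| := by
              congr 1; push_cast; ring
          _ ≤ _ := abs_sub _ _
          _ ≤ _ := by push_cast; linarith
    have := (ind k le_rfl).trans (fin k)
    simpa using this

lemma exp_sub_one_le (u M : ℝ) (h : |u| ≤ M) : |Real.exp u - 1| ≤ |u| * Real.exp M := by
  have h1 : Real.exp |u| ≤ Real.exp M := Real.exp_le_exp.2 h
  have h0 : 1 ≤ Real.exp M := by
    rw [← Real.exp_zero]; exact Real.exp_le_exp.2 ((abs_nonneg u).trans h)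
  rcases le_total 0 u with hu | hu
  · rw [abs_of_nonneg hu] at *
    rw [abs_of_nonneg (by linarith [Real.add_one_le_exp u])]
    have := Real.add_one_le_exp (-u)
    rw [Real.exp_neg] at this
    have hp := Real.exp_pos u
    have h3 : Real.exp u - 1 ≤ u * Real.exp u := by
      have : (-u+1) * Real.exp u ≤ 1 := by
        calc _ ≤ (Real.exp u)⁻¹ * Real.exp u := by gcongr
          _ = 1 := by field_simp
      linarith
    nlinarith
  · have : Real.exp u ≤ 1 := by rw [← Real.exp_zero]; exact Real.exp_le_exp.2 hu
    rw [abs_of_nonpos (by linarith), abs_of_nonpos hu]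
    have := Real.add_one_le_exp u
    nlinarith

lemma final : ∃ C > (0:ℝ), ∃ N : ℕ, 1 ≤ N ∧ ∀ X : ℕ, N ≤ X → ∀ r : ℤ, |(r:ℝ)| ≤ (X:ℝ)^((3:ℝ)/4) → ∃ m : ℕ, (m:ℤ) = X + r ∧
    |(pp m : ℝ) / pp X - Real.exp (r * ss X)| ≤ C * Real.exp (r * ss X) * (1 / (X:ℝ) + |(r:ℝ)| / X + (r:ℝ)^2 / (X:ℝ)^((3:ℝ)/2)) := by
  obtain ⟨C, hC, N, hN, H⟩ := chain
  refine ⟨C * Real.exp (2*C), by positivity, N + 16, by omega, ?_⟩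
  intro X hX r hr
  have hX16 : (16:ℝ) ≤ X := by exact_mod_cast (by omega : 16 ≤ X)
  have hX0 : (0:ℝ) < X := by linarith
  have hX1 : (1:ℝ) ≤ X := by linarith
  have e32 : (X:ℝ)^((3:ℝ)/2) = X * √X := by
    rw [show (3:ℝ)/2 = 1 + 1/2 by norm_num, Real.rpow_add hX0, Real.rpow_one, Real.sqrt_eq_rpow]
  have hsq : ((X:ℝ)^((3:ℝ)/4))^2 = X * √X := by
    rw [← e32, ← Real.rpow_natCast, ← Real.rpow_mul hX0.le]; norm_num
  have hr2 : (r:ℝ)^2 ≤ X * √X := by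
    rw [← hsq, ← sq_abs]; exact pow_le_pow_left₀ (abs_nonneg _) hr 2
  have hs4 : 4 ≤ √(X:ℝ) := Real.le_sqrt_of_sq_le (by linarith)
  have hss := Real.sq_sqrt hX0.le
  have hrX : 2 * |(r:ℝ)| ≤ X := by
    apply le_of_sq_le_sq _ hX0.le
    rw [mul_pow, sq_abs]
    nlinarith
  obtain ⟨m, hm, h⟩ := H X (by omega) r (by exact_mod_cast hrX)
  refine ⟨m, hm, ?_⟩
  have hp := pp_pos m
  have hq := pp_pos X
  set u := Real.log (pp m) - Real.log (pp X) - r * ss X with hu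
  have hquo : (pp m : ℝ) / pp X = Real.exp (r * ss X) * Real.exp u := by
    rw [← Real.exp_add, hu, show (r * ss X + (Real.log (pp m) - Real.log (pp X) - r * ss X)) = Real.log (pp m) - Real.log (pp X) by ring,
      Real.exp_sub, Real.exp_log hp, Real.exp_log hq]
  have hM : |u| ≤ 2 * C := by
    refine h.trans ?_
    have a : |(r:ℝ)| / X ≤ 1 := by rw [div_le_one hX0]; linarith [abs_nonneg (r:ℝ)]
    have b : (r:ℝ)^2 / (X * √X) ≤ 1 := by rw [div_le_one (by positivity)]; exact hr2
    nlinarith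
  have hE := exp_sub_one_le u _ hM
  rw [hquo, e32, show Real.exp (r * ss X) * Real.exp u - Real.exp (r * ss X) = Real.exp (r * ss X) * (Real.exp u - 1) by ring,
    abs_mul, abs_of_pos (Real.exp_pos _)]
  have hone : 0 ≤ 1 / (X:ℝ) := by positivity
  calc _ ≤ Real.exp (r * ss X) * ((C * (|(r:ℝ)| / X + (r:ℝ)^2 / (X * √X))) * Real.exp (2*C)) := by
        gcongr; exact hE.trans (by gcongr)
    _ = C * Real.exp (2*C) * Real.exp (r * ss X) * (0 + |(r:ℝ)| / X + (r:ℝ)^2 / (X * √X)) := by ring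
    _ ≤ _ := by gcongr

end

open Real

theorem stmt_7 :
    ∃ C > (0 : ℝ), ∃ X₀ : ℕ, ∀ X : ℕ, X₀ ≤ X → ∀ r : ℤ,
      |(r : ℝ)| ≤ (X : ℝ) ^ ((3 : ℝ) / 4) →
      |(partitionCount ((X : ℤ) + r) : ℝ) / (partitionCount (X : ℤ) : ℝ) -
          Real.exp (2 * π / Real.sqrt 6 * (r : ℝ) / (2 * Real.sqrt X))| ≤
        C * Real.exp (2 * π / Real.sqrt 6 * (r : ℝ) / (2 * Real.sqrt X)) *
          (1 / (X : ℝ) + |(r : ℝ)| / (X : ℝ) + (r : ℝ) ^ 2 / (X : ℝ) ^ ((3 : ℝ) / 2)) := by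
  obtain ⟨C, hC, N, hN, H⟩ := final
  refine ⟨C, hC, N, ?_⟩
  intro X hX r hr
  obtain ⟨m, hm, h⟩ := H X hX r hr
  have e1 : partitionCount ((X:ℤ) + r) = pp m := by
    rw [← hm]; simp [partitionCount, pp]
  have e2 : partitionCount (X:ℤ) = pp X := by simp [partitionCount, pp]
  have e3 : 2 * π / Real.sqrt 6 * (r : ℝ) / (2 * Real.sqrt X) = r * ss X := by
    unfold ss
    have h6 : (0:ℝ) < Real.sqrt 6 := by positivity
    have hX0 : (0:ℝ) < X := by exact_mod_cast (by omega : 0 < X)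
    have hsX := Real.sqrt_pos.2 hX0
    field_simp
  rw [e1, e2, e3]
  exact h
end

section
/- There exist constants C > 0 and α₀ > 0 such that for every real α with 0 < α ≤ α₀ and every integer ℓ ≥ 0 with α·ℓ ≤ 1, the sum f(α) = α·Σ_{n≥0} (4n + ℓ)·e^{−2αn² − αnℓ} satisfies |f(α) − 1| ≤ C·(√α + α·ℓ); that is, f(α) = 1 + O(√α + |αℓ|) as α → 0⁺ uniformly for 0 ≤ ℓ = o(α^{−1}). -/
open Real

lemma aux_geom (t : ℝ) (ht : 0 ≤ t) :
    ∃ a, HasSum (fun n : ℕ => t ^ 2 * Real.exp (-(t * n))) a ∧ a ≤ t + t ^ 2 := by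
  rcases ht.eq_or_lt with h | h
  · subst h
    exact ⟨0, by simp, by norm_num⟩
  · have h1 : Real.exp (-t) < 1 := by rw [Real.exp_lt_one_iff]; linarith
    have hs := (hasSum_geometric_of_lt_one (Real.exp_pos (-t)).le h1).mul_left (t ^ 2)
    refine ⟨t ^ 2 * (1 - Real.exp (-t))⁻¹, ?_, ?_⟩
    · have e : (fun n : ℕ => t ^ 2 * Real.exp (-(t * n))) =
          fun n : ℕ => t ^ 2 * Real.exp (-t) ^ n := by
        funext n
        rw [← Real.exp_nat_mul]
        congr 2
        ring
      rw [e]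
      exact hs
    · have h2 : Real.exp (-t) * (1 + t) ≤ 1 := by
        have h3 := Real.add_one_le_exp t
        have h4 : Real.exp (-t) * Real.exp t = 1 := by rw [← Real.exp_add]; simp
        nlinarith [Real.exp_pos (-t)]
      rw [← div_eq_mul_inv, div_le_iff₀ (by linarith)]
      nlinarith

lemma aux_exp (y : ℝ) : (1 + 3 * y ^ 2) * Real.exp (-2 * y ^ 2) ≤ 4 * Real.exp (-y) := by
  have h := Real.add_one_le_exp (2 * y ^ 2 - y)
  have h2 : Real.exp (-y) = Real.exp (2 * y ^ 2 - y) * Real.exp (-2 * y ^ 2) := by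
    rw [← Real.exp_add]; congr 1; ring
  rw [h2, ← mul_assoc]
  apply mul_le_mul_of_nonneg_right _ (Real.exp_pos _).le
  nlinarith [sq_nonneg (5 * y - 2)]

lemma aux_u (u : ℝ) (hu : 0 ≤ u) : Real.exp (-u) ≤ 1 - u + u ^ 2 := by
  have h3 := Real.add_one_le_exp u
  have h4 : Real.exp (-u) * Real.exp u = 1 := by rw [← Real.exp_add]; simp
  have h5 : Real.exp (-u) * (1 + u) ≤ 1 := by nlinarith [Real.exp_pos (-u)]
  have h6 : 1 ≤ (1 - u + u ^ 2) * (1 + u) := by nlinarith [pow_nonneg hu 3]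
  exact le_of_mul_le_mul_right (h5.trans h6) (by linarith)

theorem stmt_8 :
    ∃ C > (0 : ℝ), ∃ α₀ > (0 : ℝ), ∀ α : ℝ, 0 < α → α ≤ α₀ → ∀ ℓ : ℕ, α * ℓ ≤ 1 →
      |α * ∑' n : ℕ, (4 * (n : ℝ) + ℓ) *
          Real.exp (-2 * α * (n : ℝ) ^ 2 - α * (n : ℝ) * ℓ) - 1| ≤
        C * (Real.sqrt α + α * ℓ) := by
  refine ⟨128, by norm_num, 1, by norm_num, ?_⟩
  intro α hα hα1 ℓ hl
  set s := Real.sqrt α with hs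
  have hs0 : 0 < s := Real.sqrt_pos.mpr hα
  have hs2 : s ^ 2 = α := Real.sq_sqrt hα.le
  have hs1 : s ≤ 1 := by nlinarith
  have hL : (0 : ℝ) ≤ ℓ := Nat.cast_nonneg _
  set L : ℝ := (ℓ : ℝ) with hLdef
  have ht0 : 0 ≤ α * L := by positivity
  set F : ℕ → ℝ := fun n => Real.exp (-2 * α * (n : ℝ) ^ 2 - α * (n : ℝ) * L) with hF
  have hFpos : ∀ n, 0 < F n := fun n => Real.exp_pos _
  have hF1 : ∀ n : ℕ, (1 + 3 * (s * n) ^ 2) * F n ≤ 4 * Real.exp (-(s * n)) := by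
    intro n
    refine le_trans ?_ (aux_exp (s * n))
    apply mul_le_mul_of_nonneg_left _ (by positivity)
    apply Real.exp_le_exp.mpr
    rw [mul_pow, hs2]
    have : 0 ≤ α * n * L := by positivity
    linarith
  have hF2 : ∀ n : ℕ, F n ≤ Real.exp (-(α * L * n)) := by
    intro n
    apply Real.exp_le_exp.mpr
    have : 0 ≤ α * (n : ℝ) ^ 2 := by positivity
    linarith
  have hstep : ∀ n : ℕ, F (n + 1) = F n * Real.exp (-(α * (4 * n + L + 2))) := by
    intro n
    simp only [hF]
    rw [← Real.exp_add]
    congr 1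
    push_cast
    ring
  obtain ⟨a, ha, ha'⟩ := aux_geom s hs0.le
  obtain ⟨b, hb, hb'⟩ := aux_geom (α * L) ht0
  have hlim : Filter.Tendsto F Filter.atTop (nhds 0) := by
    have h0 := (ha.summable.tendsto_atTop_zero).const_mul (4 / s ^ 2)
    rw [mul_zero] at h0
    refine squeeze_zero (fun n => (hFpos n).le) (fun n => ?_) h0
    have e : 4 / s ^ 2 * (s ^ 2 * Real.exp (-(s * n))) = 4 * Real.exp (-(s * n)) := by
      field_simp
    rw [e]
    refine le_trans ?_ (hF1 n)
    nlinarith [hFpos n, mul_nonneg (sq_nonneg (s * n)) (hFpos n).le]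
  have htel : HasSum (fun n => F n - F (n + 1)) 1 := by
    rw [hasSum_iff_tendsto_nat_of_nonneg]
    · simp only [Finset.sum_range_sub']
      have : F 0 = 1 := by simp [hF]
      rw [this]
      simpa using hlim.const_sub 1
    · intro n
      rw [hstep]
      have : Real.exp (-(α * (4 * n + L + 2))) ≤ 1 := by
        rw [Real.exp_le_one_iff]
        have : 0 ≤ α * (4 * n + L + 2) := by positivity
        linarith
      nlinarith [hFpos n]
  set g : ℕ → ℝ := fun n => α * ((4 * (n : ℝ) + L) * F n) with hg
  have hbound : ∀ n : ℕ, ‖g n - (F n - F (n + 1))‖ ≤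
      64 * (s ^ 2 * Real.exp (-(s * n))) + 3 * ((α * L) ^ 2 * Real.exp (-(α * L * n))) := by
    intro n
    have hn : (0 : ℝ) ≤ n := Nat.cast_nonneg _
    set u := α * (4 * n + L + 2) with hu
    have hu0 : 0 ≤ u := by positivity
    have e1 := aux_u u hu0
    have e2 := Real.add_one_le_exp (-u)
    have e3 : g n - (F n - F (n + 1)) = F n * (u - 2 * α - 1 + Real.exp (-u)) := by
      rw [hstep, hg]; simp only [hu]; ring
    have e4 : |u - 2 * α - 1 + Real.exp (-u)| ≤ 2 * α + u ^ 2 := by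
      rw [abs_le]; constructor <;> nlinarith
    have e5 : u ^ 2 ≤ 3 * (16 * α * (s * n) ^ 2 + (α * L) ^ 2 + 4 * α) := by
      have q : 3 * (16 * α * (s * n) ^ 2 + (α * L) ^ 2 + 4 * α ^ 2) - u ^ 2 =
        (4 * α * n - α * L) ^ 2 + (4 * α * n - 2 * α) ^ 2 + (α * L - 2 * α) ^ 2 := by
        rw [mul_pow, hs2, hu]; ring
      have : α ^ 2 ≤ α := by nlinarith
      nlinarith [sq_nonneg (4 * α * n - α * L), sq_nonneg (4 * α * n - 2 * α),
        sq_nonneg (α * L - 2 * α)]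
    rw [e3, norm_mul, Real.norm_eq_abs, Real.norm_eq_abs, abs_of_pos (hFpos n)]
    calc F n * |u - 2 * α - 1 + Real.exp (-u)|
        ≤ F n * (16 * α * (1 + 3 * (s * n) ^ 2) + 3 * (α * L) ^ 2) := by
          apply mul_le_mul_of_nonneg_left _ (hFpos n).le
          linarith
      _ = 16 * α * ((1 + 3 * (s * n) ^ 2) * F n) + 3 * (α * L) ^ 2 * F n := by ring
      _ ≤ 16 * α * (4 * Real.exp (-(s * n))) + 3 * (α * L) ^ 2 * Real.exp (-(α * L * n)) :=
          add_le_add (mul_le_mul_of_nonneg_left (hF1 n) (by positivity))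
            (mul_le_mul_of_nonneg_left (hF2 n) (by positivity))
      _ = _ := by rw [hs2]; ring
  have hB := (ha.mul_left 64).add (hb.mul_left 3)
  have hsum : Summable (fun n => g n - (F n - F (n + 1))) :=
    Summable.of_norm_bounded hB.summable hbound
  have hle := tsum_of_norm_bounded hB hbound
  have hgs : HasSum g (∑' n, (g n - (F n - F (n + 1))) + 1) := by
    simpa using hsum.hasSum.add htel
  have key : α * ∑' n : ℕ, (4 * (n : ℝ) + L) * F n = ∑' n, (g n - (F n - F (n + 1))) + 1 := by
    rw [← tsum_mul_left]
    exact hgs.tsum_eq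
  change |α * ∑' n : ℕ, (4 * (n : ℝ) + L) * F n - 1| ≤ _
  rw [key, add_sub_cancel_right, ← Real.norm_eq_abs]
  refine hle.trans ?_
  nlinarith
end
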